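/- Let f be an irreducible homogeneous polynomial of degree d in m ≥ 3 variables with integer coefficients, defining the hypersurface C, and fix ε > 0. There exists D_0 such that for every integer D ≥ D_0 that is divisible by G(C), there exist a constant c > 0 and X_0 such that for all X ≥ X_0, the number of number fields K with [K:ℚ] = D, |disc(K/ℚ)| ≤ X, and admitting a new non-singular point of C is at least c·X^{1/(2d²) − ε}. -/

import Mathlib

/-! The fields are produced as fields of definition of the intersection points of a curve on the
hypersurface with a large family of functions.

**Reduction to a curve.** Finitely many degrees in `D(C)` suffice to reach every multiple of the
index modulo `d` (`exists_finset_of_gcd`); each of them is realised by a new point. A generic rational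
change of coordinates puts `f` and these points in good position (`gen_point`, `gen_sep`,
`count_of_finset`). Over `ℚ̄`, `f` is a constant times the product of the conjugates of a
geometrically irreducible form `g` of degree `e` over a number field `k` with `[k : ℚ] e = d`
(`exists_geometric_factor`). A Bertini argument (`bertini`, `exists_curve`) yields a curve section
`Φ(t, y) = 0` of `g = 0` over `k`, geometrically irreducible, monic of degree `e` in `y`, unramified
over `t = 0`, and passing through conjugates of the chosen points.

**The family.** Let `q` be the product of powers, with multiplicities `c_i`, of the minimal polynomials
over `k` of the abscissas of the points of degree `i`, let `B` be its degree, and let `y = s(t)`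
interpolate the points. Then `[k : ℚ] B = ∑ c_i i`. For `z` in the box `0 ≤ z_i < H^(i+1)` consider on
the curve the function
`u_z = q(t) (w(t, y) + p (t^n + p ∑ z_i t^(n-1-i))) + p (y - s(t))^(B+1)`.
Its norm, the resultant with `Φ`, has degree `e (B + n)` (`exists_norm_degree`) and is `q` times a
polynomial `F` prime to `q` (`norm_eq_mul`). The prime `p` and the polynomial `w` are chosen so that, by
Weierstrass preparation and Eisenstein's criterion along a branch over `t = 0`, the norm has an
irreducible factor of degree close to `e n` (`exists_large_factor`). A reducible `F` would therefore
have a root of small degree; counting algebraic numbers of small degree and bounded height shows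
that this happens for at most half of the `z` (`count_low_degree`, `card_bad_le`,
`irreducible_cofactor`, `family`).

**The count.** A root `t` of `F` generates over `k` a field of degree
`D = d (B + n) - ∑ c_i i` over `ℚ`, which contains the ordinate. It has bounded denominator and
conjugates `O(H)`, so the discriminant is `O(H^(D^2))` (`exists_discr_bound`), and a given field arises
`O(H^(2D))` times (`count_in_field`). There are `H^(n(n+1)/2)` parameters, and `D` is about `d n`, so
taking `H` about `X^(1/D^2)` gives the exponent `1/(2d²) - ε` as soon as `n` is large (`core_count`).
Residues of `D` modulo `d` are matched by the choice of the `c_i` (`good_position`). Points of large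
degree on the curve are smooth on the hypersurface (`exists_smooth_degree`), and the theorem of Hermite
makes the set counted finite (`finite_fields`).
-/


open MvPolynomial

noncomputable section

/-- A fixed algebraic closure of `ℚ`. -/
abbrev Qbar : Type := AlgebraicClosure ℚ

/-- `K` admits a new non-singular point of the hypersurface `f = 0`:
a tuple of `K`-rational values, not all zero, on which `f` vanishes, some partial derivative
of `f` does not vanish, and such that after rescaling some nonzero coordinate to `1`,
the coordinates generate `K` over `ℚ`. -/
def IsNewPoint {m : ℕ} (f : MvPolynomial (Fin m) ℚ) (K : IntermediateField ℚ Qbar) : Prop :=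
  ∃ a : Fin m → Qbar, (∀ j, a j ∈ K) ∧ a ≠ 0 ∧
    MvPolynomial.aeval a f = 0 ∧
    (∃ j, MvPolynomial.aeval a (MvPolynomial.pderiv j f) ≠ 0) ∧
    (∃ i, a i ≠ 0 ∧ IntermediateField.adjoin ℚ (Set.range fun j => a j / a i) = K)

/-- `D(C)`: degrees of number fields admitting a new non-singular point of `C : f = 0`. -/
def DSet {m : ℕ} (f : MvPolynomial (Fin m) ℚ) : Set ℕ :=
  {n | 0 < n ∧ ∃ K : IntermediateField ℚ Qbar,
    FiniteDimensional ℚ ↥K ∧ Module.finrank ℚ ↥K = n ∧ IsNewPoint f K}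

/-- `D(C)^inf`: degrees `n` such that infinitely many number fields of degree `n`
admit a new non-singular point of `C : f = 0`. -/
def DinfSet {m : ℕ} (f : MvPolynomial (Fin m) ℚ) : Set ℕ :=
  {n | 0 < n ∧ {K : IntermediateField ℚ Qbar |
    FiniteDimensional ℚ ↥K ∧ Module.finrank ℚ ↥K = n ∧ IsNewPoint f K}.Infinite}

/-- `g` is the greatest common divisor of the set `S` of naturals. -/
def IsGcdOf (g : ℕ) (S : Set ℕ) : Prop :=
  (∀ n ∈ S, g ∣ n) ∧ ∀ k : ℕ, (∀ n ∈ S, k ∣ n) → k ∣ g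

/-- The discriminant of a number field realized as an intermediate field of `ℚ̄`. -/
def absDiscr (K : IntermediateField ℚ Qbar) (h : FiniteDimensional ℚ ↥K) : ℤ :=
  letI : FiniteDimensional ℚ ↥K := h
  letI : NumberField ↥K := ⟨⟩
  NumberField.discr ↥K

/-! The `ℚ`-algebra structure found on `Qbar` is the one of a characteristic zero division ring;
the instances known for the algebraic closure are transported to it. -/

instance qbar_isAlgebraic : Algebra.IsAlgebraic ℚ Qbar := AlgebraicClosure.isAlgebraic ℚ

instance qbar_isAlgClosure : IsAlgClosure ℚ Qbar := ⟨inferInstance, inferInstance⟩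

instance qbar_normal : Normal ℚ Qbar := IsAlgClosure.normal ℚ Qbar

instance qbar_isGalois : IsGalois ℚ Qbar := ⟨⟩

/-! ### Primes with a p-adic embedding -/

/-- A nonconstant integer polynomial has a root modulo some prime not dividing a prescribed
nonzero integer (Schur). -/
theorem exists_prime_dvd_eval (h : Polynomial ℤ) (hh : 0 < h.natDegree) (N : ℤ) (hN : N ≠ 0) :
    ∃ p : ℕ, p.Prime ∧ ¬ (p : ℤ) ∣ N ∧ ∃ x : ℤ, (p : ℤ) ∣ h.eval x := by
  set a := h.eval 0 with ha
  by_cases h0 : a = 0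
  · obtain ⟨p, hp, hpp⟩ := Nat.exists_infinite_primes (N.natAbs + 1)
    refine ⟨p, hpp, ?_, 0, by rw [← ha, h0]; exact dvd_zero _⟩
    intro hd
    have := Nat.le_of_dvd (Int.natAbs_pos.2 hN) (Int.natCast_dvd.1 hd)
    omega
  · -- `h (a N x) = a (1 + N x (...))`
    have key : ∀ x : ℤ, ∃ r : ℤ, h.eval (a * N * x) = a * (1 + N * r) := by
      intro x
      obtain ⟨c, hc⟩ := Polynomial.sub_dvd_eval_sub (a * N * x) 0 h
      refine ⟨x * c, ?_⟩
      rw [← ha] at hc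
      linear_combination hc
    have hex : ∃ x : ℤ, h.eval (a * N * x) ≠ a ∧ h.eval (a * N * x) ≠ -a := by
      by_contra hcon
      push Not at hcon
      have hfin : ({x : ℤ | h.eval x = a ∨ h.eval x = -a}).Finite := by
        have h1 : ∀ b : ℤ, ({x : ℤ | h.eval x = b}).Finite := by
          intro b
          have hne : h - Polynomial.C b ≠ 0 := by
            intro h'
            rw [sub_eq_zero] at h'
            rw [h', Polynomial.natDegree_C] at hh
            exact lt_irrefl _ hh
          refine ((h - Polynomial.C b).roots.toFinset.finite_toSet).subset ?_
          intro x hx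
          have hx' : h.eval x = b := hx
          rw [Finset.mem_coe, Multiset.mem_toFinset, Polynomial.mem_roots hne, Polynomial.IsRoot,
            Polynomial.eval_sub, Polynomial.eval_C, hx', sub_self]
        exact (h1 a).union (h1 (-a))
      have hinf : ({x : ℤ | h.eval x = a ∨ h.eval x = -a}).Infinite := by
        refine Set.infinite_of_injective_forall_mem (f := fun x : ℤ => a * N * x) ?_ ?_
        · intro x y hxy
          exact mul_left_cancel₀ (mul_ne_zero h0 hN) hxy
        · intro x
          by_cases hx : h.eval (a * N * x) = a
          · exact Or.inl hx
          · exact Or.inr (hcon x hx)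
      exact hinf hfin
    obtain ⟨x, hx1, hx2⟩ := hex
    obtain ⟨r, hr⟩ := key x
    have hne1 : (1 + N * r).natAbs ≠ 1 := by
      intro h1
      rcases Int.natAbs_eq_iff.1 h1 with h2 | h2
      · apply hx1; rw [hr, h2]; simp
      · apply hx2; rw [hr, h2]; simp
    obtain ⟨p, hp, hpd⟩ := Nat.exists_prime_and_dvd hne1
    have hpd' : (p : ℤ) ∣ 1 + N * r := Int.natCast_dvd.2 hpd
    refine ⟨p, hp, ?_, a * N * x, by rw [hr]; exact Dvd.dvd.mul_left hpd' _⟩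
    intro hd
    have h1 : (p : ℤ) ∣ 1 := by
      have := dvd_sub hpd' (Dvd.dvd.mul_right hd r)
      simpa using this
    have := Int.natCast_dvd.1 h1
    simp at this
    exact hp.one_lt.ne' this

theorem exists_int_multiple (g : Polynomial ℚ) :
    ∃ m : ℤ, m ≠ 0 ∧ ∃ G : Polynomial ℤ, G.map (Int.castRingHom ℚ) = Polynomial.C (m : ℚ) * g := by
  obtain ⟨b, hb, h⟩ := IsLocalization.integerNormalization_spec (nonZeroDivisors ℤ) g
  refine ⟨b, nonZeroDivisors.ne_zero hb, IsLocalization.integerNormalization (nonZeroDivisors ℤ) g, ?_⟩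
  have h' : (IsLocalization.integerNormalization (nonZeroDivisors ℤ) g).map (Int.castRingHom ℚ)
    = b • g := h
  rw [h', zsmul_eq_mul]
  simp

/-- For finitely many elements of a number field there is a prime `p` and an embedding
of the field in `ℚ_p` mapping them to `p`-adic integers. -/
theorem exists_split_prime (L : Type*) [Field L] [NumberField L] (S : Finset L) :
    ∃ (p : ℕ) (_ : Fact p.Prime) (φ : L →+* ℚ_[p]), ∀ s ∈ S, ‖φ s‖ ≤ 1 := by
  classical
  set pb := Field.powerBasisOfFiniteOfSeparable ℚ L with hpb
  have hg : ∀ s : L, ∃ m : ℤ, m ≠ 0 ∧ ∃ G : Polynomial ℤ, (m : L) * s = Polynomial.aeval pb.gen G := by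
    intro s
    obtain ⟨g, hg⟩ := pb.exists_eq_aeval' s
    obtain ⟨m, hm, G, hG⟩ := exists_int_multiple g
    refine ⟨m, hm, G, ?_⟩
    have := congrArg (Polynomial.aeval pb.gen) hG
    rw [map_mul, ← hg, Polynomial.aeval_C] at this
    have h2 : Polynomial.aeval pb.gen (G.map (Int.castRingHom ℚ)) = Polynomial.aeval pb.gen G := by
      exact Polynomial.aeval_map_algebraMap ℚ pb.gen G
    rw [← h2, this]; simp
  choose m hm G hG using hg
  obtain ⟨m0, hm0, h, hh⟩ := exists_int_multiple (minpoly ℚ pb.gen)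
  have hinteg : IsIntegral ℚ pb.gen := pb.isIntegral_gen
  have hirr := minpoly.irreducible hinteg
  have hsep : (minpoly ℚ pb.gen).Separable := hirr.separable
  -- a Bézout relation between the minimal polynomial and its derivative
  obtain ⟨a, b, hab⟩ := hsep
  obtain ⟨ma, hma, a', ha'⟩ := exists_int_multiple a
  obtain ⟨mb, hmb, b', hb'⟩ := exists_int_multiple b
  have hm0Q : (m0 : ℚ) ≠ 0 := by exact_mod_cast hm0
  have hbez : a' * Polynomial.C mb * h + b' * Polynomial.C ma * Polynomial.derivative h
      = Polynomial.C (m0 * ma * mb) := by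
    apply Polynomial.map_injective (Int.castRingHom ℚ) Int.cast_injective
    simp only [Polynomial.map_add, Polynomial.map_mul, ha', hb', hh, Polynomial.map_C,
      Polynomial.derivative_mul, ← Polynomial.derivative_map, Polynomial.derivative_C]
    simp only [eq_intCast, Int.cast_mul, Polynomial.C_mul]
    linear_combination (Polynomial.C (m0:ℚ) * Polynomial.C (ma:ℚ) * Polynomial.C (mb:ℚ)) * hab
  have hdeg : 0 < h.natDegree := by
    have := congrArg Polynomial.natDegree hh
    rw [Polynomial.natDegree_map_eq_of_injective Int.cast_injective,
      Polynomial.natDegree_C_mul hm0Q] at this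
    rw [this]; exact minpoly.natDegree_pos hinteg
  obtain ⟨p, hp, hpN, x, hx⟩ := exists_prime_dvd_eval h hdeg (m0 * ma * mb * ∏ s ∈ S, m s)
    (mul_ne_zero (mul_ne_zero (mul_ne_zero hm0 hma) hmb) (Finset.prod_ne_zero_iff.2 fun s _ => hm s))
  have : Fact p.Prime := ⟨hp⟩
  have hpI : Prime (p : ℤ) := Nat.prime_iff_prime_int.1 hp
  have hN1 : ¬ (p : ℤ) ∣ m0 * ma * mb := fun hd => hpN (Dvd.dvd.mul_right hd _)
  have hN2 : ∀ s ∈ S, ¬ (p : ℤ) ∣ m s := fun s hs hd =>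
    hpN (Dvd.dvd.mul_left (hd.trans (Finset.dvd_prod_of_mem _ hs)) _)
  have hder : ¬ (p : ℤ) ∣ (Polynomial.derivative h).eval x := by
    intro hd
    apply hN1
    have := congrArg (Polynomial.eval x) hbez
    rw [Polynomial.eval_C] at this
    rw [← this, Polynomial.eval_add, Polynomial.eval_mul, Polynomial.eval_mul (q := Polynomial.derivative h)]
    exact dvd_add (Dvd.dvd.mul_left hx _) (Dvd.dvd.mul_left hd _)
  have e1 : ∀ P : Polynomial ℤ, Polynomial.aeval (x : ℤ_[p]) P = ((P.eval x : ℤ) : ℤ_[p]) := by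
    intro P
    have := Polynomial.aeval_algebraMap_apply ℤ_[p] x P
    simpa using this
  have hn1 : ‖Polynomial.aeval (x : ℤ_[p]) h‖ < 1 := by
    rw [e1]; exact PadicInt.norm_intCast_lt_one_iff.2 hx
  have hn2 : ‖Polynomial.aeval (x : ℤ_[p]) (Polynomial.derivative h)‖ = 1 := by
    rw [e1]
    refine le_antisymm (PadicInt.norm_le_one _) (not_lt.1 fun hlt => hder ?_)
    exact PadicInt.norm_intCast_lt_one_iff.1 hlt
  -- the root modulo `p` is simple, hence lifts to `ℤ_p`
  obtain ⟨z, hz, -⟩ := hensels_lemma (F := h) (a := (x : ℤ_[p])) (by rw [hn2]; simpa using hn1)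
  have hzQ : Polynomial.aeval (z : ℚ_[p]) h = 0 := by
    have := Polynomial.aeval_algebraMap_apply ℚ_[p] z h
    rw [hz, map_zero] at this
    exact this
  have hzm : Polynomial.aeval (z : ℚ_[p]) (minpoly ℚ pb.gen) = 0 := by
    have h2 : Polynomial.aeval (z : ℚ_[p]) (h.map (Int.castRingHom ℚ)) = Polynomial.aeval (z : ℚ_[p]) h :=
      Polynomial.aeval_map_algebraMap ℚ (z : ℚ_[p]) h
    rw [hh, hzQ, map_mul, Polynomial.aeval_C] at h2
    refine (mul_eq_zero.1 h2).resolve_left ?_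
    simpa using hm0
  refine ⟨p, inferInstance, (pb.lift (z : ℚ_[p]) hzm).toRingHom, fun s hs => ?_⟩
  have h3 : ((m s : ℤ) : ℚ_[p]) * pb.lift (z : ℚ_[p]) hzm s = Polynomial.aeval (z : ℚ_[p]) (G s) := by
    have := congrArg (pb.lift (z : ℚ_[p]) hzm) (hG s)
    rw [map_mul, map_intCast] at this
    rw [this]
    have h4 := Polynomial.aeval_algHom_apply ((pb.lift (z : ℚ_[p]) hzm).restrictScalars ℤ) pb.gen (G s)
    simp only [AlgHom.restrictScalars_apply, PowerBasis.lift_gen] at h4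
    exact h4.symm
  have h5 : ‖((m s : ℤ) : ℚ_[p])‖ = 1 := by
    have : ‖((m s : ℤ) : ℤ_[p])‖ = 1 :=
      le_antisymm (PadicInt.norm_le_one _) (not_lt.1 fun hlt => hN2 s hs (PadicInt.norm_intCast_lt_one_iff.1 hlt))
    simpa using this
  have h6 : ‖Polynomial.aeval (z : ℚ_[p]) (G s)‖ ≤ 1 := by
    have := Polynomial.aeval_algebraMap_apply ℚ_[p] z (G s)
    have h7 : Polynomial.aeval (z : ℚ_[p]) (G s) = ((Polynomial.aeval z (G s) : ℤ_[p]) : ℚ_[p]) := this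
    rw [h7]; exact PadicInt.norm_le_one _
  have h8 := congrArg norm h3
  rw [norm_mul, h5, one_mul] at h8
  show ‖pb.lift (z : ℚ_[p]) hzm s‖ ≤ 1
  rw [h8]; exact h6

/-! ### Formal branches of plane curves -/

/-- Restriction of a bivariate polynomial (inner variable `t`, outer variable `y`) to the formal
branch `t = τ + v`, `y = η(v)`. -/
def br {R : Type*} [CommRing R] (τ : R) (η : PowerSeries R) :
    Polynomial (Polynomial R) →+* PowerSeries R :=
  Polynomial.eval₂RingHom
    ((Polynomial.coeToPowerSeries.ringHom).comp (Polynomial.taylorAlgHom τ).toRingHom) η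

/-- Expansion of a polynomial in `t` in powers of `v = t - τ`. -/
def tay {R : Type*} [CommRing R] (τ : R) : Polynomial R →+* PowerSeries R :=
  (Polynomial.coeToPowerSeries.ringHom).comp (Polynomial.taylorAlgHom τ).toRingHom

section
variable {R : Type*} [CommRing R]

theorem tay_apply (τ : R) (a : Polynomial R) :
    tay τ a = ((Polynomial.taylor τ a : Polynomial R) : PowerSeries R) := rfl

theorem br_eq (τ : R) (η : PowerSeries R) (u : Polynomial (Polynomial R)) :
    br τ η u = (u.map (tay τ)).eval η := by
  rw [Polynomial.eval_map]; rfl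

@[simp] theorem br_C (τ : R) (η : PowerSeries R) (a : Polynomial R) :
    br τ η (Polynomial.C a) = tay τ a := by
  simp [br_eq]

@[simp] theorem br_X (τ : R) (η : PowerSeries R) :
    br τ η Polynomial.X = η := by
  simp [br_eq]

theorem constantCoeff_tay (τ : R) (a : Polynomial R) :
    PowerSeries.constantCoeff (tay τ a) = a.eval τ := by
  rw [tay_apply, Polynomial.constantCoeff_coe, Polynomial.taylor_coeff_zero]

theorem constantCoeff_br (τ : R) (η : PowerSeries R) (u : Polynomial (Polynomial R)) :
    PowerSeries.constantCoeff (br τ η u) = u.evalEval τ (PowerSeries.constantCoeff η) := by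
  rw [← Polynomial.coe_evalEvalRingHom, Polynomial.evalEvalRingHom_eq]
  have : (PowerSeries.constantCoeff (R := R)).comp (br τ η) =
      Polynomial.eval₂RingHom (Polynomial.evalRingHom τ) (PowerSeries.constantCoeff η) := by
    apply Polynomial.ringHom_ext'
    · ext a
      · simp [constantCoeff_tay]
      · simp [constantCoeff_tay]
    · simp
  exact RingHom.congr_fun this u

theorem map_tay {S : Type*} [CommRing S] (g : R →+* S) (τ : R) (a : Polynomial R) :
    PowerSeries.map g (tay τ a) = tay (g τ) (a.map g) := by
  rw [tay_apply, tay_apply, ← Polynomial.polynomial_map_coe, Polynomial.map_taylor]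

theorem map_br {S : Type*} [CommRing S] (g : R →+* S) (τ : R) (η : PowerSeries R)
    (u : Polynomial (Polynomial R)) :
    PowerSeries.map g (br τ η u) =
      br (g τ) (PowerSeries.map g η) (u.map (Polynomial.mapRingHom g)) := by
  rw [br_eq, br_eq, ← Polynomial.eval_map_apply, Polynomial.map_map, Polynomial.map_map]
  congr 2
  refine RingHom.ext fun a => ?_
  simp [map_tay]

theorem tay_injective (τ : R) : Function.Injective (tay τ) := by
  intro a b h
  rw [tay_apply, tay_apply, Polynomial.coe_inj] at h
  exact Polynomial.taylor_injective τ h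

/-- Existence of the formal branch through a simple zero. -/
theorem exists_branch (Φ : Polynomial (Polynomial R)) (hΦ : Φ.Monic) (τ y : R)
    (h0 : Φ.evalEval τ y = 0) (h1 : IsUnit ((Polynomial.derivative Φ).evalEval τ y)) :
    ∃ η : PowerSeries R, PowerSeries.constantCoeff η = y ∧ br τ η Φ = 0 := by
  have hH : HenselianRing (PowerSeries R) (Ideal.span {PowerSeries.X}) := inferInstance
  obtain ⟨η, hη, hval⟩ := hH.is_henselian (Φ.map (tay τ)) (hΦ.map _) (PowerSeries.C y) (by
      rw [← br_eq, Ideal.mem_span_singleton, PowerSeries.X_dvd_iff, constantCoeff_br]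
      simpa using h0) (by
      rw [Polynomial.derivative_map, ← br_eq]
      apply IsUnit.map
      rw [PowerSeries.isUnit_iff_constantCoeff, constantCoeff_br]
      simpa using h1)
  refine ⟨η, ?_, by rw [br_eq]; exact hη⟩
  rw [Ideal.mem_span_singleton, PowerSeries.X_dvd_iff] at hval
  simpa [sub_eq_zero] using hval

/-- A branch splits off a linear factor of `Φ` over the power series in `v = t - τ`. -/
theorem branch_factor (Φ : Polynomial (Polynomial R)) (hΦ : Φ.Monic) (τ : R)
    (η : PowerSeries R) (hη : br τ η Φ = 0) [Nontrivial R] :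
    ∃ Ψ : Polynomial (PowerSeries R), Ψ.Monic ∧ Ψ.natDegree + 1 = Φ.natDegree ∧
      Φ.map (tay τ) = (Polynomial.X - Polynomial.C η) * Ψ := by
  rw [br_eq] at hη
  obtain ⟨Ψ, hΨ⟩ := Polynomial.dvd_iff_isRoot.2 hη
  have hm : (Polynomial.X - Polynomial.C η).Monic := Polynomial.monic_X_sub_C η
  have hΨm : Ψ.Monic := hm.of_mul_monic_left (by rw [← hΨ]; exact hΦ.map _)
  refine ⟨Ψ, hΨm, ?_, hΨ⟩
  have := congrArg Polynomial.natDegree hΨ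
  rw [hΦ.natDegree_map, hm.natDegree_mul hΨm, Polynomial.natDegree_X_sub_C] at this
  omega

/-- Over a domain, the branch through a simple zero is unique. -/
theorem branch_unique [IsDomain R] (Φ : Polynomial (Polynomial R)) (hΦ : Φ.Monic) (τ : R)
    (η η' : PowerSeries R) (hη : br τ η Φ = 0) (hη' : br τ η' Φ = 0)
    (hc : PowerSeries.constantCoeff η = PowerSeries.constantCoeff η')
    (h1 : (Polynomial.derivative Φ).evalEval τ (PowerSeries.constantCoeff η) ≠ 0) : η = η' := by
  obtain ⟨Ψ, -, -, hf⟩ := branch_factor Φ hΦ τ η hη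
  rw [br_eq, hf, Polynomial.eval_mul, mul_eq_zero] at hη'
  rcases hη' with h | h
  · simp [sub_eq_zero] at h; exact h.symm
  · exfalso
    apply h1
    rw [← constantCoeff_br, br_eq, ← Polynomial.derivative_map, hf]
    simp only [Polynomial.derivative_mul, Polynomial.derivative_sub, Polynomial.derivative_X,
      Polynomial.derivative_C, sub_zero, one_mul, Polynomial.eval_add, Polynomial.eval_mul,
      Polynomial.eval_sub, Polynomial.eval_X, Polynomial.eval_C, sub_self, zero_mul, add_zero]
    have h2 := congrArg PowerSeries.constantCoeff h
    rw [map_zero] at h2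
    rw [← h2]
    have := Polynomial.eval_map_apply (f := PowerSeries.constantCoeff (R := R)) (p := Ψ) (x := η)
    have h3 := Polynomial.eval_map_apply (f := PowerSeries.constantCoeff (R := R)) (p := Ψ) (x := η')
    rw [← this, ← h3, hc]

end

/-- A root of a monic irreducible polynomial over a normal domain, in an overring which is a
domain, is not a root of any nonzero polynomial of smaller degree. -/
theorem eq_zero_of_aeval_root {A B : Type*} [CommRing A] [IsDomain A] [IsIntegrallyClosed A]
    [CommRing B] [IsDomain B] (j : A →+* B) (hj : Function.Injective j) (Φ : Polynomial A)
    (hΦ : Φ.Monic) (hirr : Irreducible Φ) (β : B) (hβ : Φ.eval₂ j β = 0) (u : Polynomial A)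
    (hu : u.eval₂ j β = 0) (hdeg : u.natDegree < Φ.natDegree) : u = 0 := by
  let := j.toAlgebra
  let K := FractionRing A
  let L := FractionRing B
  have hinj : Function.Injective (algebraMap A L) := by
    rw [IsScalarTower.algebraMap_eq A B L]
    exact (IsFractionRing.injective B L).comp hj
  have : FaithfulSMul A L := (faithfulSMul_iff_algebraMap_injective A L).2 hinj
  let : Algebra K L := FractionRing.liftAlgebra A L
  have : IsScalarTower A K L := inferInstance
  have key : ∀ P : Polynomial A, P.eval₂ j β = 0 →
      Polynomial.aeval (algebraMap B L β) (P.map (algebraMap A K)) = 0 := by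
    intro P hP
    rw [Polynomial.aeval_map_algebraMap, Polynomial.aeval_algebraMap_apply]
    have : Polynomial.aeval β P = 0 := hP
    rw [this, map_zero]
  have hirrK : Irreducible (Φ.map (algebraMap A K)) :=
    (hΦ.irreducible_iff_irreducible_map_fraction_map (K := K)).1 hirr
  have hmin := minpoly.eq_of_irreducible_of_monic hirrK (key Φ hβ) (hΦ.map _)
  by_contra hne
  have hne' : u.map (algebraMap A K) ≠ 0 :=
    (Polynomial.map_ne_zero_iff (IsFractionRing.injective A K)).2 hne
  have := Polynomial.natDegree_le_of_dvd (minpoly.dvd K _ (key u hu)) hne'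
  rw [← hmin, hΦ.natDegree_map, Polynomial.natDegree_map_eq_of_injective
    (IsFractionRing.injective A K)] at this
  omega

/-! ### Norms as resultants -/

theorem resultant_monic_right_deg {R : Type*} [CommRing R] (Φ u : Polynomial R) (hΦ : Φ.Monic)
    {b bound : ℕ} (hb : u.natDegree ≤ b) (hbound : u.natDegree ≤ bound) :
    Polynomial.resultant Φ u Φ.natDegree b = Polynomial.resultant Φ u Φ.natDegree bound := by
  have key : ∀ c, u.natDegree ≤ c → Polynomial.resultant Φ u Φ.natDegree c =
      Polynomial.resultant Φ u Φ.natDegree u.natDegree := by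
    intro c hc
    obtain ⟨k, rfl⟩ := Nat.exists_eq_add_of_le hc
    rw [Polynomial.resultant_add_right_deg _ _ _ _ _ le_rfl, hΦ.coeff_natDegree, one_pow, one_mul]
  rw [key b hb, key bound hbound]

/-- The determinant of `u(M)` is the product of the values of `u` at the eigenvalues of `M`. -/
theorem det_aeval_closed {K : Type*} [Field K] [IsAlgClosed K] {e : ℕ}
    (M : Matrix (Fin e) (Fin e) K) (u : Polynomial K) :
    (Polynomial.aeval M u).det = Polynomial.resultant M.charpoly u e u.natDegree := by
  have hdeg : M.charpoly.natDegree = e := by simp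
  have hX : ∀ a : K, (Polynomial.aeval M (Polynomial.X - Polynomial.C a)).det =
      Polynomial.resultant M.charpoly (Polynomial.X - Polynomial.C a) e 1 := by
    intro a
    rw [Polynomial.resultant_X_sub_C_right _ _ _ hdeg.le, Matrix.eval_charpoly]
    have h2 : Polynomial.aeval M (Polynomial.X - Polynomial.C a) = -(Matrix.scalar (Fin e) a - M) := by
      rw [map_sub, Polynomial.aeval_X, Polynomial.aeval_C, neg_sub]; rfl
    rw [h2, Matrix.det_neg, Fintype.card_fin]
  have hs : ∀ s : Multiset K,
      (Polynomial.aeval M (s.map fun a => Polynomial.X - Polynomial.C a).prod).det =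
      Polynomial.resultant M.charpoly (s.map fun a => Polynomial.X - Polynomial.C a).prod e
        ((s.map fun a => Polynomial.X - Polynomial.C a).prod).natDegree := by
    intro s
    induction s using Multiset.induction_on with
    | empty =>
      rw [Multiset.map_zero, Multiset.prod_zero, map_one, Matrix.det_one, Polynomial.natDegree_one,
        ← Polynomial.C_1, Polynomial.resultant_C_right, one_pow, pow_zero, mul_one]
    | cons a s ih =>
      have hm : (s.map fun a => Polynomial.X - Polynomial.C a).prod.Monic :=
        Polynomial.monic_multiset_prod_of_monic _ _ fun a _ => Polynomial.monic_X_sub_C a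
      rw [Multiset.map_cons, Multiset.prod_cons, map_mul, Matrix.det_mul, ih, hX,
        (Polynomial.monic_X_sub_C a).natDegree_mul hm,
        Polynomial.resultant_mul_right _ _ _ e hdeg.le, Polynomial.natDegree_X_sub_C]
  have hu := (IsAlgClosed.splits u).eq_prod_roots
  by_cases h0 : u = 0
  · subst h0
    rw [map_zero, Polynomial.resultant_zero_right, Polynomial.natDegree_zero]
    rcases e with _ | e
    · simp
    · rw [Matrix.det_zero]; simp
  have hc : u.leadingCoeff ≠ 0 := Polynomial.leadingCoeff_ne_zero.2 h0
  have hs' := hs u.roots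
  revert hu hs' hc
  generalize (u.roots.map fun a => Polynomial.X - Polynomial.C a).prod = P
  generalize u.leadingCoeff = c
  intro hu hc hs'
  subst hu
  have hnd : (Polynomial.C c * P).natDegree = (Polynomial.C c).natDegree + P.natDegree := by
    rw [Polynomial.natDegree_C_mul hc]; simp
  rw [hnd, Polynomial.resultant_mul_right _ _ _ e hdeg.le, map_mul, Matrix.det_mul, hs']
  congr 1
  rw [Polynomial.natDegree_C, Polynomial.aeval_C, Matrix.algebraMap_eq_diagonal]
  simp

/-- The resultant with a monic polynomial is a norm: the determinant of `u` evaluated at a matrix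
with characteristic polynomial `Φ`. -/
theorem exists_norm_matrix {A : Type*} [CommRing A] [IsDomain A] (Φ : Polynomial A) (hΦ : Φ.Monic) :
    ∃ M : Matrix (Fin Φ.natDegree) (Fin Φ.natDegree) A, ∀ (u : Polynomial A) (b : ℕ),
      u.natDegree ≤ b →
      Polynomial.resultant Φ u Φ.natDegree b = (Polynomial.aeval M u).det := by
  set pb := AdjoinRoot.powerBasis' hΦ
  set M : Matrix (Fin Φ.natDegree) (Fin Φ.natDegree) A :=
    Algebra.leftMulMatrix pb.basis pb.gen with hM
  have hchar : M.charpoly = Φ := by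
    have h1 : Φ ∣ M.charpoly := by
      have h0 : M.charpoly = minpoly A pb.gen := charpoly_leftMulMatrix pb
      rw [h0]
      have := minpoly.aeval A pb.gen
      have h2 : pb.gen = AdjoinRoot.root Φ := rfl
      rw [h2, AdjoinRoot.aeval_eq, AdjoinRoot.mk_eq_zero] at this
      exact this
    refine (Polynomial.eq_of_monic_of_dvd_of_natDegree_le hΦ (Matrix.charpoly_monic M) h1 ?_)
    simp
  refine ⟨M, fun u b hb => ?_⟩
  let K := AlgebraicClosure (FractionRing A)
  have hinj : Function.Injective (algebraMap A K) := by
    rw [IsScalarTower.algebraMap_eq A (FractionRing A) K]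
    exact (algebraMap (FractionRing A) K).injective.comp (IsFractionRing.injective A _)
  rw [resultant_monic_right_deg Φ u hΦ hb le_rfl]
  apply hinj
  have h3 := det_aeval_closed (M.map (algebraMap A K)) (u.map (algebraMap A K))
  rw [Matrix.charpoly_map, hchar, Polynomial.natDegree_map_eq_of_injective hinj] at h3
  rw [RingHom.map_det, ← Polynomial.resultant_map_map, ← h3]
  congr 1
  have h4 : ∀ w : Polynomial A, Polynomial.aeval (M.map (algebraMap A K)) (w.map (algebraMap A K)) =
      (algebraMap A K).mapMatrix (Polynomial.aeval M w) := by
    intro w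
    induction w using Polynomial.induction_on' with
    | add p q hp hq => simp only [Polynomial.map_add, map_add, hp, hq]
    | monomial n a =>
      rw [Polynomial.map_monomial, Polynomial.aeval_monomial, Polynomial.aeval_monomial, map_mul,
        map_pow, Matrix.algebraMap_eq_diagonal, Matrix.algebraMap_eq_diagonal]
      congr 1
      ext i j
      by_cases hij : i = j
      · subst hij; simp
      · simp [Matrix.diagonal_apply_ne _ hij]
  exact h4 u

theorem resultant_eq_zero_iff_closed {K : Type*} [Field K] [IsAlgClosed K] (f g : Polynomial K)
    (hf : f.Monic) {n : ℕ} (hn : g.natDegree ≤ n) :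
    Polynomial.resultant f g f.natDegree n = 0 ↔ ∃ y, f.eval y = 0 ∧ g.eval y = 0 := by
  rw [Polynomial.resultant_eq_prod_eval _ _ _ hn (IsAlgClosed.splits f), hf.leadingCoeff, one_pow,
    one_mul, Multiset.prod_eq_zero_iff]
  simp only [Multiset.mem_map, Polynomial.mem_roots hf.ne_zero, Polynomial.IsRoot]

theorem eval_map_evalRingHom {R : Type*} [CommRing R] (u : Polynomial (Polynomial R)) (τ y : R) :
    (u.map (Polynomial.evalRingHom τ)).eval y = u.evalEval τ y := by
  rw [Polynomial.eval_map, ← Polynomial.coe_evalEvalRingHom, Polynomial.evalEvalRingHom_eq]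
  rfl

/-- The zeros of the norm are the abscissas of the common zeros. -/
theorem norm_eval_eq_zero_iff {K : Type*} [Field K] [IsAlgClosed K]
    (Φ u : Polynomial (Polynomial K)) (hΦ : Φ.Monic) {b : ℕ} (hb : u.natDegree ≤ b) (τ : K) :
    (Polynomial.resultant Φ u Φ.natDegree b).eval τ = 0 ↔
      ∃ y, Φ.evalEval τ y = 0 ∧ u.evalEval τ y = 0 := by
  have h := resultant_eq_zero_iff_closed (Φ.map (Polynomial.evalRingHom τ))
    (u.map (Polynomial.evalRingHom τ)) (hΦ.map _) (n := b)
    (Polynomial.natDegree_map_le.trans hb)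
  rw [hΦ.natDegree_map, Polynomial.resultant_map_map, Polynomial.coe_evalRingHom] at h
  rw [h]
  simp only [eval_map_evalRingHom]

/-- The norm factors along a branch. -/
theorem norm_branch {R : Type*} [CommRing R] [Nontrivial R]
    (Φ u : Polynomial (Polynomial R)) (hΦ : Φ.Monic) {b : ℕ} (hb : u.natDegree ≤ b) (τ : R)
    (η : PowerSeries R) (Ψ : Polynomial (PowerSeries R))
    (hdeg : Ψ.natDegree + 1 = Φ.natDegree)
    (hf : Φ.map (tay τ) = (Polynomial.X - Polynomial.C η) * Ψ) :
    tay τ (Polynomial.resultant Φ u Φ.natDegree b) =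
      br τ η u * Polynomial.resultant Ψ (u.map (tay τ)) Ψ.natDegree b := by
  have hb' : (u.map (tay τ)).natDegree ≤ b := Polynomial.natDegree_map_le.trans hb
  have h := Polynomial.resultant_mul_left (Polynomial.X - Polynomial.C η) Ψ (u.map (tay τ)) b hb'
  rw [Polynomial.natDegree_X_sub_C, add_comm, hdeg, Polynomial.resultant_X_sub_C_left _ _ _ hb',
    ← hf, Polynomial.resultant_map_map, ← br_eq] at h
  exact h

/-- Constant term of the cofactor in `norm_branch`. -/
theorem cofactor_eq_zero_iff {K : Type*} [Field K] [IsAlgClosed K]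
    (Φ u : Polynomial (Polynomial K)) {b : ℕ} (hb : u.natDegree ≤ b) (τ : K)
    (η : PowerSeries K) (Ψ : Polynomial (PowerSeries K)) (hΨ : Ψ.Monic)
    (hf : Φ.map (tay τ) = (Polynomial.X - Polynomial.C η) * Ψ)
    (h1 : (Polynomial.derivative Φ).evalEval τ (PowerSeries.constantCoeff η) ≠ 0) :
    PowerSeries.constantCoeff (Polynomial.resultant Ψ (u.map (tay τ)) Ψ.natDegree b) = 0 ↔
      ∃ y, y ≠ PowerSeries.constantCoeff η ∧ Φ.evalEval τ y = 0 ∧ u.evalEval τ y = 0 := by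
  have hmt : (PowerSeries.constantCoeff (R := K)).comp (tay τ) = Polynomial.evalRingHom τ := by
    refine RingHom.ext fun a => ?_
    simp [constantCoeff_tay]
  have h := resultant_eq_zero_iff_closed (Ψ.map (PowerSeries.constantCoeff (R := K)))
    ((u.map (tay τ)).map (PowerSeries.constantCoeff (R := K))) (hΨ.map _) (n := b)
    (Polynomial.natDegree_map_le.trans (Polynomial.natDegree_map_le.trans hb))
  rw [hΨ.natDegree_map, Polynomial.resultant_map_map] at h
  rw [h]
  have hf' := congrArg (Polynomial.map (PowerSeries.constantCoeff (R := K))) hf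
  rw [Polynomial.map_map, hmt, Polynomial.map_mul, Polynomial.map_sub, Polynomial.map_X,
    Polynomial.map_C] at hf'
  rw [Polynomial.map_map, hmt]
  simp only [eval_map_evalRingHom]
  have hder : ((Polynomial.derivative Φ).evalEval τ (PowerSeries.constantCoeff η)) =
      (Ψ.map (PowerSeries.constantCoeff (R := K))).eval (PowerSeries.constantCoeff η) := by
    rw [← eval_map_evalRingHom, ← Polynomial.derivative_map, hf']
    simp
  have hev : ∀ y, Φ.evalEval τ y = (y - PowerSeries.constantCoeff η) *
      (Ψ.map (PowerSeries.constantCoeff (R := K))).eval y := by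
    intro y
    rw [← eval_map_evalRingHom, hf']; simp
  constructor
  · rintro ⟨y, hy, hu⟩
    refine ⟨y, ?_, ?_, hu⟩
    · rintro rfl; exact h1 (hder.trans hy)
    · rw [hev, hy, mul_zero]
  · rintro ⟨y, hne, hy, hu⟩
    refine ⟨y, ?_, hu⟩
    rw [hev] at hy
    exact (mul_eq_zero.1 hy).resolve_left (sub_ne_zero.2 hne)

/-- Two distinct common zeros over the same `τ`, one of them simple, produce a double root of the
norm. -/
theorem norm_double_root {K : Type*} [Field K] [IsAlgClosed K]
    (Φ u : Polynomial (Polynomial K)) (hΦ : Φ.Monic) {b : ℕ} (hb : u.natDegree ≤ b) (τ y y' : K)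
    (hy : Φ.evalEval τ y = 0) (hy1 : (Polynomial.derivative Φ).evalEval τ y ≠ 0)
    (hu : u.evalEval τ y = 0) (hne : y' ≠ y) (hy' : Φ.evalEval τ y' = 0)
    (hu' : u.evalEval τ y' = 0) :
    (Polynomial.X - Polynomial.C τ) ^ 2 ∣ Polynomial.resultant Φ u Φ.natDegree b := by
  obtain ⟨η, hη, hη'⟩ := exists_branch Φ hΦ τ y hy (isUnit_iff_ne_zero.2 hy1)
  obtain ⟨Ψ, hΨ, hdeg, hf⟩ := branch_factor Φ hΦ τ η hη'
  have h := norm_branch Φ u hΦ hb τ η Ψ hdeg hf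
  subst hη
  have h2 := (cofactor_eq_zero_iff Φ u hb τ η Ψ hΨ hf hy1).2 ⟨y', hne, hy', hu'⟩
  have h3 : PowerSeries.X ^ 2 ∣ tay τ (Polynomial.resultant Φ u Φ.natDegree b) := by
    rw [h, pow_two]
    refine mul_dvd_mul (PowerSeries.X_dvd_iff.2 ?_) (PowerSeries.X_dvd_iff.2 h2)
    rw [constantCoeff_br, hu]
  rw [tay_apply, PowerSeries.X_pow_dvd_iff] at h3
  rw [Polynomial.X_sub_C_pow_dvd_iff, Polynomial.X_pow_dvd_iff]
  intro d hd
  have := h3 d hd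
  rwa [Polynomial.coeff_coe, Polynomial.taylor_apply] at this

/-- If exactly one point over `τ` is a zero of `u`, and it is simple, the order of vanishing of
the norm is the order of `u` along the branch. -/
theorem norm_simple {K : Type*} [Field K] [IsAlgClosed K]
    (Φ u : Polynomial (Polynomial K)) (hΦ : Φ.Monic) {b : ℕ} (hb : u.natDegree ≤ b) (τ : K)
    (η : PowerSeries K) (hη : br τ η Φ = 0)
    (hy1 : (Polynomial.derivative Φ).evalEval τ (PowerSeries.constantCoeff η) ≠ 0)
    (hne : ∀ y, y ≠ PowerSeries.constantCoeff η → Φ.evalEval τ y = 0 → u.evalEval τ y ≠ 0) :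
    Associated (tay τ (Polynomial.resultant Φ u Φ.natDegree b)) (br τ η u) := by
  obtain ⟨Ψ, hΨ, hdeg, hf⟩ := branch_factor Φ hΦ τ η hη
  have h := norm_branch Φ u hΦ hb τ η Ψ hdeg hf
  rw [h]
  have h2 := (cofactor_eq_zero_iff Φ u hb τ η Ψ hΨ hf hy1)
  have h3 : IsUnit (Polynomial.resultant Ψ (u.map (tay τ)) Ψ.natDegree b) := by
    rw [PowerSeries.isUnit_iff_constantCoeff, isUnit_iff_ne_zero]
    intro h0
    obtain ⟨y, a, b, c⟩ := h2.1 h0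
    exact hne y a b c
  exact associated_mul_unit_left _ _ h3

/-! ### Weierstrass preparation and Eisenstein's criterion -/

/-- Weierstrass preparation combined with Eisenstein's criterion: a power series over `ℤ_p` whose
first `M` coefficients are divisible by `p`, the constant one exactly once, and whose `M`-th
coefficient is a unit, forces any polynomial multiple to have an irreducible factor of degree
`M` over `ℚ_p`. -/
theorem weierstrass_eisenstein (p : ℕ) [hp : Fact p.Prime] (U : PowerSeries ℤ_[p]) (M : ℕ)
    (hM : 0 < M)
    (h1 : ∀ i < M, (p : ℤ_[p]) ∣ PowerSeries.coeff i U) (h2 : IsUnit (PowerSeries.coeff M U))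
    (h3 : ¬ (p : ℤ_[p]) ^ 2 ∣ PowerSeries.constantCoeff U)
    (g : Polynomial ℤ_[p]) (hg : U ∣ (g : PowerSeries ℤ_[p])) :
    ∃ P : Polynomial ℚ_[p], Irreducible P ∧ P.natDegree = M ∧
      P ∣ g.map (algebraMap ℤ_[p] ℚ_[p]) := by
  have hmax : IsLocalRing.maximalIdeal ℤ_[p] = Ideal.span {(p : ℤ_[p])} :=
    PadicInt.maximalIdeal_eq_span_p
  have hres : ∀ x : ℤ_[p], IsLocalRing.residue ℤ_[p] x = 0 ↔ (p : ℤ_[p]) ∣ x := by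
    intro x
    rw [IsLocalRing.residue_eq_zero_iff, hmax, Ideal.mem_span_singleton]
  have hcM : PowerSeries.coeff M (U.map (IsLocalRing.residue ℤ_[p])) ≠ 0 := by
    rw [PowerSeries.coeff_map]
    intro h
    rw [IsLocalRing.residue_eq_zero_iff] at h
    exact h h2
  have hne : U.map (IsLocalRing.residue ℤ_[p]) ≠ 0 := by
    intro h; rw [h] at hcM; simp at hcM
  have hord : (U.map (IsLocalRing.residue ℤ_[p])).order = M := by
    rw [PowerSeries.order_eq_nat]
    refine ⟨hcM, fun i hi => ?_⟩
    rw [PowerSeries.coeff_map, hres]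
    exact h1 i hi
  obtain ⟨P, h, H⟩ := PowerSeries.exists_isWeierstrassFactorization hne
  have hdeg : P.natDegree = M := by
    rw [H.natDegree_eq_toNat_order_map, hord]; rfl
  have hPm : P.Monic := H.isDistinguishedAt.monic
  have hprim : P.IsPrimitive := hPm.isPrimitive
  have hdvd : P ∣ g := by
    have h5 : (P : PowerSeries ℤ_[p]) ∣ (g : PowerSeries ℤ_[p]) := by
      refine dvd_trans ?_ hg
      exact ⟨h, H.eq_mul⟩
    have h6 : H.isDistinguishedAt.algEquivQuotient (Ideal.Quotient.mk _ g) = 0 := by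
      rw [Polynomial.IsDistinguishedAt.algEquivQuotient_apply]
      change Ideal.Quotient.mk _ (g : PowerSeries ℤ_[p]) = 0
      rw [Ideal.Quotient.eq_zero_iff_mem, Ideal.mem_span_singleton]
      exact h5
    rw [EmbeddingLike.map_eq_zero_iff, Ideal.Quotient.eq_zero_iff_mem,
      Ideal.mem_span_singleton] at h6
    exact h6
  have hirr : Irreducible P := by
    refine Polynomial.irreducible_of_eisenstein_criterion
      (P := IsLocalRing.maximalIdeal ℤ_[p]) inferInstance ?_ ?_ ?_ ?_ hprim
    · rw [hPm.leadingCoeff]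
      exact fun h => (Ideal.ne_top_iff_one _).1 (Ideal.IsMaximal.ne_top inferInstance) h
    · intro n hn
      exact H.isDistinguishedAt.mem (Polynomial.coe_lt_degree.1 hn)
    · rw [← Polynomial.natDegree_pos_iff_degree_pos, hdeg]; exact hM
    · rw [hmax, Ideal.span_singleton_pow, Ideal.mem_span_singleton]
      intro h7
      apply h3
      rw [H.eq_mul, map_mul, Polynomial.constantCoeff_coe]
      exact h7.mul_right _
  refine ⟨P.map (algebraMap ℤ_[p] ℚ_[p]), ?_, ?_, Polynomial.map_dvd _ hdvd⟩
  · exact (hprim.irreducible_iff_irreducible_map_fraction_map (K := ℚ_[p])).1 hirr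
  · rw [hPm.natDegree_map, hdeg]

/-! ### Functions of high order along a branch -/

/-- The bivariate polynomial with prescribed coefficients in the box `j < e`, `i ≤ N`. -/
def bipoly {R : Type*} [CommRing R] (e N : ℕ) (a : ℕ → ℕ → R) : Polynomial (Polynomial R) :=
  ∑ j ∈ Finset.range e, Polynomial.monomial j (∑ i ∈ Finset.range (N + 1),
    Polynomial.monomial i (a j i))

section
variable {R : Type*} [CommRing R]

theorem coeff_bipoly (e N : ℕ) (a : ℕ → ℕ → R) (j : ℕ) :
    (bipoly e N a).coeff j = if j < e then ∑ i ∈ Finset.range (N + 1),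
    Polynomial.monomial i (a j i) else 0 := by
  simp only [bipoly, Polynomial.finsetSum_coeff, Polynomial.coeff_monomial, Finset.sum_ite_eq',
    Finset.mem_range]

theorem coeff_coeff_bipoly (e N : ℕ) (a : ℕ → ℕ → R) (j i : ℕ) :
    ((bipoly e N a).coeff j).coeff i = if j < e ∧ i ≤ N then a j i else 0 := by
  rw [coeff_bipoly]
  split_ifs with h1 h2 h2
  · simp only [Polynomial.finsetSum_coeff, Polynomial.coeff_monomial, Finset.sum_ite_eq',
      Finset.mem_range, Nat.lt_succ_iff, h2.2, if_true]
  · simp only [Polynomial.finsetSum_coeff, Polynomial.coeff_monomial, Finset.sum_ite_eq',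
      Finset.mem_range, Nat.lt_succ_iff, ite_eq_right_iff]
    intro h; exact absurd ⟨h1, h⟩ h2
  · exact absurd h2.1 h1
  · simp

theorem natDegree_bipoly_lt {e : ℕ} (he : 0 < e) (N : ℕ) (a : ℕ → ℕ → R) :
    (bipoly e N a).natDegree < e := by
  have : (bipoly e N a).natDegree ≤ e - 1 := by
    rw [Polynomial.natDegree_le_iff_coeff_eq_zero]
    intro i hi
    rw [coeff_bipoly, if_neg]; omega
  omega

theorem natDegree_coeff_bipoly_le (e N : ℕ) (a : ℕ → ℕ → R) (j : ℕ) :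
    ((bipoly e N a).coeff j).natDegree ≤ N := by
  rw [Polynomial.natDegree_le_iff_coeff_eq_zero]
  intro i hi
  rw [coeff_coeff_bipoly, if_neg]; omega

theorem map_bipoly {S : Type*} [CommRing S] (g : R →+* S) (e N : ℕ) (a : ℕ → ℕ → R) :
    (bipoly e N a).map (Polynomial.mapRingHom g) = bipoly e N (fun j i => g (a j i)) := by
  ext j i
  rw [Polynomial.coeff_map, Polynomial.coe_mapRingHom, Polynomial.coeff_map, coeff_coeff_bipoly,
    coeff_coeff_bipoly]
  split_ifs <;> simp

end

/-- A bivariate polynomial of bounded degrees vanishing to a high order along the branch. -/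
theorem exists_high_order {K : Type*} [Field K] (Φ : Polynomial (Polynomial K)) (hΦ : Φ.Monic)
    (hirr : Irreducible Φ) (η : PowerSeries K) (hη : br 0 η Φ = 0) (N : ℕ)
    (he : 0 < Φ.natDegree) :
    ∃ a : ℕ → ℕ → K, ∃ M : ℕ, Φ.natDegree * (N + 1) ≤ M + 1 ∧
      (∀ i < M, PowerSeries.coeff i (br 0 η (bipoly Φ.natDegree N a)) = 0) ∧
      PowerSeries.coeff M (br 0 η (bipoly Φ.natDegree N a)) ≠ 0 := by
  set e := Φ.natDegree with hedef
  let ext' : (Fin e × Fin (N + 1) → K) → ℕ → ℕ → K := fun v j i =>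
    if h : j < e ∧ i < N + 1 then v (⟨j, h.1⟩, ⟨i, h.2⟩) else 0
  let T : (Fin e × Fin (N + 1) → K) →ₗ[K] (Fin (e * (N + 1) - 1) → K) :=
    { toFun := fun v r => PowerSeries.coeff r (br 0 η (bipoly e N (ext' v)))
      map_add' := by
        intro v w
        funext r
        have : bipoly e N (ext' (v + w)) = bipoly e N (ext' v) + bipoly e N (ext' w) := by
          ext j i
          rw [Polynomial.coeff_add, Polynomial.coeff_add, coeff_coeff_bipoly, coeff_coeff_bipoly,
            coeff_coeff_bipoly]
          simp only [ext']
          split_ifs <;> simp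
        simp only [this, map_add, Pi.add_apply]
      map_smul' := by
        intro c v
        funext r
        have : bipoly e N (ext' (c • v)) =
            Polynomial.C (Polynomial.C c) * bipoly e N (ext' v) := by
          ext j i
          rw [Polynomial.coeff_C_mul, Polynomial.coeff_C_mul, coeff_coeff_bipoly,
            coeff_coeff_bipoly]
          simp only [ext']
          split_ifs <;> simp
        simp only [this, map_mul, br_C, Pi.smul_apply, RingHom.id_apply, smul_eq_mul]
        rw [tay_apply]
        simp }
  have hpos : 0 < e * (N + 1) := Nat.mul_pos he (Nat.succ_pos _)
  have hker : LinearMap.ker T ≠ ⊥ := by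
    apply LinearMap.ker_ne_bot_of_finrank_lt
    rw [Module.finrank_fin_fun, Module.finrank_fintype_fun_eq_card, Fintype.card_prod,
      Fintype.card_fin, Fintype.card_fin]
    omega
  obtain ⟨v, hv, hv0⟩ := Submodule.exists_mem_ne_zero_of_ne_bot hker
  have hbne : bipoly e N (ext' v) ≠ 0 := by
    intro h0
    apply hv0
    funext ⟨j, i⟩
    have := coeff_coeff_bipoly e N (ext' v) j i
    rw [h0, if_pos ⟨j.2, Nat.lt_succ_iff.1 i.2⟩] at this
    simp only [ext', j.2, i.2, and_self, dif_pos, Fin.eta] at this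
    simpa using this.symm
  have hbr : br 0 η (bipoly e N (ext' v)) ≠ 0 := by
    intro h0
    refine hbne (eq_zero_of_aeval_root (tay (0 : K)) (tay_injective 0) Φ hΦ hirr η ?_ _ ?_
      (natDegree_bipoly_lt he N _))
    · rw [← Polynomial.eval_map, ← br_eq]; exact hη
    · rw [← Polynomial.eval_map, ← br_eq]; exact h0
  refine ⟨ext' v, (br 0 η (bipoly e N (ext' v))).order.toNat, ?_, ?_, ?_⟩
  · by_contra hlt
    push Not at hlt
    have h1 := congrFun (LinearMap.mem_ker.1 hv) ⟨(br 0 η (bipoly e N (ext' v))).order.toNat,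
      by omega⟩
    exact PowerSeries.coeff_order hbr h1
  · intro i hi
    exact PowerSeries.coeff_of_lt_order_toNat _ hi
  · exact PowerSeries.coeff_order hbr

/-! ### Norms with a large irreducible factor -/

/-- A `p`-adic embedding of a number field, integral on a prescribed finite set, presented through
a subring of `ℚ̄`. -/
theorem exists_integral_model (k : IntermediateField ℚ Qbar) [FiniteDimensional ℚ k]
    (S : Finset Qbar) :
    ∃ p : ℕ, ∃ _ : Fact p.Prime, ∃ R : Subring Qbar, ∃ φ : R →+* ℤ_[p], ∃ φk : k →+* ℚ_[p],
      (∀ s ∈ S, s ∈ R) ∧ ∀ (x : R) (y : k), (x : Qbar) = y → φk y = (φ x : ℚ_[p]) := by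
  let L : IntermediateField ℚ Qbar := k ⊔ IntermediateField.adjoin ℚ (S : Set Qbar)
  have hS : FiniteDimensional ℚ (IntermediateField.adjoin ℚ (S : Set Qbar)) :=
    IntermediateField.finiteDimensional_adjoin fun x _ => (Algebra.IsAlgebraic.isAlgebraic x).isIntegral
  have hL : FiniteDimensional ℚ L := IntermediateField.finiteDimensional_sup _ _
  have : NumberField L := ⟨⟩
  have hkL : k ≤ L := le_sup_left
  have hSL : ∀ s ∈ S, s ∈ L := fun s hs =>
    (le_sup_right : _ ≤ L) (IntermediateField.subset_adjoin ℚ _ hs)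
  classical
  obtain ⟨p, hp, φ, hφ⟩ := exists_split_prime L (S.attach.image fun s : {x // x ∈ S} => ⟨s.1, hSL s.1 s.2⟩)
  let R' : Subring L := Subring.comap φ (PadicInt.subring p)
  let R : Subring Qbar := R'.map (algebraMap L Qbar)
  have hinj : Function.Injective (algebraMap L Qbar) := (algebraMap L Qbar).injective
  let eqv : R' ≃+* R := Subring.equivMapOfInjective R' (algebraMap L Qbar) hinj
  let ψ : R' →+* ℤ_[p] := (φ.comp R'.subtype).codRestrict (PadicInt.subring p) (fun x => x.2)
  refine ⟨p, hp, R, ψ.comp eqv.symm.toRingHom, φ.comp (IntermediateField.inclusion hkL).toRingHom, ?_, ?_⟩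
  · intro s hs
    refine ⟨⟨s, hSL s hs⟩, ?_, rfl⟩
    exact hφ _ (Finset.mem_image.2 ⟨⟨s, hs⟩, Finset.mem_attach _ _, rfl⟩)
  · intro x y hxy
    have h1 : ((eqv.symm x : R') : L) = IntermediateField.inclusion hkL y := by
      apply hinj
      have : algebraMap L Qbar ((eqv.symm x : R') : L) = (eqv (eqv.symm x) : Qbar) := rfl
      rw [this, RingEquiv.apply_symm_apply, hxy]
      rfl
    change φ (IntermediateField.inclusion hkL y) = φ ((eqv.symm x : R') : L)
    rw [h1]

/-- The function `q (w + p Z) + p (y - s)^c` whose norm is studied. -/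
def mkU {R : Type*} [CommRing R] (q s : Polynomial R) (c p : ℕ)
    (w : Polynomial (Polynomial ℤ)) (Z : Polynomial ℤ) : Polynomial (Polynomial R) :=
  Polynomial.C q * (w.map (Polynomial.mapRingHom (Int.castRingHom R)) +
    Polynomial.C (Polynomial.C (p : R) * Z.map (Int.castRingHom R))) +
    Polynomial.C (Polynomial.C (p : R)) * (Polynomial.X - Polynomial.C s) ^ c

theorem map_mkU {R S : Type*} [CommRing R] [CommRing S] (g : R →+* S) (q s : Polynomial R)
    (c p : ℕ) (w : Polynomial (Polynomial ℤ)) (Z : Polynomial ℤ) :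
    (mkU q s c p w Z).map (Polynomial.mapRingHom g) = mkU (q.map g) (s.map g) c p w Z := by
  have h1 : (Polynomial.mapRingHom g).comp (Polynomial.mapRingHom (Int.castRingHom R)) =
      Polynomial.mapRingHom (Int.castRingHom S) := by
    refine Polynomial.ringHom_ext' (RingHom.ext_int _ _) ?_
    simp
  have h2 : (Z.map (Int.castRingHom R)).map g = Z.map (Int.castRingHom S) := by
    rw [Polynomial.map_map]
    congr 1
    exact RingHom.ext_int _ _
  simp only [mkU, Polynomial.map_add, Polynomial.map_mul, Polynomial.map_pow, Polynomial.map_sub,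
    Polynomial.map_X, Polynomial.map_C, Polynomial.map_map, h1, Polynomial.coe_mapRingHom, h2,
    map_natCast, Polynomial.map_natCast]

/-- Lifting a bivariate polynomial to a subring containing its coefficients. -/
theorem exists_lift₂ {K : Type*} [CommRing K] (R : Subring K) (P : Polynomial (Polynomial K))
    (h : ∀ i j, (P.coeff i).coeff j ∈ R) :
    ∃ P' : Polynomial (Polynomial R), P'.map (Polynomial.mapRingHom R.subtype) = P := by
  have : P ∈ Polynomial.lifts (Polynomial.mapRingHom R.subtype) := by
    rw [Polynomial.lifts_iff_coeff_lifts]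
    intro i
    have h1 : P.coeff i ∈ Polynomial.lifts R.subtype := by
      rw [Polynomial.lifts_iff_coeff_lifts]
      intro j
      exact ⟨⟨_, h i j⟩, rfl⟩
    obtain ⟨a, ha⟩ := (Polynomial.mem_lifts _).1 h1
    exact ⟨a, ha⟩
  exact (Polynomial.mem_lifts _).1 this

theorem exists_lift₁ {K : Type*} [CommRing K] (R : Subring K) (P : Polynomial K)
    (h : ∀ i, P.coeff i ∈ R) : ∃ P' : Polynomial R, P'.map R.subtype = P := by
  have : P ∈ Polynomial.lifts R.subtype := by
    rw [Polynomial.lifts_iff_coeff_lifts]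
    intro i
    exact ⟨⟨_, h i⟩, rfl⟩
  exact (Polynomial.mem_lifts _).1 this

/-- The finite set of coefficients of a bivariate polynomial, together with `0`. -/
def coeffs₂ {K : Type*} [CommRing K] [DecidableEq K] (P : Polynomial (Polynomial K)) : Finset K :=
  insert 0 (P.support.biUnion fun i => (P.coeff i).coeffs)

theorem mem_coeffs₂ {K : Type*} [CommRing K] [DecidableEq K] (P : Polynomial (Polynomial K))
    (i j : ℕ) : (P.coeff i).coeff j ∈ coeffs₂ P := by
  by_cases h : (P.coeff i).coeff j = 0
  · rw [h]; exact Finset.mem_insert_self _ _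
  · refine Finset.mem_insert_of_mem (Finset.mem_biUnion.2 ⟨i, ?_, ?_⟩)
    · rw [Polynomial.mem_support_iff]
      intro h0; rw [h0] at h; simp at h
    · exact Polynomial.coeff_mem_coeffs h

theorem mem_coeffs₂_C {K : Type*} [CommRing K] [DecidableEq K] (P : Polynomial K)
    (j : ℕ) : P.coeff j ∈ coeffs₂ (Polynomial.C P) := by
  have := mem_coeffs₂ (Polynomial.C P) 0 j
  simpa using this

/-- The `p`-adic core of `exists_large_factor`. Given a function whose order along the branch over
`t = 0` is exactly `M`, also modulo `p`, a lift `w` of it to `ℤ` can be chosen such that the norm of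
`mkU q s c p w Z` has an irreducible factor of degree `M`: along the branch the function `mkU` is, up
to a unit, an Eisenstein polynomial of degree `M`. -/
theorem exists_large_factor_aux (p : ℕ) [hp : Fact p.Prime] (Φ : Polynomial (Polynomial ℤ_[p]))
    (hΦ : Φ.Monic) (η : PowerSeries ℤ_[p]) (hη : br 0 η Φ = 0) (q s : Polynomial ℤ_[p])
    (hq : IsUnit (q.eval 0)) (c N M : ℕ) (hM : 0 < M) (he : 0 < Φ.natDegree)
    (a : ℕ → ℕ → ℤ_[p])
    (ha : ∀ i < M, PowerSeries.coeff i (br 0 η (bipoly Φ.natDegree N a)) = 0)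
    (haM : IsUnit (PowerSeries.coeff M (br 0 η (bipoly Φ.natDegree N a)))) :
    ∃ w : Polynomial (Polynomial ℤ), w.natDegree < Φ.natDegree ∧
      (∀ j, (w.coeff j).natDegree ≤ N) ∧
      ∀ Z : Polynomial ℤ, (p : ℤ) ∣ Z.coeff 0 → ∀ b, (mkU q s c p w Z).natDegree ≤ b →
      ∃ P : Polynomial ℚ_[p], Irreducible P ∧ P.natDegree = M ∧
        P ∣ (Polynomial.resultant Φ (mkU q s c p w Z) Φ.natDegree b).map
          (algebraMap ℤ_[p] ℚ_[p]) := by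
  set e := Φ.natDegree with hedef
  set g : ℤ_[p] →+* ZMod p := PadicInt.toZMod with hg
  have hker : ∀ x, g x = 0 ↔ (p : ℤ_[p]) ∣ x := by
    intro x
    rw [← Ideal.mem_span_singleton, ← PadicInt.maximalIdeal_eq_span_p, ← PadicInt.ker_toZMod,
      RingHom.mem_ker]
  set y := PowerSeries.constantCoeff η
  let w' : Polynomial (Polynomial ℤ) := bipoly e N fun j i => ((g (a j i)).val : ℤ)
  let T : Polynomial (Polynomial ℤ) → ℤ_[p] := fun w =>
    q.eval 0 * (w.map (Polynomial.mapRingHom (Int.castRingHom ℤ_[p]))).evalEval 0 y +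
      p * (y - s.eval 0) ^ c
  have hmod : ∀ ε : ℤ, (bipoly e N (fun j i => ((g (a j i)).val : ℤ) +
      if j = 0 ∧ i = 0 then ε * p else 0)).map (Polynomial.mapRingHom (Int.castRingHom (ZMod p))) =
      (bipoly e N a).map (Polynomial.mapRingHom g) := by
    intro ε
    rw [map_bipoly, map_bipoly]
    congr 1
    funext j i
    split_ifs <;> simp
  -- of two lifts differing by the constant `p`, one has a value not divisible by `p ^ 2`, as
  -- Eisenstein requires
  have hT : ∃ ε : ℤ, ¬ (p : ℤ_[p]) ^ 2 ∣ T (bipoly e N (fun j i => ((g (a j i)).val : ℤ) +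
      if j = 0 ∧ i = 0 then ε * p else 0)) := by
    by_contra hcon
    push Not at hcon
    have h0 := hcon 0
    have h1 := hcon 1
    have hdiff : bipoly e N (fun j i => ((g (a j i)).val : ℤ) +
      if j = 0 ∧ i = 0 then 1 * (p : ℤ) else 0) = bipoly e N (fun j i => ((g (a j i)).val : ℤ) +
      if j = 0 ∧ i = 0 then 0 * (p : ℤ) else 0) + Polynomial.C (Polynomial.C (p : ℤ)) := by
      ext j i
      rw [Polynomial.coeff_add, Polynomial.coeff_add, coeff_coeff_bipoly, coeff_coeff_bipoly]
      by_cases hj : j = 0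
      · subst hj
        by_cases hi : i = 0
        · subst hi; simp [he]
        · simp [hi]
      · simp [hj]
    have h2 := dvd_sub h1 h0
    have h3 : T (bipoly e N (fun j i => ((g (a j i)).val : ℤ) +
      if j = 0 ∧ i = 0 then 1 * (p : ℤ) else 0)) - T (bipoly e N (fun j i => ((g (a j i)).val : ℤ) +
      if j = 0 ∧ i = 0 then 0 * (p : ℤ) else 0)) = q.eval 0 * p := by
      simp only [T, hdiff]
      simp only [Polynomial.map_add, Polynomial.map_C, Polynomial.coe_mapRingHom,
        Polynomial.evalEval_add, Polynomial.evalEval_C, Polynomial.eval_C]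
      simp only [eq_intCast, Int.cast_natCast]
      ring
    rw [h3, mul_comm, pow_two] at h2
    have hp0 : (p : ℤ_[p]) ≠ 0 := by exact_mod_cast hp.out.ne_zero
    have h4 : (p : ℤ_[p]) ∣ q.eval 0 := (mul_dvd_mul_iff_left hp0).1 h2
    exact PadicInt.prime_p.not_isUnit (isUnit_of_dvd_unit h4 hq)
  obtain ⟨ε, hε⟩ := hT
  have hmodε := hmod ε
  set w := bipoly e N (fun j i => ((g (a j i)).val : ℤ) +
      if j = 0 ∧ i = 0 then ε * (p : ℤ) else 0) with hw
  refine ⟨w, natDegree_bipoly_lt he N _, natDegree_coeff_bipoly_le e N _, ?_⟩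
  intro Z hZ b hb
  set u := mkU q s c p w Z with hu
  -- modulo `p` only the term `q * bipoly e N a` survives
  have hbrmod : PowerSeries.map g (br 0 η u) =
      PowerSeries.map g (tay 0 q * br 0 η (bipoly e N a)) := by
    rw [map_mul, map_br, map_br, map_tay, hu, map_mkU]
    simp only [mkU, CharP.cast_eq_zero, map_zero, zero_mul, add_zero, map_mul, br_C]
    rw [hmodε]
  have hcoef : ∀ i, g (PowerSeries.coeff i (br 0 η u)) =
      g (PowerSeries.coeff i (tay 0 q * br 0 η (bipoly e N a))) := by
    intro i
    have := congrArg (PowerSeries.coeff i) hbrmod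
    simpa only [PowerSeries.coeff_map] using this
  have hXM : PowerSeries.X ^ M ∣ br 0 η (bipoly e N a) := PowerSeries.X_pow_dvd_iff.2 ha
  obtain ⟨V, hV⟩ := hXM
  have hV0 : PowerSeries.coeff M (br 0 η (bipoly e N a)) = PowerSeries.constantCoeff V := by
    rw [hV, ← PowerSeries.coeff_zero_eq_constantCoeff_apply]
    have := PowerSeries.coeff_X_pow_mul V M 0
    simpa using this
  refine weierstrass_eisenstein p (br 0 η u) M hM ?_ ?_ ?_ (Polynomial.resultant Φ u e b) ?_
  · intro i hi
    rw [← hker, hcoef, hV, mul_left_comm, PowerSeries.coeff_X_pow_mul', if_neg (by omega), map_zero]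
  · have h5 : g (PowerSeries.coeff M (br 0 η u)) ≠ 0 := by
      rw [hcoef, hV, mul_left_comm, PowerSeries.coeff_X_pow_mul', if_pos le_rfl, Nat.sub_self,
        PowerSeries.coeff_zero_eq_constantCoeff_apply, map_mul, constantCoeff_tay, ← hV0]
      exact ((hq.mul haM).map g).ne_zero
    by_contra h6
    apply h5
    rw [hker, ← Ideal.mem_span_singleton, ← PadicInt.maximalIdeal_eq_span_p]
    exact (IsLocalRing.mem_maximalIdeal _).2 h6
  · have h7 : PowerSeries.constantCoeff (br 0 η u) = T w + q.eval 0 * (p * Z.coeff 0) := by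
      rw [constantCoeff_br, hu]
      simp only [mkU, T, Polynomial.evalEval_add, Polynomial.evalEval_mul, Polynomial.evalEval_C,
        Polynomial.eval_C, Polynomial.evalEval_pow, Polynomial.evalEval_sub, Polynomial.evalEval_X,
        Polynomial.eval_mul]
      rw [← Polynomial.coeff_zero_eq_eval_zero (Z.map _), Polynomial.coeff_map]
      simp only [eq_intCast]
      ring
    rw [h7]
    intro h8
    apply hε
    refine (dvd_add_left ?_).1 h8
    obtain ⟨z, hz⟩ := hZ
    refine ⟨q.eval 0 * z, ?_⟩
    rw [hz]; push_cast; ring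
  · obtain ⟨Ψ, -, hdeg, hf⟩ := branch_factor Φ hΦ 0 η hη
    have h9 := norm_branch Φ u hΦ hb 0 η Ψ hdeg hf
    rw [tay_apply, Polynomial.taylor_zero] at h9
    rw [h9]
    exact dvd_mul_right _ _

/-- Key irreducibility input: for suitable `p` and `w`, whatever the polynomial `Z` with
`p ∣ Z(0)`, the norm of `mkU q s c p w Z` has an irreducible factor of large degree. -/
theorem exists_large_factor (k : IntermediateField ℚ Qbar) [FiniteDimensional ℚ k]
    (Φ : Polynomial (Polynomial k)) (hΦ : Φ.Monic)
    (hirr : Irreducible (Φ.map (Polynomial.mapRingHom (algebraMap k Qbar))))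
    (y₀ : Qbar) (hy₀ : (Φ.map (Polynomial.mapRingHom (algebraMap k Qbar))).evalEval 0 y₀ = 0)
    (hy₁ : (Polynomial.derivative
      (Φ.map (Polynomial.mapRingHom (algebraMap k Qbar)))).evalEval 0 y₀ ≠ 0)
    (q s : Polynomial k) (hq : q.eval 0 ≠ 0) (c N : ℕ) (he : 0 < Φ.natDegree)
    (hN : 2 ≤ Φ.natDegree * (N + 1)) :
    ∃ p : ℕ, p.Prime ∧ ∃ w : Polynomial (Polynomial ℤ), w.natDegree < Φ.natDegree ∧
      (∀ j, (w.coeff j).natDegree ≤ N) ∧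
      ∀ Z : Polynomial ℤ, (p : ℤ) ∣ Z.coeff 0 → ∀ b, (mkU q s c p w Z).natDegree ≤ b →
        Polynomial.resultant Φ (mkU q s c p w Z) Φ.natDegree b ≠ 0 →
      ∃ π : Polynomial k, Irreducible π ∧ Φ.natDegree * (N + 1) ≤ π.natDegree + 1 ∧
        π ∣ Polynomial.resultant Φ (mkU q s c p w Z) Φ.natDegree b := by
  classical
  set ι := algebraMap k Qbar with hι
  set ΦQ := Φ.map (Polynomial.mapRingHom ι) with hΦQ
  have hΦQm : ΦQ.Monic := hΦ.map _
  have hdegQ : ΦQ.natDegree = Φ.natDegree := hΦ.natDegree_map _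
  obtain ⟨η, hη0, hη⟩ := exists_branch ΦQ hΦQm 0 y₀ hy₀ (isUnit_iff_ne_zero.2 hy₁)
  obtain ⟨a, M, hMN, haM, haM'⟩ := exists_high_order ΦQ hΦQm hirr η hη N (hdegQ ▸ he)
  rw [hdegQ] at hMN haM haM'
  have hM : 0 < M := by omega
  let qQ := q.map ι
  let sQ := s.map ι
  have hqQ : qQ.eval 0 ≠ 0 := by
    have : qQ.eval 0 = ι (q.eval 0) := by
      rw [← Polynomial.coeff_zero_eq_eval_zero, ← Polynomial.coeff_zero_eq_eval_zero,
        Polynomial.coeff_map]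
    rw [this]
    exact (map_ne_zero ι).2 hq
  -- everything that has to be `p`-integral, and the inverses of what has to be a `p`-adic unit
  let S : Finset Qbar := coeffs₂ ΦQ ∪ coeffs₂ (Polynomial.C qQ) ∪ coeffs₂ (Polynomial.C sQ) ∪
    coeffs₂ (bipoly Φ.natDegree N a) ∪ {y₀, ((Polynomial.derivative ΦQ).evalEval 0 y₀)⁻¹,
      (qQ.eval 0)⁻¹, (PowerSeries.coeff M (br 0 η (bipoly Φ.natDegree N a)))⁻¹}
  obtain ⟨p, hp, R, φ, φk, hS, hcompat⟩ := exists_integral_model k S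
  have hinj : Function.Injective R.subtype := Subtype.val_injective
  obtain ⟨ΦR, hΦR⟩ := exists_lift₂ R ΦQ fun i j => hS _ (by
    simp only [S, Finset.mem_union, mem_coeffs₂, true_or])
  obtain ⟨qR, hqR⟩ := exists_lift₁ R qQ fun i => hS _ (by
    simp only [S, Finset.mem_union, mem_coeffs₂_C, true_or, or_true])
  obtain ⟨sR, hsR⟩ := exists_lift₁ R sQ fun i => hS _ (by
    simp only [S, Finset.mem_union, mem_coeffs₂_C, true_or, or_true])
  have haR : ∀ j i, ∃ x : R, j < Φ.natDegree ∧ i ≤ N → (x : Qbar) = a j i := by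
    intro j i
    by_cases h : j < Φ.natDegree ∧ i ≤ N
    · have h1 := mem_coeffs₂ (bipoly Φ.natDegree N a) j i
      rw [coeff_coeff_bipoly, if_pos h] at h1
      exact ⟨⟨a j i, hS _ (by simp only [S, Finset.mem_union, h1, true_or, or_true])⟩, fun _ => rfl⟩
    · exact ⟨0, fun h' => absurd h' h⟩
  choose aR haR using haR
  have hbip : (bipoly Φ.natDegree N aR).map (Polynomial.mapRingHom R.subtype) =
      bipoly Φ.natDegree N a := by
    rw [map_bipoly]
    ext j i
    rw [coeff_coeff_bipoly, coeff_coeff_bipoly]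
    split_ifs with h
    · exact haR j i h
    · rfl
  have hunit : ∀ x : R, (x : Qbar) ≠ 0 → (x : Qbar)⁻¹ ∈ R → IsUnit x := by
    intro x hx hx'
    refine isUnit_iff_exists_inv.2 ⟨⟨_, hx'⟩, Subtype.ext ?_⟩
    exact mul_inv_cancel₀ hx
  let yR : R := ⟨y₀, hS _ (by simp [S])⟩
  have hΦRm : ΦR.Monic := Polynomial.monic_of_injective (f := Polynomial.mapRingHom R.subtype)
    (Polynomial.map_injective R.subtype hinj) (by rw [hΦR]; exact hΦQm)
  have hdegR : ΦR.natDegree = Φ.natDegree := by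
    rw [← hdegQ, ← hΦR, hΦRm.natDegree_map]
  have hevR : ∀ P : Polynomial (Polynomial R), ((P.evalEval 0 yR : R) : Qbar) =
      (P.map (Polynomial.mapRingHom R.subtype)).evalEval 0 y₀ := by
    intro P
    have := Polynomial.map_mapRingHom_evalEval R.subtype P 0 yR
    rw [map_zero] at this
    exact this.symm
  have hder : (Polynomial.derivative ΦR).map (Polynomial.mapRingHom R.subtype) =
      Polynomial.derivative ΦQ := by
    rw [← Polynomial.derivative_map, hΦR]
  obtain ⟨ηR, hηR0, hηR⟩ := exists_branch ΦR hΦRm 0 yR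
    (Subtype.ext (by rw [hevR, hΦR, hy₀]; rfl)) (by
      apply hunit
      · rw [hevR, hder]; exact hy₁
      · rw [hevR, hder]; exact hS _ (by simp [S]))
  have hcm : PowerSeries.constantCoeff (PowerSeries.map R.subtype ηR) =
      R.subtype (PowerSeries.constantCoeff ηR) := by
    rw [← PowerSeries.coeff_zero_eq_constantCoeff_apply, PowerSeries.coeff_map,
      PowerSeries.coeff_zero_eq_constantCoeff_apply]
  -- the branch is defined over the integral model
  have hηeq : PowerSeries.map R.subtype ηR = η := by
    refine branch_unique ΦQ hΦQm 0 _ _ ?_ hη ?_ ?_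
    · have := map_br R.subtype 0 ηR ΦR
      rw [hηR, map_zero, map_zero, hΦR] at this
      exact this.symm
    · rw [hη0, hcm, hηR0]; rfl
    · rw [hcm, hηR0]; exact hy₁
  have hbrR : ∀ i, ((PowerSeries.coeff i (br 0 ηR (bipoly Φ.natDegree N aR)) : R) : Qbar) =
      PowerSeries.coeff i (br 0 η (bipoly Φ.natDegree N a)) := by
    intro i
    have := congrArg (PowerSeries.coeff i) (map_br R.subtype 0 ηR (bipoly Φ.natDegree N aR))
    rw [PowerSeries.coeff_map, hηeq, hbip, map_zero] at this
    exact this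
  set Φp := ΦR.map (Polynomial.mapRingHom φ) with hΦp
  have hdegp : Φp.natDegree = Φ.natDegree := by rw [hΦp, hΦRm.natDegree_map, hdegR]
  have hbrp : ∀ i, PowerSeries.coeff i (br 0 (PowerSeries.map φ ηR)
      (bipoly Φ.natDegree N fun j i => φ (aR j i))) =
      φ (PowerSeries.coeff i (br 0 ηR (bipoly Φ.natDegree N aR))) := by
    intro i
    have := congrArg (PowerSeries.coeff i) (map_br φ 0 ηR (bipoly Φ.natDegree N aR))
    rw [PowerSeries.coeff_map, map_zero, map_bipoly] at this
    exact this.symm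
  obtain ⟨w, hw1, hw2, hw3⟩ := exists_large_factor_aux p Φp (hΦRm.map _) (PowerSeries.map φ ηR) (by
      have := map_br φ 0 ηR ΦR
      rw [hηR, map_zero, map_zero] at this
      exact this.symm) (qR.map φ) (sR.map φ) (by
      have h1 : (qR.map φ).eval 0 = φ (qR.eval 0) := by
        rw [← Polynomial.coeff_zero_eq_eval_zero, ← Polynomial.coeff_zero_eq_eval_zero,
          Polynomial.coeff_map]
      rw [h1]
      have h2 : ((qR.eval 0 : R) : Qbar) = qQ.eval 0 := by
        rw [← hqR, ← Polynomial.coeff_zero_eq_eval_zero, ← Polynomial.coeff_zero_eq_eval_zero,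
          Polynomial.coeff_map]; rfl
      refine (hunit _ ?_ ?_).map φ
      · rw [h2]; exact hqQ
      · rw [h2]; exact hS _ (by simp [S])) c N M hM (hdegp ▸ he) (fun j i => φ (aR j i)) (by
      intro i hi
      rw [hdegp, hbrp]
      have : PowerSeries.coeff i (br 0 ηR (bipoly Φ.natDegree N aR)) = 0 :=
        Subtype.ext (by rw [hbrR, haM i hi]; rfl)
      rw [this, map_zero]) (by
      rw [hdegp, hbrp]
      refine (hunit _ ?_ ?_).map φ
      · rw [hbrR]; exact haM'
      · rw [hbrR]; exact hS _ (by simp [S]))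
  rw [hdegp] at hw1 hw3
  refine ⟨p, hp.out, w, hw1, hw2, ?_⟩
  intro Z hZ b hb hne
  -- a bound on the degree valid for all the models of `u`
  set b' := max b (max (mkU qR sR c p w Z).natDegree (mkU (qR.map φ) (sR.map φ) c p w Z).natDegree)
  have hbb : Polynomial.resultant Φ (mkU q s c p w Z) Φ.natDegree b =
      Polynomial.resultant Φ (mkU q s c p w Z) Φ.natDegree b' :=
    resultant_monic_right_deg _ _ hΦ hb (hb.trans (le_max_left _ _))
  rw [hbb] at hne ⊢
  obtain ⟨P, hP1, hP2, hP3⟩ := hw3 Z hZ b' ((le_max_right _ _).trans (le_max_right _ _))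
  set Nk := Polynomial.resultant Φ (mkU q s c p w Z) Φ.natDegree b' with hNk
  set NR := Polynomial.resultant ΦR (mkU qR sR c p w Z) Φ.natDegree b' with hNR
  have hNp : Polynomial.resultant Φp (mkU (qR.map φ) (sR.map φ) c p w Z) Φ.natDegree b' =
      NR.map φ := by
    rw [hNR, ← Polynomial.coe_mapRingHom, ← Polynomial.resultant_map_map, map_mkU]
    rfl
  have hNQ : NR.map R.subtype = Nk.map ι := by
    rw [hNR, hNk, ← Polynomial.coe_mapRingHom, ← Polynomial.coe_mapRingHom,
      ← Polynomial.resultant_map_map, ← Polynomial.resultant_map_map, map_mkU, map_mkU, hΦR,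
      hqR, hsR]
  have hNkp : Nk.map φk = (NR.map φ).map (algebraMap ℤ_[p] ℚ_[p]) := by
    ext i
    rw [Polynomial.coeff_map, Polynomial.coeff_map, Polynomial.coeff_map]
    refine hcompat _ _ ?_
    have := congrArg (fun P => P.coeff i) hNQ
    simp only [Polynomial.coeff_map] at this
    exact this
  rw [hNp, ← hNkp] at hP3
  -- the irreducible `p`-adic factor divides a single irreducible factor over `k`
  have hfac := UniqueFactorizationMonoid.factors_prod hne
  have hP4 : P ∣ ((UniqueFactorizationMonoid.factors Nk).map (Polynomial.mapRingHom φk)).prod := by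
    rw [Multiset.prod_hom]
    exact hP3.trans (Polynomial.map_dvd φk hfac.symm.dvd)
  obtain ⟨π', hπ', hPπ⟩ := (UniqueFactorizationMonoid.irreducible_iff_prime.1 hP1).exists_mem_multiset_dvd hP4
  obtain ⟨π, hπ, rfl⟩ := Multiset.mem_map.1 hπ'
  have hπirr := UniqueFactorizationMonoid.irreducible_of_factor π hπ
  refine ⟨π, hπirr, ?_, UniqueFactorizationMonoid.dvd_of_mem_factors hπ⟩
  have h10 := Polynomial.natDegree_le_of_dvd hPπ (by
    rw [Polynomial.coe_mapRingHom]
    exact (Polynomial.map_ne_zero_iff φk.injective).2 hπirr.ne_zero)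
  rw [hP2, Polynomial.coe_mapRingHom, Polynomial.natDegree_map] at h10
  omega

/-! ### The degree of the norm -/

/-- The top coefficient of a determinant of polynomials of degree at most `b` is the determinant of
the top coefficients. -/
theorem coeff_det_of_le {R : Type*} [CommRing R] {e : ℕ} (W : Matrix (Fin e) (Fin e) (Polynomial R))
    (b : ℕ) (hW : ∀ i j, (W i j).natDegree ≤ b) :
    W.det.natDegree ≤ e * b ∧
      W.det.coeff (e * b) = (W.map fun P => P.coeff b).det := by
  constructor
  · rw [Matrix.det_apply]
    refine Polynomial.natDegree_sum_le_of_forall_le _ _ fun σ _ => ?_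
    refine (Polynomial.natDegree_smul_le _ _).trans ?_
    refine (Polynomial.natDegree_prod_le _ _).trans ?_
    refine (Finset.sum_le_card_nsmul _ _ b fun i _ => hW _ _).trans ?_
    simp
  · rw [Matrix.det_apply, Matrix.det_apply, Polynomial.finsetSum_coeff]
    refine Finset.sum_congr rfl fun σ _ => ?_
    rw [Polynomial.coeff_smul]
    congr 1
    have := Polynomial.coeff_prod_of_natDegree_le (s := Finset.univ) (fun i => W (σ i) i) b
      (fun i _ => hW _ _)
    simpa using this

/-- Degree and leading coefficient of the norm of `a + X` when `a` dominates `X`. -/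
theorem exists_norm_degree {R : Type*} [CommRing R] [IsDomain R] (Φ : Polynomial (Polynomial R))
    (hΦ : Φ.Monic) :
    ∃ κ : ℕ, ∀ (a : Polynomial R) (X : Polynomial (Polynomial R)) (b : ℕ),
      (∀ j ∈ X.support, (X.coeff j).natDegree + κ * j + 1 ≤ a.natDegree) →
      (Polynomial.C a + X).natDegree ≤ b →
      (Polynomial.resultant Φ (Polynomial.C a + X) Φ.natDegree b).natDegree =
        Φ.natDegree * a.natDegree ∧
      (Polynomial.resultant Φ (Polynomial.C a + X) Φ.natDegree b).leadingCoeff =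
        a.leadingCoeff ^ Φ.natDegree := by
  obtain ⟨M, hM⟩ := exists_norm_matrix Φ hΦ
  set κ : ℕ := ∑ i, ∑ j, (M i j).natDegree with hκ
  have hκ1 : ∀ i j, (M i j).natDegree ≤ κ := fun i j =>
    (Finset.single_le_sum (f := fun j => (M i j).natDegree) (fun _ _ => Nat.zero_le _)
      (Finset.mem_univ j)).trans
    (Finset.single_le_sum (f := fun i => ∑ j, (M i j).natDegree) (fun _ _ => Nat.zero_le _)
      (Finset.mem_univ i))
  have hpow : ∀ (n : ℕ) i j, ((M ^ n) i j).natDegree ≤ κ * n := by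
    intro n
    induction n with
    | zero =>
      intro i j
      rw [pow_zero, Matrix.one_apply]
      split_ifs <;> simp
    | succ n ih =>
      intro i j
      rw [pow_succ, Matrix.mul_apply]
      refine Polynomial.natDegree_sum_le_of_forall_le _ _ fun l _ => ?_
      refine Polynomial.natDegree_mul_le.trans ?_
      have := ih i l
      have := hκ1 l j
      rw [mul_add, mul_one]; omega
  refine ⟨κ, fun a X b h hb => ?_⟩
  rw [hM _ _ hb]
  set W := Polynomial.aeval M (Polynomial.C a + X) with hW
  have hW1 : W = Matrix.diagonal (fun _ => a) + ∑ j ∈ X.support, X.coeff j • M ^ j := by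
    rw [hW, map_add, Polynomial.aeval_C, Matrix.algebraMap_eq_diagonal,
      Polynomial.aeval_eq_sum_range' (Nat.lt_succ_self _)]
    congr 1
    refine (Finset.sum_subset ?_ ?_).symm
    · intro j hj
      exact Finset.mem_range.2 (Nat.lt_succ_of_le (Polynomial.le_natDegree_of_mem_supp j hj))
    · intro j _ hj
      rw [Polynomial.notMem_support_iff.1 hj, zero_smul]
  have hY : ∀ i j, ((∑ l ∈ X.support, X.coeff l • M ^ l) i j).degree < a.natDegree := by
    intro i j
    rw [Matrix.sum_apply]
    refine (Polynomial.degree_sum_le _ _).trans_lt ?_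
    rw [Finset.sup_lt_iff (by exact WithBot.bot_lt_coe _)]
    intro l hl
    have h1 := h l hl
    have h2 := hpow l i j
    refine (Polynomial.degree_le_natDegree).trans_lt ?_
    rw [Matrix.smul_apply, smul_eq_mul]
    have h3 := Polynomial.natDegree_mul_le (p := X.coeff l) (q := (M ^ l) i j)
    exact_mod_cast (by omega : (X.coeff l * (M ^ l) i j).natDegree < a.natDegree)
  have hWdeg : ∀ i j, (W i j).natDegree ≤ a.natDegree := by
    intro i j
    rw [hW1, Matrix.add_apply]
    refine Polynomial.natDegree_add_le_of_degree_le ?_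
      (Polynomial.natDegree_le_of_degree_le (hY i j).le)
    by_cases hij : i = j
    · subst hij; simp
    · simp [Matrix.diagonal_apply_ne _ hij]
  have hWc : (W.map fun P => P.coeff a.natDegree) = Matrix.diagonal (fun _ => a.leadingCoeff) := by
    ext i j
    rw [Matrix.map_apply, hW1, Matrix.add_apply, Polynomial.coeff_add,
      Polynomial.coeff_eq_zero_of_degree_lt (hY i j), add_zero]
    by_cases hij : i = j
    · subst hij; simp
    · simp [Matrix.diagonal_apply_ne _ hij]
  obtain ⟨h1, h2⟩ := coeff_det_of_le W a.natDegree hWdeg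
  rw [hWc, Matrix.det_diagonal, Finset.prod_const, Finset.card_univ, Fintype.card_fin] at h2
  by_cases ha : a = 0
  · subst ha
    simp only [Polynomial.natDegree_zero, mul_zero, Polynomial.leadingCoeff_zero] at *
    have := Nat.le_zero.1 h1
    exact ⟨this, by rw [Polynomial.leadingCoeff, this, h2]⟩
  have hne : a.leadingCoeff ^ Φ.natDegree ≠ 0 := pow_ne_zero _ (Polynomial.leadingCoeff_ne_zero.2 ha)
  have h3 : W.det.natDegree = Φ.natDegree * a.natDegree :=
    le_antisymm h1 (Polynomial.le_natDegree_of_ne_zero (by rw [h2]; exact hne))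
  exact ⟨h3, by rw [Polynomial.leadingCoeff, h3, h2]⟩

/-! ### Prescribed intersections -/

theorem X_sub_C_pow_dvd_iff_tay {R : Type*} [CommRing R] (τ : R) (m : ℕ) (a : Polynomial R) :
    (Polynomial.X - Polynomial.C τ) ^ m ∣ a ↔ PowerSeries.X ^ m ∣ tay τ a := by
  rw [tay_apply, PowerSeries.X_pow_dvd_iff, Polynomial.X_sub_C_pow_dvd_iff, Polynomial.X_pow_dvd_iff]
  simp only [Polynomial.coeff_coe, Polynomial.taylor_apply]

/-- If `u = q W + p (y - s)^c` with `c` large, and over each root `τ` of `q` the point `(τ, s(τ))`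
lies on the curve `Φ = 0`, is simple, and `W` does not vanish there, then `q` divides the norm of
`u`, with a cofactor prime to `q`. -/
theorem norm_eq_mul {K : Type*} [Field K] [IsAlgClosed K]
    (Φ W : Polynomial (Polynomial K)) (hΦ : Φ.Monic) (q s : Polynomial K) (hq : q ≠ 0)
    (c : ℕ) (hc : q.natDegree < c) (p : K) (hp : p ≠ 0) {b : ℕ}
    (hb : (Polynomial.C q * W + Polynomial.C (Polynomial.C p) *
      (Polynomial.X - Polynomial.C s) ^ c).natDegree ≤ b)
    (h : ∀ τ, q.eval τ = 0 → Φ.evalEval τ (s.eval τ) = 0 ∧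
      (Polynomial.derivative Φ).evalEval τ (s.eval τ) ≠ 0 ∧ W.evalEval τ (s.eval τ) ≠ 0)
    (hN : Polynomial.resultant Φ (Polynomial.C q * W + Polynomial.C (Polynomial.C p) *
      (Polynomial.X - Polynomial.C s) ^ c) Φ.natDegree b ≠ 0) :
    ∃ F : Polynomial K, Polynomial.resultant Φ (Polynomial.C q * W + Polynomial.C (Polynomial.C p) *
      (Polynomial.X - Polynomial.C s) ^ c) Φ.natDegree b = q * F ∧
      ∀ τ, q.eval τ = 0 → F.eval τ ≠ 0 := by
  classical
  set u := Polynomial.C q * W + Polynomial.C (Polynomial.C p) *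
      (Polynomial.X - Polynomial.C s) ^ c with hu
  set N := Polynomial.resultant Φ u Φ.natDegree b with hNdef
  have key : ∀ τ, q.eval τ = 0 → ∀ m ≤ c,
      ((Polynomial.X - Polynomial.C τ) ^ m ∣ N ↔ (Polynomial.X - Polynomial.C τ) ^ m ∣ q) := by
    intro τ hτ m hm
    obtain ⟨h0, h1, h2⟩ := h τ hτ
    obtain ⟨η, hη0, hη⟩ := exists_branch Φ hΦ τ (s.eval τ) h0 (isUnit_iff_ne_zero.2 h1)
    have hass := norm_simple Φ u hΦ hb τ η hη (by rwa [hη0]) (by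
      intro y hy _
      rw [hη0] at hy
      simp only [hu, Polynomial.evalEval_add, Polynomial.evalEval_mul, Polynomial.evalEval_C,
        Polynomial.evalEval_pow, Polynomial.evalEval_sub, Polynomial.evalEval_X, hτ, zero_mul,
        zero_add, Polynomial.eval_C]
      exact mul_ne_zero hp (pow_ne_zero _ (sub_ne_zero.2 hy)))
    rw [X_sub_C_pow_dvd_iff_tay, X_sub_C_pow_dvd_iff_tay, hass.dvd_iff_dvd_right]
    have e1 : br τ η u = tay τ q * br τ η W + tay τ (Polynomial.C p) * (η - tay τ s) ^ c := by
      simp only [hu, map_add, map_mul, map_pow, map_sub, br_C, br_X]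
    have e2 : PowerSeries.X ^ m ∣ tay τ (Polynomial.C p) * (η - tay τ s) ^ c := by
      refine Dvd.dvd.mul_left ((pow_dvd_pow _ hm).trans (pow_dvd_pow_of_dvd ?_ c)) _
      rw [PowerSeries.X_dvd_iff, map_sub, constantCoeff_tay, hη0, sub_self]
    rw [e1, dvd_add_left e2]
    have e3 : IsUnit (br τ η W) := by
      rw [PowerSeries.isUnit_iff_constantCoeff, constantCoeff_br, hη0]
      exact isUnit_iff_ne_zero.2 h2
    exact e3.dvd_mul_right
  have hmult : ∀ τ, q.eval τ = 0 → N.rootMultiplicity τ = q.rootMultiplicity τ := by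
    intro τ hτ
    have hle : q.rootMultiplicity τ < c :=
      lt_of_le_of_lt ((Polynomial.count_roots q ▸ Multiset.count_le_card _ _).trans
        (Polynomial.card_roots' q)) hc
    refine le_antisymm ?_ ?_
    · by_contra hlt
      push Not at hlt
      have h1 : (Polynomial.X - Polynomial.C τ) ^ (q.rootMultiplicity τ + 1) ∣ N :=
        (Polynomial.le_rootMultiplicity_iff hN).1 hlt
      rw [key τ hτ _ hle, ← Polynomial.le_rootMultiplicity_iff hq] at h1
      omega
    · rw [Polynomial.le_rootMultiplicity_iff hN, key τ hτ _ hle.le]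
      exact Polynomial.pow_rootMultiplicity_dvd q τ
  have hdvd : q ∣ N := by
    refine (IsAlgClosed.splits q).dvd_of_roots_le_roots hq ?_
    rw [Multiset.le_iff_count]
    intro τ
    rw [Polynomial.count_roots, Polynomial.count_roots]
    by_cases hτ : q.eval τ = 0
    · exact (hmult τ hτ).ge
    · rw [Polynomial.rootMultiplicity_eq_zero hτ]; exact Nat.zero_le _
  obtain ⟨F, hF⟩ := hdvd
  refine ⟨F, hF, fun τ hτ hFτ => ?_⟩
  have h1 := hmult τ hτ
  rw [hF] at hN
  rw [hF, Polynomial.rootMultiplicity_mul hN] at h1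
  have : 0 < F.rootMultiplicity τ :=
    (Polynomial.rootMultiplicity_pos (right_ne_zero_of_mul hN)).2 hFτ
  omega

/-! ### Counting algebraic numbers -/

/-- All archimedean absolute values of `t` are at most `R`. -/
def Bd (t : Qbar) (R : ℝ) : Prop := ∀ ψ : Qbar →+* ℂ, ‖ψ t‖ ≤ R

/-- The roots in `ℂ` of the minimal polynomial of `a` are the images of `a` under the embeddings of
`ℚ̄`. -/
theorem root_eq_conj (a : Qbar) (z : ℂ) (hz : Polynomial.aeval z (minpoly ℚ a) = 0) :
    ∃ ψ : Qbar →+* ℂ, ψ a = z := by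
  have h := Algebra.IsAlgebraic.range_eval_eq_rootSet_minpoly (F := ℚ) (K := Qbar) ℂ a
  have h2 : z ∈ (minpoly ℚ a).rootSet ℂ := by
    rw [Polynomial.mem_rootSet]
    exact ⟨minpoly.ne_zero (Algebra.IsIntegral.isIntegral a), hz⟩
  rw [← h] at h2
  obtain ⟨ψ, hψ⟩ := h2
  exact ⟨ψ, hψ⟩

theorem exists_Bd (a : Qbar) : ∃ R : ℝ, Bd a R := by
  have hfin : ((fun z : ℂ => ‖z‖) '' ((minpoly ℚ a).rootSet ℂ)).Finite :=
    (Polynomial.rootSet_finite _ _).image _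
  obtain ⟨R, hR⟩ := hfin.bddAbove
  refine ⟨R, fun ψ => hR ⟨ψ a, ?_, rfl⟩⟩
  rw [Polynomial.mem_rootSet]
  refine ⟨minpoly.ne_zero (Algebra.IsIntegral.isIntegral a), ?_⟩
  have : ψ (Polynomial.aeval a (minpoly ℚ a)) = 0 := by rw [minpoly.aeval, map_zero]
  rw [Polynomial.aeval_def, Polynomial.hom_eval₂] at this
  rw [Polynomial.aeval_def, RingHom.ext_rat (algebraMap ℚ ℂ) (ψ.comp (algebraMap ℚ Qbar))]
  exact this

theorem exists_Bd_finset (S : Finset Qbar) : ∃ R : ℝ, 1 ≤ R ∧ ∀ a ∈ S, Bd a R := by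
  choose R hR using exists_Bd
  refine ⟨1 + ∑ a ∈ S, |R a|, ?_, fun a ha ψ => ?_⟩
  · have := Finset.sum_nonneg (s := S) (f := fun a => |R a|) (fun _ _ => abs_nonneg _)
    linarith
  · have := Finset.single_le_sum (s := S) (f := fun a => |R a|) (fun _ _ => abs_nonneg _) ha
    have h2 := hR a ψ
    have h3 := le_abs_self (R a)
    linarith

theorem Bd.mul_int {t : Qbar} {R : ℝ} (h : Bd t R) (A : ℤ) : Bd ((A : Qbar) * t) (|(A : ℝ)| * R) := by
  intro ψ
  rw [map_mul, norm_mul, map_intCast, Complex.norm_intCast]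
  exact mul_le_mul_of_nonneg_left (h ψ) (abs_nonneg _)

/-- Count of algebraic numbers of degree at most `r` with bounded denominator and bounded
conjugates. -/
theorem count_low_degree (r : ℕ) (A : ℤ) (hA : A ≠ 0) :
    ∃ C : ℝ, 0 < C ∧ ∀ R : ℝ, 1 ≤ R → ∃ S : Finset Qbar, (S.card : ℝ) ≤ C * R ^ (r * (r + 1)) ∧
      ∀ t : Qbar, IsIntegral ℤ ((A : Qbar) * t) → (∃ K : IntermediateField ℚ Qbar,
        FiniteDimensional ℚ K ∧ t ∈ K ∧ Module.finrank ℚ K ≤ r) → Bd t R → t ∈ S := by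
  classical
  have hA1 : (1 : ℝ) ≤ |(A : ℝ)| := by exact_mod_cast Int.one_le_abs hA
  set b : ℝ := |(A : ℝ)| ^ r * r.choose (r / 2) with hb
  have hb1 : 1 ≤ b := by
    have h1 : (1 : ℝ) ≤ |(A : ℝ)| ^ r := one_le_pow₀ hA1
    have h2 : (1 : ℝ) ≤ r.choose (r / 2) := by
      exact_mod_cast Nat.choose_pos (Nat.div_le_self r 2)
    exact one_le_mul_of_one_le_of_one_le h1 h2
  refine ⟨(5 * b) ^ (r + 1) * (r + 1), by positivity, fun R hR => ?_⟩
  have hRr : 1 ≤ R ^ r := one_le_pow₀ hR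
  set M : ℕ := ⌈b * R ^ r⌉₊ with hM
  -- the integral minimal polynomial has coefficients at most `M` in absolute value
  let box : Finset (Fin (r + 1) → ℤ) := Fintype.piFinset fun _ => Finset.Icc (-(M : ℤ)) M
  let P : (Fin (r + 1) → ℤ) → Polynomial ℤ := fun v =>
    ∑ i : Fin (r + 1), Polynomial.monomial (i : ℕ) (v i)
  have hPdeg : ∀ v, (P v).natDegree ≤ r := fun v =>
    Polynomial.natDegree_sum_le_of_forall_le _ _ fun i _ =>
      (Polynomial.natDegree_monomial_le _).trans (by omega)
  let S := box.biUnion fun v =>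
    (((P v).map (Int.castRingHom Qbar)).roots.toFinset).image fun a : Qbar => a / (A : Qbar)
  refine ⟨S, ?_, ?_⟩
  · have h1 : S.card ≤ box.card * r := by
      refine Finset.card_biUnion_le_card_mul _ _ _ fun v _ => ?_
      refine Finset.card_image_le.trans ((Multiset.toFinset_card_le _).trans ?_)
      exact (Polynomial.card_roots' _).trans (Polynomial.natDegree_map_le.trans (hPdeg v))
    have h2 : box.card = (2 * M + 1) ^ (r + 1) := by
      simp only [box, Fintype.card_piFinset, Int.card_Icc, Finset.prod_const, Finset.card_univ,
        Fintype.card_fin]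
      congr 1; omega
    have h3 : (2 * (M : ℝ) + 1) ≤ 5 * b * R ^ r := by
      have : (M : ℝ) < b * R ^ r + 1 := Nat.ceil_lt_add_one (by positivity)
      have : 1 ≤ b * R ^ r := one_le_mul_of_one_le_of_one_le hb1 hRr
      linarith
    calc (S.card : ℝ) ≤ ((2 * M + 1) ^ (r + 1) * r : ℕ) := by rw [← h2]; exact_mod_cast h1
      _ = (2 * (M : ℝ) + 1) ^ (r + 1) * r := by push_cast; ring
      _ ≤ (5 * b * R ^ r) ^ (r + 1) * (r + 1) := by gcongr; linarith
      _ = (5 * b) ^ (r + 1) * (r + 1) * R ^ (r * (r + 1)) := by rw [mul_pow, ← pow_mul]; ring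
  · rintro t ht ⟨K, hK, htK, hKr⟩ hB
    set a : Qbar := A * t with ha
    have hmin : minpoly ℚ a = (minpoly ℤ a).map (algebraMap ℤ ℚ) :=
      minpoly.isIntegrallyClosed_eq_field_fractions' ℚ ht
    have haK : a ∈ K := mul_mem (by simp) htK
    have hdeg : (minpoly ℤ a).natDegree ≤ r := by
      have h1 := minpoly.natDegree_le (A := ℚ) (⟨a, haK⟩ : K)
      have h2 : minpoly ℚ (⟨a, haK⟩ : K) = minpoly ℚ a :=
        (minpoly.algebraMap_eq (algebraMap K Qbar).injective (⟨a, haK⟩ : K)).symm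
      rw [h2, hmin, (minpoly.monic ht).natDegree_map] at h1
      omega
    have hcoef : ∀ i, |(minpoly ℤ a).coeff i| ≤ M := by
      intro i
      have h1 := Polynomial.coeff_bdd_of_roots_le (B := |(A : ℝ)| * R) (d := r) (Int.castRingHom ℂ)
        (minpoly.monic ht) (IsAlgClosed.splits _) hdeg (by
          intro z hz
          have h3 : (Polynomial.map (Int.castRingHom ℂ) (minpoly ℤ a)).eval z = 0 :=
            (Polynomial.mem_roots'.1 hz).2
          obtain ⟨ψ, hψ⟩ := root_eq_conj a z (by
            rw [hmin, Polynomial.aeval_map_algebraMap, Polynomial.aeval_def, ← Polynomial.eval_map]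
            exact h3)
          rw [← hψ]
          exact hB.mul_int A ψ) i
      rw [Polynomial.coeff_map, eq_intCast, Complex.norm_intCast,
        max_eq_left (one_le_mul_of_one_le_of_one_le hA1 hR), mul_pow] at h1
      have h2 : (|((minpoly ℤ a).coeff i : ℝ)|) ≤ M := by
        refine h1.trans (le_trans (le_of_eq ?_) (Nat.le_ceil _))
        rw [hb]; ring
      exact_mod_cast h2
    refine Finset.mem_biUnion.2 ⟨fun i => (minpoly ℤ a).coeff i, ?_, ?_⟩
    · rw [Fintype.mem_piFinset]
      intro i
      rw [Finset.mem_Icc]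
      exact abs_le.1 (hcoef i)
    · have hP : P (fun i => (minpoly ℤ a).coeff i) = minpoly ℤ a := by
        simp only [P]
        rw [Fin.sum_univ_eq_sum_range (fun i => Polynomial.monomial i ((minpoly ℤ a).coeff i)),
          ← Polynomial.as_sum_range' _ _ (Nat.lt_succ_of_le hdeg)]
      rw [hP, Finset.mem_image]
      refine ⟨a, ?_, ?_⟩
      · rw [Multiset.mem_toFinset, Polynomial.mem_roots (Polynomial.map_monic_ne_zero (minpoly.monic ht))]
        rw [Polynomial.IsRoot, Polynomial.eval_map]
        exact minpoly.aeval ℤ a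
      · have : (A : Qbar) ≠ 0 := by exact_mod_cast hA
        rw [ha]; field_simp

/-- Count of elements of a number field of degree `D` with bounded denominator and bounded
conjugates; the constant does not depend on the field. -/
theorem count_in_field (D : ℕ) (A : ℤ) (hA : A ≠ 0) :
    ∃ C : ℝ, 0 < C ∧ ∀ R : ℝ, 1 ≤ R → ∀ K : IntermediateField ℚ Qbar, FiniteDimensional ℚ K →
      Module.finrank ℚ K = D → ∀ S : Finset Qbar,
      (∀ t ∈ S, t ∈ K ∧ IsIntegral ℤ ((A : Qbar) * t) ∧ Bd t R) → (S.card : ℝ) ≤ C * R ^ (2 * D) := by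
  classical
  have hA1 : (1 : ℝ) ≤ |(A : ℝ)| := by exact_mod_cast Int.one_le_abs hA
  refine ⟨(7 * |(A : ℝ)|) ^ (2 * D), by positivity, fun R hR K hK hKD S hS => ?_⟩
  have : NumberField K := ⟨⟩
  set b : ℝ := |(A : ℝ)| * R with hb
  have hb1 : 1 ≤ b := one_le_mul_of_one_le_of_one_le hA1 hR
  set M : ℕ := ⌈2 * b⌉₊ with hM
  let box : Finset (((K →+* ℂ) × Bool) → ℤ) := Fintype.piFinset fun _ => Finset.Icc (-(M : ℤ)) M
  have hcard : Fintype.card (K →+* ℂ) = D := by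
    rw [NumberField.Embeddings.card, hKD]
  have hext : ∀ φ : K →+* ℂ, ∃ ψ : Qbar →+* ℂ, ∀ x : K, ψ x = φ x := by
    intro φ
    let _ : Algebra K ℂ := φ.toAlgebra
    have : Algebra.IsAlgebraic K Qbar := Algebra.IsAlgebraic.tower_top (K := ℚ) K
    let ψ : Qbar →ₐ[K] ℂ := IsAlgClosed.lift
    exact ⟨ψ.toRingHom, fun x => ψ.commutes x⟩
  choose ext hext using hext
  -- the conjugates are rounded to half-integers; this is injective, as a nonzero integer of `K` has
  -- norm at least `1`
  let g : Qbar → (((K →+* ℂ) × Bool) → ℤ) := fun t i =>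
    ⌊2 * (if i.2 then (ext i.1 (A * t)).re else (ext i.1 (A * t)).im)⌋
  have hmaps : Set.MapsTo g S box := by
    intro t ht
    obtain ⟨-, -, h3⟩ := hS t ht
    rw [Finset.mem_coe, Fintype.mem_piFinset]
    intro i
    have h4 := h3.mul_int A (ext i.1)
    have h5 : |(if i.2 then (ext i.1 (A * t)).re else (ext i.1 (A * t)).im)| ≤ b := by
      split_ifs
      · exact (Complex.abs_re_le_norm _).trans h4
      · exact (Complex.abs_im_le_norm _).trans h4
    rw [abs_le] at h5
    have h6 : 2 * b ≤ M := Nat.le_ceil _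
    rw [Finset.mem_Icc]
    constructor
    · refine Int.le_floor.2 ?_
      push_cast
      linarith
    · refine Int.floor_le_iff.2 ?_
      push_cast
      linarith
  have hinj : Set.InjOn g S := by
    intro t ht t' ht' hgg
    by_contra hne
    obtain ⟨h1, h2, -⟩ := hS t ht
    obtain ⟨h1', h2', -⟩ := hS t' ht'
    let x : K := ⟨A * t - A * t', sub_mem (mul_mem (by simp) h1) (mul_mem (by simp) h1')⟩
    have hx : IsIntegral ℤ x := by
      have : IsIntegral ℤ (algebraMap K Qbar x) := h2.sub h2'
      exact (isIntegral_algebraMap_iff (algebraMap K Qbar).injective).1 this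
    have hx0 : x ≠ 0 := by
      intro h0
      have : (A : Qbar) * t - A * t' = 0 := congrArg Subtype.val h0
      rw [← mul_sub, mul_eq_zero, sub_eq_zero] at this
      rcases this with h | h
      · exact hA (by exact_mod_cast h)
      · exact hne h
    have hsmall : ∀ φ : K →+* ℂ, ‖φ x‖ < 1 := by
      intro φ
      rw [← hext φ x]
      have hv : ext φ x = ext φ (A * t) - ext φ (A * t') := by rw [← map_sub]
      have hre := congrFun hgg (φ, true)
      have him := congrFun hgg (φ, false)
      simp only [g, if_true, Bool.false_eq_true, if_false] at hre him
      have hre' := Int.abs_sub_lt_one_of_floor_eq_floor hre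
      have him' := Int.abs_sub_lt_one_of_floor_eq_floor him
      rw [abs_lt] at hre' him'
      rw [hv, ← sq_lt_one_iff₀ (norm_nonneg _), Complex.sq_norm, Complex.normSq_apply, Complex.sub_re,
        Complex.sub_im]
      nlinarith
    have hnorm : (1 : ℝ) ≤ |(Algebra.norm ℚ x : ℝ)| := by
      obtain ⟨N, hN⟩ := IsIntegrallyClosed.isIntegral_iff.1 (Algebra.isIntegral_norm ℚ hx)
      have : N ≠ 0 := by
        rintro rfl
        rw [map_zero, eq_comm, Algebra.norm_eq_zero_iff] at hN
        exact hx0 hN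
      rw [← hN]
      simpa using (by exact_mod_cast Int.one_le_abs this : (1 : ℝ) ≤ |(N : ℝ)|)
    have hprod := Algebra.norm_eq_prod_embeddings ℚ ℂ x
    have hlt : |(Algebra.norm ℚ x : ℝ)| < 1 := by
      have e1 : |(Algebra.norm ℚ x : ℝ)| = ‖(algebraMap ℚ ℂ (Algebra.norm ℚ x))‖ := by
        simp
      rw [e1, hprod, norm_prod]
      have hne : (Finset.univ : Finset (K →ₐ[ℚ] ℂ)).Nonempty := by
        have : Nonempty (K →ₐ[ℚ] ℂ) := ⟨IsAlgClosed.lift⟩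
        exact Finset.univ_nonempty
      refine (Finset.prod_lt_prod_of_nonempty (g := fun _ => (1 : ℝ)) (fun φ _ => ?_)
        (fun φ _ => hsmall φ.toRingHom) hne).trans_eq (by simp)
      exact norm_pos_iff.2 (by simpa using hx0)
    linarith
  have h1 := Finset.card_le_card_of_injOn g hmaps hinj
  have h2 : box.card = (2 * M + 1) ^ (2 * D) := by
    simp only [box, Fintype.card_piFinset, Int.card_Icc, Finset.prod_const, Finset.card_univ,
      Fintype.card_prod, hcard, Fintype.card_bool]
    rw [mul_comm D 2]
    congr 1; omega
  have h3 : (2 * (M : ℝ) + 1) ≤ 7 * b := by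
    have : (M : ℝ) < 2 * b + 1 := Nat.ceil_lt_add_one (by positivity)
    linarith
  calc (S.card : ℝ) ≤ ((2 * M + 1) ^ (2 * D) : ℕ) := by rw [← h2]; exact_mod_cast h1
    _ = (2 * (M : ℝ) + 1) ^ (2 * D) := by push_cast; ring
    _ ≤ (7 * b) ^ (2 * D) := by gcongr
    _ = (7 * |(A : ℝ)|) ^ (2 * D) * R ^ (2 * D) := by rw [hb, ← mul_assoc, mul_pow]

/-! ### Discriminant bounds -/

/-- The discriminant of a number field is bounded in terms of any basis of `K/ℚ` consisting
of algebraic integers. -/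
theorem abs_discr_le (K : Type*) [Field K] [NumberField K] {ι : Type*} [Fintype ι] [DecidableEq ι]
    (v : Module.Basis ι ℚ K) (hv : ∀ i, IsIntegral ℤ (v i)) (x : ι → ℝ)
    (hx : ∀ (φ : K →+* ℂ) i, ‖φ (v i)‖ ≤ x i) :
    |(NumberField.discr K : ℝ)| ≤ ((Fintype.card ι).factorial * ∏ i, x i) ^ 2 := by
  classical
  have e : Module.Free.ChooseBasisIndex ℤ (NumberField.RingOfIntegers K) ≃ ι :=
    (NumberField.integralBasis K).indexEquiv v
  set b := (NumberField.integralBasis K).reindex e with hb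
  have hbd : Algebra.discr ℚ b = NumberField.discr K := by
    rw [NumberField.coe_discr, hb, Module.Basis.coe_reindex, Algebra.discr_reindex]
  have hinteg : ∀ i j, ∃ n : ℤ, (n : ℚ) = b.toMatrix v i j := by
    intro i j
    have h := NumberField.integralBasis_repr_apply K
      (⟨v j, hv j⟩ : NumberField.RingOfIntegers K) (e.symm i)
    refine ⟨_, h.symm.trans ?_⟩
    rw [Module.Basis.toMatrix_apply, hb, Module.Basis.repr_reindex_apply]
    rfl
  choose P hP using hinteg
  have hPm : b.toMatrix v = (Matrix.of P).map (Int.castRingHom ℚ) := by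
    ext i j; rw [← hP]; rfl
  have hdet : (b.toMatrix v).det = ((Matrix.of P).det : ℤ) := by
    rw [hPm]
    exact ((Int.castRingHom ℚ).map_det _).symm
  have h1 : Algebra.discr ℚ v = (((Matrix.of P).det : ℤ) : ℚ) ^ 2 * NumberField.discr K := by
    rw [← hbd, ← hdet, ← Algebra.discr_of_matrix_vecMul, Module.Basis.toMatrix_map_vecMul]
  have h0 := Algebra.discr_not_zero_of_basis ℚ v
  have hd0 : (Matrix.of P).det ≠ 0 := by
    intro h
    rw [h1, h] at h0
    simp at h0
  have h2 : |(NumberField.discr K : ℝ)| ≤ |((Algebra.discr ℚ v : ℚ) : ℝ)| := by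
    rw [h1, Rat.cast_mul, Rat.cast_pow, Rat.cast_intCast, Rat.cast_intCast, abs_mul]
    have : (1 : ℝ) ≤ |(((Matrix.of P).det : ℤ) : ℝ) ^ 2| := by
      rw [abs_pow]
      exact one_le_pow₀ (by exact_mod_cast Int.one_le_abs hd0)
    exact le_mul_of_one_le_left (abs_nonneg _) this
  refine h2.trans ?_
  have hcard : Fintype.card ι = Fintype.card (K →ₐ[ℚ] ℂ) := by
    rw [AlgHom.card, Module.finrank_eq_card_basis v]
  have e' : ι ≃ (K →ₐ[ℚ] ℂ) := Fintype.equivOfCardEq hcard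
  have h3 := Algebra.discr_eq_det_embeddingsMatrixReindex_pow_two ℚ ℂ (v : ι → K) e'
  have h4 : |((Algebra.discr ℚ v : ℚ) : ℝ)| = ‖(algebraMap ℚ ℂ (Algebra.discr ℚ v))‖ := by simp
  rw [h4, h3, norm_pow]
  refine pow_le_pow_left₀ (norm_nonneg _) ?_ 2
  rw [Matrix.det_apply]
  refine (norm_sum_le _ _).trans ?_
  have h5 : ∀ σ ∈ (Finset.univ : Finset (Equiv.Perm ι)), ‖Equiv.Perm.sign σ •
      ∏ i, (Algebra.embeddingsMatrixReindex ℚ ℂ (v : ι → K) e') (σ i) i‖ ≤ ∏ i, x i := by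
    intro σ _
    have h6 : ‖Equiv.Perm.sign σ •
      ∏ i, (Algebra.embeddingsMatrixReindex ℚ ℂ (v : ι → K) e') (σ i) i‖ =
      ‖∏ i, (Algebra.embeddingsMatrixReindex ℚ ℂ (v : ι → K) e') (σ i) i‖ := by
      rcases Int.units_eq_one_or (Equiv.Perm.sign σ) with h | h <;> simp [h]
    rw [h6, norm_prod, ← Equiv.prod_comp σ x]
    refine Finset.prod_le_prod (fun _ _ => norm_nonneg _) fun i _ => ?_
    exact hx (e' i : K →+* ℂ) (σ i)
  refine (Finset.sum_le_sum h5).trans ?_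
  rw [Finset.sum_const, Finset.card_univ, Fintype.card_perm, nsmul_eq_mul]

/-- Discriminant bound for the field generated over `k` by a small element. -/
theorem exists_discr_bound (k : IntermediateField ℚ Qbar) [FiniteDimensional ℚ k] (A : ℤ) (hA : A ≠ 0)
    (D : ℕ) :
    ∃ C : ℝ, 0 < C ∧ ∀ R : ℝ, 1 ≤ R → ∀ K : IntermediateField ℚ Qbar,
      ∀ hK : FiniteDimensional ℚ K, k ≤ K → ∀ t ∈ K, IsIntegral ℤ ((A : Qbar) * t) → Bd t R →
      Module.finrank ℚ K = Module.finrank ℚ k * (minpoly k t).natDegree →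
      Module.finrank ℚ K = D → |((absDiscr K hK : ℤ) : ℝ)| ≤ C * R ^ (D ^ 2) := by
  classical
  have : NumberField k := ⟨⟩
  have hA1 : (1 : ℝ) ≤ |(A : ℝ)| := by exact_mod_cast Int.one_le_abs hA
  obtain ⟨ι, _, κ, hκ⟩ : ∃ (ι : Type) (_ : Fintype ι) (κ : Module.Basis ι ℚ k),
      ∀ i, IsIntegral ℤ (κ i) :=
    ⟨_, inferInstance, NumberField.integralBasis k, fun i => by
      rw [NumberField.integralBasis_apply]
      exact NumberField.RingOfIntegers.isIntegral_coe _⟩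
  obtain ⟨Ck, hCk1, hCk⟩ := exists_Bd_finset (Finset.univ.image fun i => (κ i : Qbar))
  refine ⟨(D.factorial * Ck ^ D) ^ 2 * |(A : ℝ)| ^ (D ^ 2), by positivity,
    fun R hR K hK hkK t ht hinteg hB hdeg hD => ?_⟩
  have : NumberField K := ⟨⟩
  set Dk := (minpoly k t).natDegree with hDk
  have hιcard : Fintype.card ι = Module.finrank ℚ k := (Module.finrank_eq_card_basis κ).symm
  have hA0 : (A : k) ≠ 0 := by exact_mod_cast hA
  -- products of an integral basis of `k` with the powers of `A t`
  let v : ι × Fin Dk → K := fun ij =>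
    ⟨(κ ij.1 : Qbar) * ((A : Qbar) * t) ^ (ij.2 : ℕ),
      mul_mem (hkK (κ ij.1).2) (pow_mem (mul_mem (by simp) ht) _)⟩
  have hli : LinearIndependent ℚ v := by
    have h1 : LinearIndependent k fun j : Fin Dk => ((A : Qbar) * t) ^ (j : ℕ) := by
      have h2 := (linearIndependent_pow (K := k) t).units_smul
        (w := fun j => (Units.mk0 (A : k) hA0) ^ (j : ℕ))
      have h4 : ((fun j : Fin Dk => (Units.mk0 (A : k) hA0) ^ (j : ℕ)) • fun i : Fin Dk => t ^ (i : ℕ)) =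
          fun j : Fin Dk => ((A : Qbar) * t) ^ (j : ℕ) := by
       ext j
       rw [mul_pow, Pi.smul_apply', Units.smul_def, Algebra.smul_def]
       simp
      rw [← h4]
      exact h2
    have h3 := linearIndependent_smul (R := ℚ) κ.linearIndependent h1
    refine LinearIndependent.of_comp K.val.toLinearMap ?_
    have h5 : K.val.toLinearMap ∘ v = fun p => κ p.1 • ((A : Qbar) * t) ^ (p.2 : ℕ) := by
      ext p
      rw [Algebra.smul_def]
      rfl
    rw [h5]
    exact h3
  have hcard : Fintype.card (ι × Fin Dk) = Module.finrank ℚ K := by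
    rw [Fintype.card_prod, Fintype.card_fin, hιcard, hdeg]
  have hne : Nonempty (ι × Fin Dk) := by
    rw [← Fintype.card_pos_iff, hcard]; exact Module.finrank_pos
  set bv := basisOfLinearIndependentOfCardEqFinrank hli hcard with hbv
  have hbva : ∀ i, bv i = v i := fun i => by rw [hbv, coe_basisOfLinearIndependentOfCardEqFinrank]
  have hAR : 1 ≤ |(A : ℝ)| * R := one_le_mul_of_one_le_of_one_le hA1 hR
  have hext : ∀ φ : K →+* ℂ, ∃ ψ : Qbar →+* ℂ, ∀ x : K, ψ x = φ x := by
    intro φ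
    let _ : Algebra K ℂ := φ.toAlgebra
    have : Algebra.IsAlgebraic K Qbar := Algebra.IsAlgebraic.tower_top (K := ℚ) K
    let ψ : Qbar →ₐ[K] ℂ := IsAlgClosed.lift
    exact ⟨ψ.toRingHom, fun x => ψ.commutes x⟩
  have hmain := abs_discr_le K bv (fun i => by
      rw [hbva]
      have : IsIntegral ℤ (algebraMap K Qbar (v i)) := by
        refine IsIntegral.mul ?_ (hinteg.pow _)
        exact (hκ i.1).map (algebraMap k Qbar).toIntAlgHom
      exact (isIntegral_algebraMap_iff (algebraMap K Qbar).injective).1 this)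
    (fun ij => Ck * (|(A : ℝ)| * R) ^ (ij.2 : ℕ)) (fun φ ij => by
      obtain ⟨ψ, hψ⟩ := hext φ
      rw [hbva, ← hψ]
      simp only [v]
      rw [map_mul, map_pow, norm_mul, norm_pow]
      refine mul_le_mul ?_ ?_ (by positivity) (by positivity)
      · exact hCk _ (Finset.mem_image_of_mem _ (Finset.mem_univ _)) ψ
      · exact pow_le_pow_left₀ (norm_nonneg _) (hB.mul_int A ψ) _)
  have hdisc : absDiscr K hK = NumberField.discr K := rfl
  rw [hdisc]
  refine hmain.trans ?_
  rw [hcard, hD, Finset.prod_mul_distrib, Finset.prod_const, Finset.card_univ, hcard, hD,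
    Finset.prod_pow_eq_pow_sum, ← mul_assoc, mul_pow, ← pow_mul]
  rw [mul_assoc, ← mul_pow]
  refine mul_le_mul_of_nonneg_left (pow_le_pow_right₀ hAR ?_) (by positivity)
  have h1 : ∑ ij : ι × Fin Dk, (ij.2 : ℕ) = Fintype.card ι * ∑ j : Fin Dk, (j : ℕ) := by
    simp [Fintype.sum_prod_type]
  have h2 : (∑ j : Fin Dk, (j : ℕ)) * 2 = Dk * (Dk - 1) := by
    rw [Fin.sum_univ_eq_sum_range (fun j => j) Dk, Finset.sum_range_id_mul_two]
  rw [h1, mul_assoc, h2, ← hD, hdeg, hιcard]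
  have h3 : 0 < Module.finrank ℚ k := Module.finrank_pos
  have h4 : Dk * (Dk - 1) ≤ Dk * Dk := Nat.mul_le_mul_left _ (Nat.sub_le _ _)
  nlinarith [Nat.mul_le_mul_left (Module.finrank ℚ k) h4, Nat.mul_le_mul_right (Module.finrank ℚ k * (Dk * Dk)) h3]

/-! ### Heights and denominators of common zeros -/

theorem evalEval_eq_sum {R : Type*} [CommRing R] (P : Polynomial (Polynomial R)) (t y : R) :
    P.evalEval t y = ∑ j ∈ P.support, (P.coeff j).eval t * y ^ j := by
  rw [Polynomial.evalEval, Polynomial.eval_eq_sum (p := P), Polynomial.sum_def, Polynomial.eval_finsetSum]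
  simp

/-- Growth of a polynomial at points of absolute value at least `1`, uniformly in the embedding. -/
theorem uni_bound (a : Polynomial Qbar) (M : ℕ) (h : a.natDegree ≤ M) :
    ∃ C : ℝ, 0 ≤ C ∧ ∀ (ψ : Qbar →+* ℂ) (t : Qbar), 1 ≤ ‖ψ t‖ → ‖ψ (a.eval t)‖ ≤ C * ‖ψ t‖ ^ M := by
  choose R hR using exists_Bd
  have hR0 : ∀ x, 0 ≤ R x := fun x =>
    (norm_nonneg _).trans (hR x (IsAlgClosed.lift (R := ℚ) (M := ℂ) (S := Qbar)).toRingHom)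
  refine ⟨∑ i ∈ Finset.range (M + 1), R (a.coeff i), Finset.sum_nonneg fun i _ => hR0 _,
    fun ψ t ht => ?_⟩
  rw [Polynomial.eval_eq_sum_range' (Nat.lt_succ_of_le h), map_sum, Finset.sum_mul]
  refine (norm_sum_le _ _).trans (Finset.sum_le_sum fun i hi => ?_)
  rw [map_mul, map_pow, norm_mul, norm_pow]
  refine mul_le_mul (hR _ ψ) (pow_le_pow_right₀ ht ?_) (by positivity) (hR0 _)
  exact Nat.lt_succ_iff.1 (Finset.mem_range.1 hi)

/-- Growth of a bivariate polynomial of weighted degree at most `M`, where `y` has weight `κ`. -/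
theorem bi_bound (P : Polynomial (Polynomial Qbar)) (M κ : ℕ) (C0 : ℝ) (hC0 : 0 ≤ C0)
    (h : ∀ j ∈ P.support, (P.coeff j).natDegree + κ * j ≤ M) :
    ∃ C : ℝ, 0 ≤ C ∧ ∀ (ψ : Qbar →+* ℂ) (t y : Qbar), 1 ≤ ‖ψ t‖ → ‖ψ y‖ ≤ C0 * ‖ψ t‖ ^ κ →
      ‖ψ (P.evalEval t y)‖ ≤ C * ‖ψ t‖ ^ M := by
  choose R hR0 hR using fun j => uni_bound (P.coeff j) (P.coeff j).natDegree le_rfl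
  refine ⟨∑ j ∈ P.support, R j * C0 ^ j, Finset.sum_nonneg fun j _ => mul_nonneg (hR0 j)
    (pow_nonneg hC0 _), fun ψ t y ht hy => ?_⟩
  rw [evalEval_eq_sum, map_sum, Finset.sum_mul]
  refine (norm_sum_le _ _).trans (Finset.sum_le_sum fun j hj => ?_)
  rw [map_mul, map_pow, norm_mul, norm_pow]
  calc ‖ψ ((P.coeff j).eval t)‖ * ‖ψ y‖ ^ j
      ≤ (R j * ‖ψ t‖ ^ (P.coeff j).natDegree) * (C0 * ‖ψ t‖ ^ κ) ^ j :=
        mul_le_mul (hR j ψ t ht) (pow_le_pow_left₀ (norm_nonneg _) hy _) (by positivity)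
          (mul_nonneg (hR0 j) (by positivity))
    _ = R j * C0 ^ j * ‖ψ t‖ ^ ((P.coeff j).natDegree + κ * j) := by
        rw [mul_pow, pow_add, pow_mul]; ring
    _ ≤ R j * C0 ^ j * ‖ψ t‖ ^ M :=
        mul_le_mul_of_nonneg_left (pow_le_pow_right₀ ht (h j hj))
          (mul_nonneg (hR0 j) (pow_nonneg hC0 _))

/-- On a curve monic in `y`, the ordinate grows polynomially in the abscissa. -/
theorem y_bound (Φ : Polynomial (Polynomial Qbar)) (hΦ : Φ.Monic) :
    ∃ κ : ℕ, ∃ C0 : ℝ, 0 ≤ C0 ∧ ∀ (ψ : Qbar →+* ℂ) (t y : Qbar), Φ.evalEval t y = 0 →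
      1 ≤ ‖ψ t‖ → ‖ψ y‖ ≤ C0 * ‖ψ t‖ ^ κ := by
  set e := Φ.natDegree with he
  set κ := ∑ j ∈ Finset.range e, (Φ.coeff j).natDegree with hκ
  choose R hR0 hR using fun j => uni_bound (Φ.coeff j) (Φ.coeff j).natDegree le_rfl
  set S := ∑ j ∈ Finset.range e, R j with hS
  have hS0 : 0 ≤ S := Finset.sum_nonneg fun j _ => hR0 j
  refine ⟨κ, 1 + S, by positivity, fun ψ t y h0 ht => ?_⟩
  have hT : 1 ≤ ‖ψ t‖ ^ κ := one_le_pow₀ ht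
  rcases le_total ‖ψ y‖ 1 with hy | hy
  · nlinarith [norm_nonneg (ψ y)]
  have h1 : ψ y ^ e = - ∑ j ∈ Finset.range e, ψ ((Φ.coeff j).eval t) * ψ y ^ j := by
    have h2 := h0
    rw [Polynomial.evalEval, Polynomial.eval_eq_sum_range (p := Φ), Polynomial.eval_finsetSum,
      Finset.sum_range_succ] at h2
    have h3 := congrArg ψ h2
    simp only [Polynomial.eval_mul, Polynomial.eval_pow, Polynomial.eval_C] at h3
    rw [hΦ.coeff_natDegree] at h3
    simp only [Polynomial.eval_one, one_mul, map_add, map_sum, map_mul, map_pow, map_zero] at h3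
    rw [← he] at h3
    linear_combination h3
  rcases Nat.eq_zero_or_pos e with he0 | he0
  · rw [he0] at h1
    simp at h1
  have h4 : ‖ψ y‖ ^ e ≤ (S * ‖ψ t‖ ^ κ) * ‖ψ y‖ ^ (e - 1) := by
    rw [← norm_pow, h1, norm_neg, hS, Finset.sum_mul, Finset.sum_mul]
    refine (norm_sum_le _ _).trans (Finset.sum_le_sum fun j hj => ?_)
    rw [norm_mul, norm_pow]
    refine mul_le_mul ((hR j ψ t ht).trans ?_) (pow_le_pow_right₀ hy ?_) (by positivity)
      (mul_nonneg (hR0 j) (by positivity))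
    · refine mul_le_mul_of_nonneg_left (pow_le_pow_right₀ ht ?_) (hR0 j)
      exact Finset.single_le_sum (f := fun j => (Φ.coeff j).natDegree) (fun _ _ => Nat.zero_le _) hj
    · have := Finset.mem_range.1 hj; omega
  have h5 : ‖ψ y‖ ^ e = ‖ψ y‖ * ‖ψ y‖ ^ (e - 1) := by
    rw [← pow_succ']; congr 1; omega
  rw [h5] at h4
  have h6 := le_of_mul_le_mul_right h4 (by positivity)
  nlinarith

/-- The polynomial `∑ z_i X^(n-1-i)`. -/
def zpoly (n : ℕ) (z : Fin n → ℕ) : Polynomial ℤ :=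
  ∑ i : Fin n, Polynomial.monomial (n - 1 - (i : ℕ)) (z i : ℤ)

/-- The polynomial `X^n + p ∑ z_i X^(n-1-i)`. -/
def zfull (n p : ℕ) (z : Fin n → ℕ) : Polynomial ℤ :=
  Polynomial.X ^ n + Polynomial.C (p : ℤ) * zpoly n z

theorem eval_zpoly {R : Type*} [CommRing R] (n : ℕ) (z : Fin n → ℕ) (t : R) :
    ((zpoly n z).map (Int.castRingHom R)).eval t = ∑ i : Fin n, (z i : R) * t ^ (n - 1 - (i : ℕ)) := by
  simp [zpoly, Polynomial.map_sum, Polynomial.eval_finsetSum]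

/-- The conjugates of abscissas of the common zeros grow at most linearly with the size of the
parameters. -/
theorem exists_house_bound (Φ R : Polynomial (Polynomial Qbar)) (q : Polynomial Qbar) (hq : q.Monic)
    (κ n p : ℕ) (hp : 0 < p) (C0 : ℝ) (hC0 : 0 ≤ C0)
    (hκ : ∀ (ψ : Qbar →+* ℂ) (t y : Qbar), Φ.evalEval t y = 0 →
      1 ≤ ‖ψ t‖ → ‖ψ y‖ ≤ C0 * ‖ψ t‖ ^ κ) (hn : 0 < n)
    (hR : ∀ j ∈ R.support, (R.coeff j).natDegree + κ * j + 1 ≤ q.natDegree + n) :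
    ∃ C1 : ℝ, 1 ≤ C1 ∧ ∀ H : ℝ, 1 ≤ H → ∀ z : Fin n → ℕ, (∀ i, (z i : ℝ) ≤ H ^ ((i : ℕ) + 1)) →
      ∀ t y : Qbar, Φ.evalEval t y = 0 →
      q.eval t * (p * ((zfull n p z).map (Int.castRingHom Qbar)).eval t) + R.evalEval t y = 0 →
      Bd t (C1 * H) := by
  set B := q.natDegree with hB
  obtain ⟨Ca, hCa0, hCa⟩ := bi_bound R (B + n - 1) κ C0 hC0 (fun j hj => by have := hR j hj; omega)
  obtain ⟨Cb, hCb0, hCb⟩ := uni_bound ((q - Polynomial.X ^ B) * Polynomial.X ^ n) (B + n - 1) (by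
    rcases Nat.eq_zero_or_pos B with h0 | h0
    · have : q = 1 := by
        exact hq.natDegree_eq_zero.1 h0
      simp [this, h0]
    · have hlt : (q - Polynomial.X ^ B).natDegree < B := by
        have h1 : (q - Polynomial.X ^ B).degree < q.degree := by
          refine Polynomial.degree_sub_lt_left ?_ hq.ne_zero ?_
          · rw [Polynomial.degree_X_pow, Polynomial.degree_eq_natDegree hq.ne_zero]
          · rw [hq.leadingCoeff, (Polynomial.monic_X_pow B).leadingCoeff]
        rcases eq_or_ne (q - Polynomial.X ^ B) 0 with h2 | h2
        · rw [h2]; simpa using h0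
        · exact Polynomial.natDegree_lt_natDegree h2 h1
      refine Polynomial.natDegree_mul_le.trans ?_
      rw [Polynomial.natDegree_X_pow]
      omega)
  obtain ⟨Cq, hCq0, hCq⟩ := uni_bound q B le_rfl
  refine ⟨1 + Ca + p * Cb + Cq * p ^ 2 * n, ?_, fun H hH z hz t y h0 h1 ψ => ?_⟩
  · have : 0 ≤ p * Cb := by positivity
    have : 0 ≤ Cq * p ^ 2 * n := by positivity
    linarith
  set C1 := 1 + Ca + p * Cb + Cq * p ^ 2 * n with hC1
  have hC11 : 1 ≤ C1 := by
    have : 0 ≤ p * Cb := by positivity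
    have : 0 ≤ Cq * p ^ 2 * n := by positivity
    linarith
  by_contra hlt
  push Not at hlt
  set T := ‖ψ t‖ with hT
  have hHT : H ≤ T := by nlinarith
  have hT1 : 1 ≤ T := hH.trans hHT
  have hy := hκ ψ t y h0 hT1
  -- isolate the dominant monomial
  have h2 : (p : Qbar) * t ^ (B + n) = -(R.evalEval t y) -
      p * (((q - Polynomial.X ^ B) * Polynomial.X ^ n).eval t) -
      q.eval t * (p ^ 2 * ∑ i : Fin n, (z i : Qbar) * t ^ (n - 1 - (i : ℕ))) := by
    rw [zfull, Polynomial.map_add, Polynomial.map_mul, Polynomial.eval_add, Polynomial.eval_mul,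
      eval_zpoly] at h1
    simp only [Polynomial.map_pow, Polynomial.map_X, Polynomial.eval_pow,
      Polynomial.eval_X, map_natCast, Polynomial.map_natCast,
      Polynomial.eval_natCast] at h1
    simp only [Polynomial.eval_mul, Polynomial.eval_sub, Polynomial.eval_pow, Polynomial.eval_X]
    rw [pow_add]
    linear_combination h1
  have h3 : (p : ℝ) * T ^ (B + n) ≤ Ca * T ^ (B + n - 1) + p * (Cb * T ^ (B + n - 1)) +
      (Cq * T ^ B) * (p ^ 2 * (n * (H * T ^ (n - 1)))) := by
    have h4 : (p : ℝ) * T ^ (B + n) = ‖ψ ((p : Qbar) * t ^ (B + n))‖ := by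
      rw [map_mul, map_pow, norm_mul, norm_pow, map_natCast, Complex.norm_natCast]
    rw [h4, h2, map_sub, map_sub, map_neg]
    refine (norm_sub_le _ _).trans (add_le_add ((norm_sub_le _ _).trans (add_le_add ?_ ?_)) ?_)
    · rw [norm_neg]; exact hCa ψ t y hT1 hy
    · rw [map_mul, norm_mul, map_natCast, Complex.norm_natCast]
      exact mul_le_mul_of_nonneg_left (hCb ψ t hT1) (by positivity)
    · rw [map_mul, norm_mul]
      refine mul_le_mul (hCq ψ t hT1) ?_ (norm_nonneg _) (by positivity)
      rw [map_mul, norm_mul, map_pow, norm_pow, map_natCast, Complex.norm_natCast]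
      refine mul_le_mul_of_nonneg_left ?_ (by positivity)
      rw [map_sum]
      refine (norm_sum_le _ _).trans ((Finset.sum_le_card_nsmul _ _ (H * T ^ (n - 1)) ?_).trans_eq ?_)
      · intro i _
        rw [map_mul, map_pow, norm_mul, norm_pow, map_natCast, Complex.norm_natCast]
        calc (z i : ℝ) * T ^ (n - 1 - (i : ℕ)) ≤ H ^ ((i : ℕ) + 1) * T ^ (n - 1 - (i : ℕ)) := by
              gcongr; exact hz i
          _ = H * (H ^ (i : ℕ) * T ^ (n - 1 - (i : ℕ))) := by ring
          _ ≤ H * (T ^ (i : ℕ) * T ^ (n - 1 - (i : ℕ))) := by gcongr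
          _ = H * T ^ (n - 1) := by rw [← pow_add]; congr 2; omega
      · simp
  have h5 : T ^ (B + n) = T * T ^ (B + n - 1) := by rw [← pow_succ']; congr 1; omega
  have h6 : T ^ B * T ^ (n - 1) = T ^ (B + n - 1) := by rw [← pow_add]; congr 1; omega
  have h7 : (p : ℝ) * T * T ^ (B + n - 1) ≤
      (Ca + p * Cb + Cq * p ^ 2 * n * H) * T ^ (B + n - 1) := by
    calc (p : ℝ) * T * T ^ (B + n - 1) = p * T ^ (B + n) := by rw [h5]; ring
      _ ≤ _ := h3
      _ = (Ca + p * Cb + Cq * p ^ 2 * n * H) * T ^ (B + n - 1) := by rw [← h6]; ring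
  have h8 := le_of_mul_le_mul_right h7 (by positivity)
  have hp1 : (1 : ℝ) ≤ p := by exact_mod_cast hp
  have h9 : T ≤ p * T := by nlinarith
  have h10 : Ca + p * Cb ≤ (Ca + p * Cb) * H := by
    refine le_mul_of_one_le_right (by positivity) hH
  nlinarith

/-- A denominator for the abscissas of the common zeros of `Φ` and `q Q + R`, depending on `Q` only
through the leading coefficient `L` of the norm. -/
theorem exists_den (Φ R : Polynomial (Polynomial Qbar)) (q : Polynomial Qbar) (b : ℕ) :
    ∃ m : ℤ, m ≠ 0 ∧ ∀ (Q : Polynomial ℤ) (L : ℤ),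
      (Polynomial.resultant Φ (Polynomial.C (q * Q.map (Int.castRingHom Qbar)) + R)
        Φ.natDegree b).leadingCoeff = L → ∀ t : Qbar,
      (Polynomial.resultant Φ (Polynomial.C (q * Q.map (Int.castRingHom Qbar)) + R)
        Φ.natDegree b).eval t = 0 → IsIntegral ℤ (((m * L : ℤ) : Qbar) * t) := by
  classical
  have : Algebra.IsAlgebraic ℤ Qbar := (IsFractionRing.comap_isAlgebraic_iff (K := ℚ)).2 inferInstance
  obtain ⟨m, hm0, hm⟩ := Algebra.IsAlgebraic.exists_integral_multiples ℤ
    (coeffs₂ Φ ∪ coeffs₂ R ∪ coeffs₂ (Polynomial.C q))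
  set O : Subring Qbar := (integralClosure ℤ Qbar).toSubring with hO
  have hmem : ∀ x, x ∈ O ↔ IsIntegral ℤ x := fun x => Iff.rfl
  have hlift : ∀ P : Polynomial (Polynomial Qbar), coeffs₂ P ⊆
      coeffs₂ Φ ∪ coeffs₂ R ∪ coeffs₂ (Polynomial.C q) →
      ∃ P' : Polynomial (Polynomial O), P'.map (Polynomial.mapRingHom O.subtype) =
        Polynomial.C (Polynomial.C (m : Qbar)) * P := by
    intro P hP
    refine exists_lift₂ O _ fun i j => ?_
    rw [Polynomial.coeff_C_mul, Polynomial.coeff_C_mul, hmem]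
    have := hm _ (hP (mem_coeffs₂ P i j))
    rwa [zsmul_eq_mul] at this
  obtain ⟨Φ', hΦ'⟩ := hlift Φ (fun x hx => by simp [hx])
  obtain ⟨R', hR'⟩ := hlift R (fun x hx => by simp [hx])
  obtain ⟨q', hq'⟩ := hlift (Polynomial.C q) (fun x hx => by simp [hx])
  refine ⟨m ^ (b + Φ.natDegree), pow_ne_zero _ hm0, fun Q L hL t ht => ?_⟩
  set u := Polynomial.C (q * Q.map (Int.castRingHom Qbar)) + R with hu
  set u' : Polynomial (Polynomial O) := q' * Polynomial.C (Q.map (Int.castRingHom O)) + R' with hu'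
  have huu : u'.map (Polynomial.mapRingHom O.subtype) = Polynomial.C (Polynomial.C (m : Qbar)) * u := by
    have h2 : (Q.map (Int.castRingHom O)).map O.subtype = Q.map (Int.castRingHom Qbar) := by
      rw [Polynomial.map_map]
      congr 1
    rw [hu', hu, Polynomial.map_add, Polynomial.map_mul, hq', hR', Polynomial.map_C,
      Polynomial.coe_mapRingHom, h2]
    simp only [map_mul]
    ring
  have hres : (Polynomial.resultant Φ' u' Φ.natDegree b).map O.subtype =
      Polynomial.C (((m ^ (b + Φ.natDegree) : ℤ)) : Qbar) * Polynomial.resultant Φ u Φ.natDegree b := by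
    rw [← Polynomial.coe_mapRingHom, ← Polynomial.resultant_map_map, hΦ', huu,
      Polynomial.resultant_C_mul_left, Polynomial.resultant_C_mul_right, ← mul_assoc, ← pow_add]
    push_cast
    rw [map_pow]
  set P := Polynomial.resultant Φ' u' Φ.natDegree b with hP
  have hlead : O.subtype P.leadingCoeff = ((m ^ (b + Φ.natDegree) * L : ℤ) : Qbar) := by
    rw [← Polynomial.leadingCoeff_map_of_injective O.subtype_injective, hres,
      Polynomial.leadingCoeff_mul, Polynomial.leadingCoeff_C, hL]
    push_cast; ring
  have hroot : Polynomial.aeval t P = 0 := by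
    rw [Polynomial.aeval_def, ← Polynomial.eval_map]
    have : algebraMap O Qbar = O.subtype := rfl
    rw [this, hres, Polynomial.eval_mul, ht, mul_zero]
  have hinteg := isIntegral_leadingCoeff_smul P t hroot
  rw [Algebra.smul_def] at hinteg
  have h3 : algebraMap O Qbar P.leadingCoeff = ((m ^ (b + Φ.natDegree) * L : ℤ) : Qbar) := hlead
  rw [h3] at hinteg
  have : Algebra.IsIntegral ℤ O := by
    refine ⟨fun x => ?_⟩
    have hx : IsIntegral ℤ (O.subtype x) := x.2
    exact (isIntegral_algebraMap_iff (B := Qbar) O.subtype_injective).1 hx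
  exact isIntegral_trans _ hinteg

/-! ### Irreducibility of the residual intersection -/

theorem dvd_of_map_dvd (k : IntermediateField ℚ Qbar) (a b : Polynomial k)
    (h : a.map (algebraMap k Qbar) ∣ b.map (algebraMap k Qbar)) : a ∣ b :=
  (Polynomial.map_dvd_map' _).1 h

theorem natDegree_minpoly_le (k : IntermediateField ℚ Qbar) (ρ : Polynomial k) (hρ : ρ ≠ 0) (t : Qbar)
    (h : (ρ.map (algebraMap k Qbar)).eval t = 0) : (minpoly k t).natDegree ≤ ρ.natDegree := by
  refine Polynomial.natDegree_le_of_dvd (minpoly.dvd k t ?_) hρ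
  rwa [Polynomial.aeval_def, ← Polynomial.eval_map]

/-- A norm with a large irreducible factor and no zeros of low degree is `q` times an irreducible
polynomial. -/
theorem irreducible_cofactor (k : IntermediateField ℚ Qbar)
    (Φ W : Polynomial (Polynomial k)) (hΦ : Φ.Monic) (q s : Polynomial k) (hq : q ≠ 0)
    (c : ℕ) (hc : q.natDegree < c) (p : k) (hp : p ≠ 0) {b : ℕ}
    (u : Polynomial (Polynomial k)) (hu : u = Polynomial.C q * W + Polynomial.C (Polynomial.C p) *
      (Polynomial.X - Polynomial.C s) ^ c) (hb : u.natDegree ≤ b)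
    (h : ∀ τ : Qbar, (q.map (algebraMap k Qbar)).eval τ = 0 →
      (Φ.map (Polynomial.mapRingHom (algebraMap k Qbar))).evalEval τ
        ((s.map (algebraMap k Qbar)).eval τ) = 0 ∧
      (Polynomial.derivative (Φ.map (Polynomial.mapRingHom (algebraMap k Qbar)))).evalEval τ
        ((s.map (algebraMap k Qbar)).eval τ) ≠ 0 ∧
      (W.map (Polynomial.mapRingHom (algebraMap k Qbar))).evalEval τ
        ((s.map (algebraMap k Qbar)).eval τ) ≠ 0)
    (hN : Polynomial.resultant Φ u Φ.natDegree b ≠ 0) (π : Polynomial k) (hπ : Irreducible π)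
    (hπN : π ∣ Polynomial.resultant Φ u Φ.natDegree b) (hπq : q.natDegree < π.natDegree) (B1 : ℕ)
    (hπ1 : (Polynomial.resultant Φ u Φ.natDegree b).natDegree ≤ q.natDegree + π.natDegree + B1)
    (hlow : ∀ t : Qbar, ((Polynomial.resultant Φ u Φ.natDegree b).map (algebraMap k Qbar)).eval t = 0 →
      (q.map (algebraMap k Qbar)).eval t ≠ 0 → B1 < (minpoly k t).natDegree) :
    ∃ F : Polynomial k, Polynomial.resultant Φ u Φ.natDegree b = q * F ∧ Irreducible F ∧
      ∀ τ : Qbar, (q.map (algebraMap k Qbar)).eval τ = 0 → (F.map (algebraMap k Qbar)).eval τ ≠ 0 := by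
  set ι := algebraMap k Qbar with hι
  set N := Polynomial.resultant Φ u Φ.natDegree b with hNd
  have hNQ : Polynomial.resultant (Φ.map (Polynomial.mapRingHom ι)) (u.map (Polynomial.mapRingHom ι))
      (Φ.map (Polynomial.mapRingHom ι)).natDegree b = N.map ι := by
    rw [hΦ.natDegree_map, Polynomial.resultant_map_map, Polynomial.coe_mapRingHom]
  have huQ : u.map (Polynomial.mapRingHom ι) = Polynomial.C (q.map ι) *
      W.map (Polynomial.mapRingHom ι) + Polynomial.C (Polynomial.C (ι p)) *
      (Polynomial.X - Polynomial.C (s.map ι)) ^ c := by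
    rw [hu]
    simp only [Polynomial.map_add, Polynomial.map_mul, Polynomial.map_pow, Polynomial.map_sub,
      Polynomial.map_X, Polynomial.map_C, Polynomial.coe_mapRingHom]
  have hbQ : (u.map (Polynomial.mapRingHom ι)).natDegree ≤ b := Polynomial.natDegree_map_le.trans hb
  have hN0 : N.map ι ≠ 0 := (Polynomial.map_ne_zero_iff ι.injective).2 hN
  rw [huQ] at hNQ hbQ
  obtain ⟨F', hF', hF'0⟩ := norm_eq_mul (Φ.map (Polynomial.mapRingHom ι))
    (W.map (Polynomial.mapRingHom ι)) (hΦ.map _) (q.map ι) (s.map ι)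
    ((Polynomial.map_ne_zero_iff ι.injective).2 hq) c (by rwa [Polynomial.natDegree_map]) (ι p)
    ((map_ne_zero ι).2 hp) hbQ h (by rw [hNQ]; exact hN0)
  rw [hNQ] at hF'
  obtain ⟨F, hF⟩ := dvd_of_map_dvd k q N (Dvd.intro _ hF'.symm)
  have hFF : F.map ι = F' := by
    have h1 := hF'
    rw [hF, Polynomial.map_mul] at h1
    exact mul_left_cancel₀ ((Polynomial.map_ne_zero_iff ι.injective).2 hq) h1
  refine ⟨F, hF, ?_, by rw [hFF]; exact hF'0⟩
  have hπF : π ∣ F := by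
    rw [hF] at hπN
    rcases hπ.prime.dvd_or_dvd hπN with h1 | h1
    · have := Polynomial.natDegree_le_of_dvd h1 hq
      omega
    · exact h1
  obtain ⟨ρ, hρ⟩ := hπF
  have hρ0 : ρ ≠ 0 := by
    rintro rfl
    rw [hF, hρ, mul_zero, mul_zero] at hN
    exact hN rfl
  have hdeg : N.natDegree = q.natDegree + (π.natDegree + ρ.natDegree) := by
    rw [hF, hρ, Polynomial.natDegree_mul hq (mul_ne_zero hπ.ne_zero hρ0),
      Polynomial.natDegree_mul hπ.ne_zero hρ0]
  have hunit : IsUnit ρ := by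
    by_contra hnu
    have hd : (ρ.map ι).degree ≠ 0 := by
      rw [Polynomial.degree_map]
      intro h0
      exact hnu (Polynomial.isUnit_iff_degree_eq_zero.2 h0)
    obtain ⟨t, ht⟩ := IsAlgClosed.exists_root (ρ.map ι) hd
    have ht' : (ρ.map ι).eval t = 0 := ht
    have h1 : (N.map ι).eval t = 0 := by
      rw [hF, hρ]
      simp [Polynomial.map_mul, ht']
    have h2 : (q.map ι).eval t ≠ 0 := by
      intro h3
      refine hF'0 t h3 ?_
      rw [← hFF, hρ]
      simp [Polynomial.map_mul, ht']
    have h4 := hlow t h1 h2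
    have h5 := natDegree_minpoly_le k ρ hρ0 t ht'
    omega
  rw [hρ]
  exact (irreducible_mul_isUnit hunit).2 hπ

/-- The ordinate of a common zero over a simple zero of the norm is rational over the field generated
by the abscissa. -/
theorem y_mem_adjoin (k : IntermediateField ℚ Qbar)
    (Φ u : Polynomial (Polynomial k)) (hΦ : Φ.Monic) {b : ℕ} (hb : u.natDegree ≤ b)
    (q F : Polynomial k) (hF : Irreducible F) (hqF : Polynomial.resultant Φ u Φ.natDegree b = q * F)
    (t y : Qbar)
    (hqt : (q.map (algebraMap k Qbar)).eval t ≠ 0)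
    (hy : (Φ.map (Polynomial.mapRingHom (algebraMap k Qbar))).evalEval t y = 0)
    (hy1 : (Polynomial.derivative
      (Φ.map (Polynomial.mapRingHom (algebraMap k Qbar)))).evalEval t y ≠ 0)
    (hu : (u.map (Polynomial.mapRingHom (algebraMap k Qbar))).evalEval t y = 0) :
    y ∈ IntermediateField.adjoin k {t} := by
  set ι := algebraMap k Qbar with hι
  set K := IntermediateField.adjoin k {t} with hK
  have hchar : CharZero k := algebraRat.charZero k
  have : Algebra.IsAlgebraic k Qbar := Algebra.IsAlgebraic.tower_top (K := ℚ) k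
  have : Algebra.IsAlgebraic K Qbar := Algebra.IsAlgebraic.tower_top (K := k) K
  have : CharZero K := algebraRat.charZero K
  have : IsAlgClosure K Qbar := ⟨inferInstance, inferInstance⟩
  have : IsGalois K Qbar := inferInstance
  have hbot : y ∈ (⊥ : IntermediateField K Qbar) := by
    rw [InfiniteGalois.mem_bot_iff_fixed]
    intro σ
    by_contra hne
    have hσ : ∀ x : k, σ (ι x) = ι x := fun x => by
      exact σ.commutes (algebraMap k K x)
    have hσt : σ t = t := σ.commutes ⟨t, IntermediateField.mem_adjoin_simple_self k t⟩
    have hconj : ∀ P : Polynomial (Polynomial k), (P.map (Polynomial.mapRingHom ι)).evalEval t y = 0 →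
        (P.map (Polynomial.mapRingHom ι)).evalEval t (σ y) = 0 := by
      intro P hP
      have h1 := Polynomial.map_mapRingHom_evalEval (σ : Qbar →+* Qbar)
        (P.map (Polynomial.mapRingHom ι)) t y
      have h2 : (P.map (Polynomial.mapRingHom ι)).map (Polynomial.mapRingHom (σ : Qbar →+* Qbar)) =
          P.map (Polynomial.mapRingHom ι) := by
        rw [Polynomial.map_map]
        congr 1
        refine Polynomial.ringHom_ext' (RingHom.ext fun x => ?_) ?_
        · simpa using hσ x
        · simp
      rw [h2, hP, map_zero] at h1
      simpa [hσt] using h1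
    have hNQ : Polynomial.resultant (Φ.map (Polynomial.mapRingHom ι))
        (u.map (Polynomial.mapRingHom ι)) (Φ.map (Polynomial.mapRingHom ι)).natDegree b =
        q.map ι * F.map ι := by
      rw [hΦ.natDegree_map, Polynomial.resultant_map_map, Polynomial.coe_mapRingHom, hqF,
        Polynomial.map_mul]
    have hd := norm_double_root (Φ.map (Polynomial.mapRingHom ι)) (u.map (Polynomial.mapRingHom ι))
      (hΦ.map _) (Polynomial.natDegree_map_le.trans hb) t y (σ y) hy hy1 hu hne (hconj Φ hy) (hconj u hu)
    rw [hNQ] at hd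
    have hcop : IsCoprime ((Polynomial.X - Polynomial.C t) ^ 2) (q.map ι) := by
      refine IsCoprime.pow_left ?_
      refine (Polynomial.irreducible_X_sub_C t).coprime_iff_not_dvd.2 ?_
      rw [Polynomial.dvd_iff_isRoot]; exact hqt
    have hd2 := hcop.dvd_of_dvd_mul_left hd
    have hsep : (F.map ι).Separable := hF.separable.map
    have hsq := hsep.squarefree
    have := hsq (Polynomial.X - Polynomial.C t) (by rwa [← pow_two])
    exact (Polynomial.irreducible_X_sub_C t).not_isUnit this
  rw [IntermediateField.mem_bot] at hbot
  obtain ⟨x, hx⟩ := hbot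
  rw [← hx]
  exact x.2

/-! ### The parameter box -/

/-- The parameter box `0 ≤ z_i < H^(i+1)`. -/
def zbox (n H : ℕ) : Finset (Fin n → ℕ) :=
  Fintype.piFinset fun i : Fin n => Finset.range (H ^ ((i : ℕ) + 1))

theorem card_zbox_succ (n H : ℕ) : (zbox (n + 1) H).card = (zbox n H).card * H ^ (n + 1) := by
  simp only [zbox, Fintype.card_piFinset, Finset.card_range]
  rw [Fin.prod_univ_castSucc]
  simp

theorem card_zbox (n H : ℕ) : (zbox n H).card = H ^ (n * (n + 1) / 2) := by
  simp only [zbox, Fintype.card_piFinset, Finset.card_range]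
  rw [Fin.prod_univ_eq_prod_range (fun i => H ^ (i + 1)) n, Finset.prod_pow_eq_pow_sum]
  congr 1
  have h := Finset.sum_range_id_mul_two (n + 1)
  rw [Finset.sum_range_succ'] at h
  simp only [add_zero, Nat.add_sub_cancel] at h
  rw [← Nat.mul_comm (n + 1) n, ← h, Nat.mul_div_cancel _ (by norm_num)]

open Classical in
/-- Fixing the value at one point determines the constant term, hence loses a
factor `H^(n+1)`. -/
theorem card_fiber_le (n H : ℕ) (t v : Qbar) :
    ((zbox (n + 1) H).filter fun z =>
      ((zpoly (n + 1) z).map (Int.castRingHom Qbar)).eval t = v).card ≤ (zbox n H).card := by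
  refine Finset.card_le_card_of_injOn (fun (z : Fin (n + 1) → ℕ) (i : Fin n) => z i.castSucc) ?_ ?_
  · intro z hz
    have hz' := Fintype.mem_piFinset.1 (Finset.mem_filter.1 hz).1
    exact Fintype.mem_piFinset.2 fun i => hz' i.castSucc
  · intro z hz z' hz' h
    have h1 := (Finset.mem_filter.1 hz).2
    have h2 := (Finset.mem_filter.1 hz').2
    rw [eval_zpoly, Fin.sum_univ_castSucc] at h1 h2
    have h3 : ∀ i : Fin n, z i.castSucc = z' i.castSucc := fun i => congrFun h i
    simp only [h3] at h1
    have h4 : (z (Fin.last n) : Qbar) = z' (Fin.last n) := by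
      rw [← h2] at h1
      simpa using h1
    ext i
    refine Fin.lastCases ?_ (fun i => h3 i) i
    exact_mod_cast h4

theorem natDegree_zpoly_lt (n : ℕ) (hn : 0 < n) (z : Fin n → ℕ) : (zpoly n z).natDegree < n := by
  refine lt_of_le_of_lt (Polynomial.natDegree_sum_le_of_forall_le (n := n - 1) _ _ fun i _ => ?_)
    (by omega)
  exact (Polynomial.natDegree_monomial_le _).trans (by omega)

theorem coeff_zpoly (n : ℕ) (z : Fin n → ℕ) (i : Fin n) :
    (zpoly n z).coeff (n - 1 - (i : ℕ)) = z i := by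
  rw [zpoly, Polynomial.finsetSum_coeff, Finset.sum_eq_single i]
  · simp
  · intro j _ hj
    rw [Polynomial.coeff_monomial, if_neg]
    intro h
    apply hj
    ext
    have := i.2
    have := j.2
    omega
  · simp

theorem zpoly_injective (n : ℕ) : Function.Injective (zpoly n) := by
  intro z z' h
  ext i
  have h1 := coeff_zpoly n z i
  rw [h, coeff_zpoly] at h1
  exact_mod_cast h1.symm

theorem zfull_monic (n p : ℕ) (hn : 0 < n) (z : Fin n → ℕ) :
    (zfull n p z).Monic ∧ (zfull n p z).natDegree = n := by
  have h1 : (Polynomial.C (p : ℤ) * zpoly n z).degree < n := by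
    refine lt_of_le_of_lt (Polynomial.degree_le_natDegree) ?_
    have := (Polynomial.natDegree_C_mul_le (p : ℤ) (zpoly n z)).trans_lt (natDegree_zpoly_lt n hn z)
    exact_mod_cast this
  refine ⟨Polynomial.monic_X_pow_add h1, ?_⟩
  rw [zfull, Polynomial.natDegree_add_eq_left_of_degree_lt]
  · exact Polynomial.natDegree_X_pow n
  · rwa [Polynomial.degree_X_pow]

theorem coeff_zero_zfull (n p : ℕ) (hn : 0 < n) (z : Fin n → ℕ) :
    (p : ℤ) ∣ (zfull n p z).coeff 0 := by
  rw [zfull, Polynomial.coeff_add, Polynomial.coeff_C_mul, Polynomial.coeff_X_pow, if_neg (by omega),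
    zero_add]
  exact dvd_mul_right _ _

/-- The part of `mkU` that does not depend on the parameters. -/
def mkR {R : Type*} [CommRing R] (q s : Polynomial R) (c p : ℕ)
    (w : Polynomial (Polynomial ℤ)) : Polynomial (Polynomial R) :=
  Polynomial.C q * w.map (Polynomial.mapRingHom (Int.castRingHom R)) +
    Polynomial.C (Polynomial.C (p : R)) * (Polynomial.X - Polynomial.C s) ^ c

theorem mkU_eq {R : Type*} [CommRing R] (q s : Polynomial R) (c p : ℕ)
    (w : Polynomial (Polynomial ℤ)) (Z : Polynomial ℤ) :
    mkU q s c p w Z = Polynomial.C (q * (Polynomial.C (p : ℤ) * Z).map (Int.castRingHom R)) +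
      mkR q s c p w := by
  simp only [mkU, mkR, Polynomial.map_mul, map_mul, map_natCast, Polynomial.map_natCast]
  ring

theorem map_mkR {R S : Type*} [CommRing R] [CommRing S] (g : R →+* S) (q s : Polynomial R)
    (c p : ℕ) (w : Polynomial (Polynomial ℤ)) :
    (mkR q s c p w).map (Polynomial.mapRingHom g) = mkR (q.map g) (s.map g) c p w := by
  have h1 : (Polynomial.mapRingHom g).comp (Polynomial.mapRingHom (Int.castRingHom R)) =
      Polynomial.mapRingHom (Int.castRingHom S) := by
    refine Polynomial.ringHom_ext' (RingHom.ext_int _ _) ?_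
    simp
  simp only [mkR, Polynomial.map_add, Polynomial.map_mul, Polynomial.map_pow, Polynomial.map_sub,
    Polynomial.map_X, Polynomial.map_C, Polynomial.map_map, h1, Polynomial.coe_mapRingHom,
    map_natCast, Polynomial.map_natCast]

/-- Weighted degree of `mkR`. -/
theorem exists_mkR_degree {R : Type*} [CommRing R] (q s : Polynomial R) (c κ e : ℕ) :
    ∃ n₁ : ℕ, ∀ n ≥ n₁, ∀ (p : ℕ) (w : Polynomial (Polynomial ℤ)), w.natDegree < e →
      (∀ j, (w.coeff j).natDegree ≤ n - κ * e - 1) → ∀ j ∈ (mkR q s c p w).support,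
      ((mkR q s c p w).coeff j).natDegree + κ * j + 1 ≤ q.natDegree + n := by
  set P : Polynomial (Polynomial R) := (Polynomial.X - Polynomial.C s) ^ c with hP
  set Kc := ∑ j ∈ P.support, ((P.coeff j).natDegree + κ * j + 1) with hKc
  refine ⟨Kc + κ * e + 1, fun n hn p w hw hwd j hj => ?_⟩
  have h1 : ∀ j ∈ P.support, (P.coeff j).natDegree + κ * j + 1 ≤ Kc := fun j hj =>
    Finset.single_le_sum (f := fun j => (P.coeff j).natDegree + κ * j + 1)
      (fun _ _ => Nat.zero_le _) hj
  have hc : (mkR q s c p w).coeff j = q * (w.coeff j).map (Int.castRingHom R) +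
      Polynomial.C (p : R) * P.coeff j := by
    simp only [mkR, Polynomial.coeff_add, Polynomial.coeff_C_mul, Polynomial.coeff_map, ← hP,
      Polynomial.coe_mapRingHom]
  rw [hc]
  have hd1 : (Polynomial.C (p : R) * P.coeff j).natDegree ≤ (P.coeff j).natDegree :=
    Polynomial.natDegree_C_mul_le _ _
  have hd2 : (q * (w.coeff j).map (Int.castRingHom R)).natDegree ≤ q.natDegree + (n - κ * e - 1) :=
    Polynomial.natDegree_mul_le.trans (Nat.add_le_add_left (Polynomial.natDegree_map_le.trans (hwd j)) _)
  have hd3 := Polynomial.natDegree_add_le (q * (w.coeff j).map (Int.castRingHom R))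
    (Polynomial.C (p : R) * P.coeff j)
  rcases lt_or_ge j e with hje | hje
  · have hκ : κ * j + κ ≤ κ * e := by rw [← Nat.mul_succ]; exact Nat.mul_le_mul_left _ hje
    by_cases hjs : j ∈ P.support
    · have := h1 j hjs
      rcases le_max_iff.1 hd3 with h | h <;> omega
    · rw [Polynomial.notMem_support_iff] at hjs
      have h0 : (P.coeff j).natDegree = 0 := by rw [hjs, Polynomial.natDegree_zero]
      rcases le_max_iff.1 hd3 with h | h <;> omega
  · have hw0 : w.coeff j = 0 := Polynomial.coeff_eq_zero_of_natDegree_lt (by omega)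
    have hjs : j ∈ P.support := by
      rw [Polynomial.mem_support_iff, hc, hw0] at hj
      rw [Polynomial.mem_support_iff]
      intro h0
      rw [h0] at hj
      simp at hj
    have := h1 j hjs
    rw [hw0] at hd3 ⊢
    simp only [Polynomial.map_zero, mul_zero, zero_add] at hd3 ⊢
    omega

/-! ### The family of points -/

/-- Base change of a bivariate polynomial over `k` to the algebraic closure. -/
abbrev bc {k : IntermediateField ℚ Qbar} (Φ : Polynomial (Polynomial k)) :
    Polynomial (Polynomial Qbar) :=
  Φ.map (Polynomial.mapRingHom (algebraMap k Qbar))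

/-- Base change of a univariate polynomial over `k` to the algebraic closure. -/
abbrev bc₁ {k : IntermediateField ℚ Qbar} (q : Polynomial k) : Polynomial Qbar :=
  q.map (algebraMap k Qbar)

/-- The value at `t` of the polynomial with parameter vector `z`. -/
abbrev zev (n : ℕ) (z : Fin n → ℕ) (t : Qbar) : Qbar :=
  ((zpoly n z).map (Int.castRingHom Qbar)).eval t

open Classical in
/-- The parameters for which the polynomial takes one of the prescribed values at one of the
prescribed points. -/
theorem card_bad_le (n H : ℕ) (P : Finset (Qbar × Qbar)) :
    ((zbox (n + 1) H).filter fun z => ∃ x ∈ P, zev (n + 1) z x.1 = x.2).card ≤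
      P.card * (zbox n H).card := by
  refine le_trans (Finset.card_le_card (t := P.biUnion fun x =>
    (zbox (n + 1) H).filter fun z => zev (n + 1) z x.1 = x.2) ?_)
    (Finset.card_biUnion_le_card_mul _ _ _ fun x _ => card_fiber_le n H x.1 x.2)
  intro z hz
  obtain ⟨h1, x, hx, h2⟩ := Finset.mem_filter.1 hz
  exact Finset.mem_biUnion.2 ⟨x, hx, Finset.mem_filter.2 ⟨h1, h2⟩⟩

theorem eval_zfull (n p : ℕ) (z : Fin n → ℕ) (t : Qbar) :
    ((zfull n p z).map (Int.castRingHom Qbar)).eval t = t ^ n + p * zev n z t := by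
  simp [zfull, zev]

theorem evalEval_mkU (q s : Polynomial Qbar) (c p : ℕ) (w : Polynomial (Polynomial ℤ))
    (Z : Polynomial ℤ) (t y : Qbar) :
    (mkU q s c p w Z).evalEval t y =
      q.eval t * (p * (Z.map (Int.castRingHom Qbar)).eval t) + (mkR q s c p w).evalEval t y := by
  rw [mkU_eq]
  simp [Polynomial.evalEval_add, Polynomial.evalEval_C]

/-- Degree and leading coefficient of the norm of `mkU`. -/
theorem norm_mkU {k : IntermediateField ℚ Qbar} (Φ : Polynomial (Polynomial k))
    (κ : ℕ) (hκ : ∀ (a : Polynomial k) (X : Polynomial (Polynomial k)) (b : ℕ),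
        (∀ j ∈ X.support, (X.coeff j).natDegree + κ * j + 1 ≤ a.natDegree) →
          (Polynomial.C a + X).natDegree ≤ b →
            (Φ.resultant (Polynomial.C a + X) Φ.natDegree b).natDegree = Φ.natDegree * a.natDegree ∧
              (Φ.resultant (Polynomial.C a + X) Φ.natDegree b).leadingCoeff =
                a.leadingCoeff ^ Φ.natDegree)
    (q s : Polynomial k) (hq : q.Monic) (c p n : ℕ) (hp : 0 < p) (w : Polynomial (Polynomial ℤ))
    (Z : Polynomial ℤ) (hZ : Z.Monic) (hZn : Z.natDegree = n)
    (hR : ∀ j ∈ (mkR q s c p w).support,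
      ((mkR q s c p w).coeff j).natDegree + κ * j + 1 ≤ q.natDegree + n) (b : ℕ)
    (hb : (mkU q s c p w Z).natDegree ≤ b) :
    (Φ.resultant (mkU q s c p w Z) Φ.natDegree b).natDegree = Φ.natDegree * (q.natDegree + n) ∧
    (Φ.resultant (mkU q s c p w Z) Φ.natDegree b).leadingCoeff = (p : k) ^ Φ.natDegree := by
  have : CharZero k := algebraRat.charZero k
  have hp0 : (p : k) ≠ 0 := by exact_mod_cast hp.ne'
  have hZm : (Z.map (Int.castRingHom k)).Monic := hZ.map _
  have ha : q * (Polynomial.C (p : ℤ) * Z).map (Int.castRingHom k) =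
      Polynomial.C (p : k) * (q * Z.map (Int.castRingHom k)) := by
    rw [Polynomial.map_mul, Polynomial.map_C]
    simp only [eq_intCast, Int.cast_natCast]
    ring
  have hqZ : (q * Z.map (Int.castRingHom k)).Monic := hq.mul hZm
  have hd : (q * (Polynomial.C (p : ℤ) * Z).map (Int.castRingHom k)).natDegree =
      q.natDegree + n := by
    rw [ha, Polynomial.natDegree_C_mul hp0, hq.natDegree_mul hZm, hZ.natDegree_map, hZn]
  have hl : (q * (Polynomial.C (p : ℤ) * Z).map (Int.castRingHom k)).leadingCoeff = (p : k) := by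
    rw [ha, Polynomial.leadingCoeff_mul, hqZ.leadingCoeff, Polynomial.leadingCoeff_C, mul_one]
  rw [mkU_eq] at hb ⊢
  have := hκ _ (mkR q s c p w) b (by rwa [hd]) hb
  rwa [hd, hl] at this

theorem bc_resultant {k : IntermediateField ℚ Qbar} (Φ u : Polynomial (Polynomial k))
    (hΦ : Φ.Monic) (b : ℕ) :
    bc₁ (Φ.resultant u Φ.natDegree b) = (bc Φ).resultant (bc u) (bc Φ).natDegree b := by
  rw [bc, hΦ.natDegree_map, Polynomial.resultant_map_map, Polynomial.coe_mapRingHom]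

/-- For a single parameter avoiding the degenerate loci, the residual intersection is one Galois
orbit and its points generate a field of the expected degree. -/
theorem good_param (k : IntermediateField ℚ Qbar) (Φ : Polynomial (Polynomial k)) (hΦ : Φ.Monic)
    (he : 0 < Φ.natDegree) (q s : Polynomial k) (hq : q.Monic)
    (hqs : ∀ τ : Qbar, (bc₁ q).eval τ = 0 →
      (bc Φ).evalEval τ ((bc₁ s).eval τ) = 0 ∧
      (Polynomial.derivative (bc Φ)).evalEval τ ((bc₁ s).eval τ) ≠ 0)
    (p n κ : ℕ) (hp : 0 < p) (w : Polynomial (Polynomial ℤ)) (Z : Polynomial ℤ)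
    (b : ℕ) (hb : (mkU q s (q.natDegree + 1) p w Z).natDegree ≤ b)
    (hdeg : (Φ.resultant (mkU q s (q.natDegree + 1) p w Z) Φ.natDegree b).natDegree =
      Φ.natDegree * (q.natDegree + n))
    (hn : κ * Φ.natDegree + q.natDegree + 2 ≤ n)
    (hπ : Φ.resultant (mkU q s (q.natDegree + 1) p w Z) Φ.natDegree b ≠ 0 →
      ∃ π, Irreducible π ∧ Φ.natDegree * (n - κ * Φ.natDegree - 1 + 1) ≤ π.natDegree + 1 ∧
        π ∣ Φ.resultant (mkU q s (q.natDegree + 1) p w Z) Φ.natDegree b)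
    (hρ : ∀ t y, (bc Φ).evalEval t y = 0 → n ≤ (minpoly k t).natDegree →
      (Polynomial.derivative (bc Φ)).evalEval t y ≠ 0)
    (hbad1 : ∀ τ : Qbar, (bc₁ q).eval τ = 0 →
      (w.map (Polynomial.mapRingHom (Int.castRingHom Qbar))).evalEval τ ((bc₁ s).eval τ) +
        p * (Z.map (Int.castRingHom Qbar)).eval τ ≠ 0)
    (hbad2 : ∀ t y, (bc Φ).evalEval t y = 0 →
      (bc (mkU q s (q.natDegree + 1) p w Z)).evalEval t y = 0 → (bc₁ q).eval t ≠ 0 →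
      Φ.natDegree * q.natDegree + κ * Φ.natDegree ^ 2 + 1 < (minpoly k t).natDegree) :
    ∃ t y, (bc Φ).evalEval t y = 0 ∧ (bc (mkU q s (q.natDegree + 1) p w Z)).evalEval t y = 0 ∧
      (bc₁ q).eval t ≠ 0 ∧ y ∈ IntermediateField.adjoin k {t} ∧
      (minpoly k t).natDegree = Φ.natDegree * (q.natDegree + n) - q.natDegree := by
  have : CharZero k := algebraRat.charZero k
  set u := mkU q s (q.natDegree + 1) p w Z with hu
  set e := Φ.natDegree with hedef
  have hN0 : Φ.resultant u e b ≠ 0 := by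
    intro h0
    rw [h0, Polynomial.natDegree_zero] at hdeg
    have := Nat.mul_pos he (show 0 < q.natDegree + n by omega)
    omega
  obtain ⟨π, hπi, hπd, hπN⟩ := hπ hN0
  have hsub : n - κ * e - 1 + 1 = n - κ * e := by omega
  rw [hsub] at hπd
  obtain ⟨n', hn'⟩ : ∃ n', n = κ * e + n' := ⟨n - κ * e, by omega⟩
  have hsub2 : n - κ * e = n' := by omega
  rw [hsub2] at hπd
  have hen : n' ≤ e * n' := Nat.le_mul_of_pos_left _ he
  have hbc : ∀ t, (bc₁ (Φ.resultant u e b)).eval t = 0 ↔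
      ∃ y, (bc Φ).evalEval t y = 0 ∧ (bc u).evalEval t y = 0 := by
    intro t
    rw [bc_resultant Φ u hΦ b]
    exact norm_eval_eq_zero_iff (bc Φ) (bc u) (hΦ.map _) (Polynomial.natDegree_map_le.trans hb) t
  have hW : ∀ τ : Qbar, (bc₁ q).eval τ = 0 →
      (bc (w.map (Polynomial.mapRingHom (Int.castRingHom k)) +
        Polynomial.C (Polynomial.C (p : k) * Z.map (Int.castRingHom k)))).evalEval τ
          ((bc₁ s).eval τ) ≠ 0 := by
    intro τ hτ
    have h := hbad1 τ hτ
    intro h0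
    apply h
    rw [← h0]
    have h1 : (algebraMap k Qbar).comp (Int.castRingHom k) = Int.castRingHom Qbar :=
      RingHom.ext_int _ _
    simp only [Polynomial.map_add, Polynomial.map_map, Polynomial.map_C, Polynomial.evalEval_add,
      Polynomial.evalEval_C, Polynomial.coe_mapRingHom, Polynomial.map_mul, Polynomial.eval_mul,
      Polynomial.mapRingHom_comp, h1, map_natCast, Polynomial.eval_natCast, Polynomial.map_natCast]
  have hB1 : (Φ.resultant u e b).natDegree ≤
      q.natDegree + π.natDegree + (e * q.natDegree + κ * e ^ 2 + 1) := by
    rw [hdeg, hn']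
    have : κ * e ^ 2 = e * (κ * e) := by ring
    rw [this, Nat.mul_add, Nat.mul_add]
    omega
  have hlow : ∀ t : Qbar, (bc₁ (Φ.resultant u e b)).eval t = 0 → (bc₁ q).eval t ≠ 0 →
      e * q.natDegree + κ * e ^ 2 + 1 < (minpoly k t).natDegree := by
    intro t ht hqt
    obtain ⟨y, hy1, hy2⟩ := (hbc t).1 ht
    exact hbad2 t y hy1 hy2 hqt
  obtain ⟨F, hF, hFi, hFq⟩ := irreducible_cofactor k Φ
    (w.map (Polynomial.mapRingHom (Int.castRingHom k)) +
        Polynomial.C (Polynomial.C (p : k) * Z.map (Int.castRingHom k))) hΦ q s hq.ne_zero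
    (q.natDegree + 1) (Nat.lt_succ_self _) (p : k) (by exact_mod_cast hp.ne') (b := b) u
    (by rw [hu, mkU]) hb (fun τ hτ => ⟨(hqs τ hτ).1, (hqs τ hτ).2, hW τ hτ⟩) hN0 π hπi hπN (by omega)
    (e * q.natDegree + κ * e ^ 2 + 1) hB1 hlow
  have hF0 : F ≠ 0 := hFi.ne_zero
  have hFd : F.natDegree = e * (q.natDegree + n) - q.natDegree := by
    rw [hF, Polynomial.natDegree_mul hq.ne_zero hF0] at hdeg
    omega
  have hnd : n ≤ e * (q.natDegree + n) - q.natDegree := by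
    have := Nat.le_mul_of_pos_left (q.natDegree + n) he
    omega
  have hFdeg : (bc₁ F).degree ≠ 0 := by
    rw [bc₁, Polynomial.degree_map]
    intro h
    have : F.natDegree = 0 := Polynomial.natDegree_eq_of_degree_eq_some h
    omega
  obtain ⟨t, ht⟩ := IsAlgClosed.exists_root (bc₁ F) hFdeg
  have ht' : (bc₁ F).eval t = 0 := ht
  have hqt : (bc₁ q).eval t ≠ 0 := fun h => hFq t h ht'
  have hNt : (bc₁ (Φ.resultant u e b)).eval t = 0 := by
    rw [hF, bc₁, Polynomial.map_mul, Polynomial.eval_mul]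
    rw [bc₁] at ht'
    rw [ht', mul_zero]
  obtain ⟨y, hy1, hy2⟩ := (hbc t).1 hNt
  have hmin : (minpoly k t).natDegree = e * (q.natDegree + n) - q.natDegree := by
    have h := minpoly.eq_of_irreducible (A := k) (x := t) hFi (by
      rw [Polynomial.aeval_def, ← Polynomial.eval_map]; exact ht')
    rw [← h, Polynomial.natDegree_mul_C (inv_ne_zero (Polynomial.leadingCoeff_ne_zero.2 hF0)), hFd]
  refine ⟨t, y, hy1, hy2, hqt, ?_, hmin⟩
  exact y_mem_adjoin k Φ u hΦ hb q F hFi hF t y hqt hy1 (hρ t y hy1 (by omega)) hy2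

/-- Points of large degree avoid the branch locus. -/
theorem exists_branch_degree (k : IntermediateField ℚ Qbar) (Φ : Polynomial (Polynomial k))
    (hΦ : Φ.Monic)
    (hsep : ∀ y, (bc Φ).evalEval 0 y = 0 → (Polynomial.derivative (bc Φ)).evalEval 0 y ≠ 0) :
    ∃ n0 : ℕ, ∀ t y, (bc Φ).evalEval t y = 0 → n0 ≤ (minpoly k t).natDegree →
      (Polynomial.derivative (bc Φ)).evalEval t y ≠ 0 := by
  set ρ := Φ.resultant (Polynomial.derivative Φ) Φ.natDegree (Polynomial.derivative Φ).natDegree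
    with hρ
  have hder : bc (Polynomial.derivative Φ) = Polynomial.derivative (bc Φ) := by
    rw [bc, bc, Polynomial.derivative_map]
  have key : ∀ t, (bc₁ ρ).eval t = 0 ↔
      ∃ y, (bc Φ).evalEval t y = 0 ∧ (Polynomial.derivative (bc Φ)).evalEval t y = 0 := by
    intro t
    rw [hρ, bc_resultant Φ _ hΦ, ← hder]
    exact norm_eval_eq_zero_iff (bc Φ) _ (hΦ.map _) (Polynomial.natDegree_map_le) t
  have hρ0 : ρ ≠ 0 := by
    intro h
    obtain ⟨y, h1, h2⟩ := (key 0).1 (by rw [h]; simp)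
    exact hsep y h1 h2
  refine ⟨ρ.natDegree + 1, fun t y hy hn h => ?_⟩
  have := natDegree_minpoly_le k ρ hρ0 t ((key t).2 ⟨y, hy, h⟩)
  omega

/-- For all large `n`, at least half of the parameters in the box yield a point `(t, y)` of the
curve `Φ = 0` generating a field of degree `e (B + n) - B` over `k`, of controlled height, and the
parameter can be recovered from `(t, y)`. -/
theorem family (k : IntermediateField ℚ Qbar) [FiniteDimensional ℚ k]
    (Φ : Polynomial (Polynomial k)) (hΦ : Φ.Monic) (he : 0 < Φ.natDegree)
    (hirr : Irreducible (bc Φ))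
    (hsep : ∀ y, (bc Φ).evalEval 0 y = 0 → (Polynomial.derivative (bc Φ)).evalEval 0 y ≠ 0)
    (q s : Polynomial k) (hq : q.Monic) (hq0 : q.eval 0 ≠ 0)
    (hqs : ∀ τ : Qbar, (bc₁ q).eval τ = 0 →
      (bc Φ).evalEval τ ((bc₁ s).eval τ) = 0 ∧
      (Polynomial.derivative (bc Φ)).evalEval τ ((bc₁ s).eval τ) ≠ 0) :
    ∃ n0 : ℕ, ∀ n ≥ n0, ∃ A : ℤ, A ≠ 0 ∧ ∃ C1 : ℝ, 1 ≤ C1 ∧ ∃ v : Qbar → Qbar → Qbar,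
      ∃ H0 : ℕ, ∀ H : ℕ, H0 ≤ H → ∃ Zs : Finset (Fin n → ℕ), Zs ⊆ zbox n H ∧
        (zbox n H).card ≤ 2 * Zs.card ∧ ∀ z ∈ Zs, ∃ t y : Qbar, (bc Φ).evalEval t y = 0 ∧
          y ∈ IntermediateField.adjoin k {t} ∧
          (minpoly k t).natDegree = Φ.natDegree * (q.natDegree + n) - q.natDegree ∧
          IsIntegral ℤ ((A : Qbar) * t) ∧ Bd t (C1 * H) ∧ zev n z t = v t y := by
  classical
  obtain ⟨κ1, hκ1⟩ := exists_norm_degree Φ hΦ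
  obtain ⟨κ2, C0, hC0, hκ2⟩ := y_bound (bc Φ) (hΦ.map _)
  obtain ⟨nρ, hρ⟩ := exists_branch_degree k Φ hΦ hsep
  have hdegΦ : (bc Φ).natDegree = Φ.natDegree := hΦ.natDegree_map _
  have hqd : (bc₁ q).natDegree = q.natDegree := hq.natDegree_map _
  obtain ⟨y₀, hy₀⟩ : ∃ y₀, (bc Φ).evalEval 0 y₀ = 0 := by
    have hm : ((bc Φ).map (Polynomial.evalRingHom 0)).Monic := (hΦ.map _).map _
    obtain ⟨y, hy⟩ := IsAlgClosed.exists_root ((bc Φ).map (Polynomial.evalRingHom (0 : Qbar))) (by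
      intro h
      have h2 : ((bc Φ).map (Polynomial.evalRingHom (0 : Qbar))).natDegree = 0 :=
        Polynomial.natDegree_eq_of_degree_eq_some h
      rw [(hΦ.map _).natDegree_map] at h2
      exact he.ne' (hdegΦ.symm.trans h2))
    refine ⟨y, ?_⟩
    rw [← eval_map_evalRingHom]
    exact hy
  set κ := max κ1 κ2 with hκ
  set e := Φ.natDegree with hedef
  set B := q.natDegree with hB
  set B1 := e * B + κ * e ^ 2 + 1 with hB1
  set r := Module.finrank ℚ k * B1 with hr
  obtain ⟨n1, hn1⟩ := exists_mkR_degree q s (B + 1) κ e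
  obtain ⟨n2, hn2⟩ := exists_mkR_degree (bc₁ q) (bc₁ s) (B + 1) κ e
  refine ⟨n1 + n2 + nρ + (κ * e + B + 2) + (r * (r + 1) + 2), fun n hn => ?_⟩
  obtain ⟨p, hp, w, hwd, hwN, hfac⟩ := exists_large_factor k Φ hΦ hirr y₀ hy₀ (hsep y₀ hy₀) q s hq0
    (B + 1) (n - κ * e - 1) he
      (le_trans (by omega) (Nat.le_mul_of_pos_left (n - κ * e - 1 + 1) he))
  have hRk := hn1 n (by omega) p w hwd hwN
  have hRQ := hn2 n (by omega) p w hwd hwN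
  rw [hqd] at hRQ
  set R := mkR (bc₁ q) (bc₁ s) (B + 1) p w with hR
  have hbcR : bc (mkR q s (B + 1) p w) = R := map_mkR _ _ _ _ _ _
  have hbcU : ∀ Z, bc (mkU q s (B + 1) p w Z) = mkU (bc₁ q) (bc₁ s) (B + 1) p w Z :=
    fun Z => map_mkU _ _ _ _ _ _ _
  set b := (mkR q s (B + 1) p w).natDegree with hb
  have hub : ∀ Z, (mkU q s (B + 1) p w Z).natDegree ≤ b := fun Z => by
    rw [mkU_eq, Polynomial.natDegree_C_add]
  obtain ⟨m, hm, hden⟩ := exists_den (bc Φ) R (bc₁ q) b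
  have hpos : 0 < n := by omega
  obtain ⟨C1, hC1, hhouse⟩ := exists_house_bound (bc Φ) R (bc₁ q) (hq.map _) κ n p hp.pos (C0)
    hC0 (fun ψ t y h1 h2 => (hκ2 ψ t y h1 h2).trans
      (mul_le_mul_of_nonneg_left (pow_le_pow_right₀ h2 (le_max_right _ _)) hC0)) hpos
    (by rwa [hqd])
  have hA : m * (p : ℤ) ^ e ≠ 0 := mul_ne_zero hm (pow_ne_zero _ (by exact_mod_cast hp.ne_zero))
  obtain ⟨Cc, hCc, hcount⟩ := count_low_degree r (m * (p : ℤ) ^ e) hA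
  have hpQ : (p : Qbar) ≠ 0 := by exact_mod_cast hp.ne_zero
  -- solving `u_z (t, y) = 0` for the value of the parameter polynomial
  set v : Qbar → Qbar → Qbar := fun t y =>
    -(R.evalEval t y + (bc₁ q).eval t * (p * t ^ n)) / ((bc₁ q).eval t * p ^ 2) with hv
  have hvz : ∀ z : Fin n → ℕ, ∀ t y, (bc (mkU q s (B + 1) p w (zfull n p z))).evalEval t y = 0 →
      (bc₁ q).eval t ≠ 0 → zev n z t = v t y := by
    intro z t y h hqt
    rw [hbcU, evalEval_mkU, eval_zfull] at h
    rw [hv]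
    simp only
    rw [eq_div_iff (by positivity)]
    linear_combination h
  have hdegz : ∀ z : Fin n → ℕ,
      (Φ.resultant (mkU q s (B + 1) p w (zfull n p z)) e b).natDegree = e * (B + n) ∧
      (Φ.resultant (mkU q s (B + 1) p w (zfull n p z)) e b).leadingCoeff = (p : k) ^ e := fun z =>
    norm_mkU Φ κ1 hκ1 q s hq (B + 1) p n hp.pos w _ (zfull_monic n p hpos z).1
      (zfull_monic n p hpos z).2 (fun j hj => le_trans
        (Nat.add_le_add_right (Nat.add_le_add_left
          (Nat.mul_le_mul_right j (le_max_left κ1 κ2)) _) 1) (hRk j hj)) b (hub _)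
  -- arithmetic of every common zero
  have hzero : ∀ H : ℕ, 1 ≤ H → ∀ z ∈ zbox n H, ∀ t y, (bc Φ).evalEval t y = 0 →
      (bc (mkU q s (B + 1) p w (zfull n p z))).evalEval t y = 0 →
      IsIntegral ℤ (((m * (p : ℤ) ^ e : ℤ) : Qbar) * t) ∧ Bd t (C1 * H) := by
    intro H hH z hz t y h1 h2
    constructor
    · refine hden (Polynomial.C (p : ℤ) * zfull n p z) ((p : ℤ) ^ e) ?_ t ?_
      · rw [← mkU_eq, ← hbcU, ← bc_resultant Φ _ hΦ, bc₁,
          Polynomial.leadingCoeff_map, (hdegz z).2]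
        simp
      · rw [← mkU_eq, ← hbcU]
        exact (norm_eval_eq_zero_iff (bc Φ) _ (hΦ.map _)
          (Polynomial.natDegree_map_le.trans (hub _)) t).2 ⟨y, h1, h2⟩
    · refine hhouse H (by exact_mod_cast hH) z (fun i => ?_) t y h1 ?_
      · have := Finset.mem_range.1 (Fintype.mem_piFinset.1 hz i)
        exact_mod_cast this.le
      · rw [hbcU, evalEval_mkU] at h2
        exact h2
  set Ct : ℝ := 2 * (B + e * (Cc * C1 ^ (r * (r + 1)))) with hCt
  refine ⟨m * (p : ℤ) ^ e, hA, C1, hC1, v, ⌈Ct⌉₊ + 1, fun H hH => ?_⟩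
  have hH1 : 1 ≤ H := by omega
  have hH1r : (1 : ℝ) ≤ H := by exact_mod_cast hH1
  have hHC : Ct ≤ H := (Nat.le_ceil Ct).trans (by exact_mod_cast (by omega))
  obtain ⟨S, hScard, hS⟩ := hcount (C1 * H) (by nlinarith)
  -- points where prescribed values are avoided: `P1` lies over the roots of `q`, `P2` contains the
  -- common zeros of low degree
  set P1 : Finset (Qbar × Qbar) := (bc₁ q).roots.toFinset.image fun τ =>
    (τ, -((w.map (Polynomial.mapRingHom (Int.castRingHom Qbar))).evalEval τ ((bc₁ s).eval τ) +
      p * τ ^ n) / p ^ 2) with hP1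
  set P2 : Finset (Qbar × Qbar) := S.biUnion fun t =>
    ((bc Φ).map (Polynomial.evalRingHom t)).roots.toFinset.image fun y => (t, v t y) with hP2
  have hP1c : P1.card ≤ B := by
    refine Finset.card_image_le.trans ((Multiset.toFinset_card_le _).trans ?_)
    exact (Polynomial.card_roots' _).trans hqd.le
  have hP2c : P2.card ≤ S.card * e := by
    refine Finset.card_biUnion_le_card_mul _ _ _ fun t _ => ?_
    refine Finset.card_image_le.trans ((Multiset.toFinset_card_le _).trans ?_)
    exact (Polynomial.card_roots' _).trans (Polynomial.natDegree_map_le.trans hdegΦ.le)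
  obtain ⟨n', rfl⟩ : ∃ n', n = n' + 1 := ⟨n - 1, by omega⟩
  set bad := (zbox (n' + 1) H).filter fun z => ∃ x ∈ P1 ∪ P2, zev (n' + 1) z x.1 = x.2 with hbad
  have hbadc : 2 * bad.card ≤ (zbox (n' + 1) H).card := by
    have h1 := card_bad_le n' H (P1 ∪ P2)
    have h2 : ((P1 ∪ P2).card : ℝ) ≤ B + e * (Cc * C1 ^ (r * (r + 1))) * H ^ (r * (r + 1)) := by
      have h3 : ((P1 ∪ P2).card : ℝ) ≤ B + S.card * e := by
        exact_mod_cast (Finset.card_union_le _ _).trans (add_le_add hP1c hP2c)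
      rw [mul_pow] at hScard
      have h4 : (S.card : ℝ) * e ≤ (Cc * (C1 ^ (r * (r + 1)) * (H : ℝ) ^ (r * (r + 1)))) * e := by
        gcongr
      linarith
    have h5 : 2 * ((P1 ∪ P2).card : ℝ) ≤ H ^ (n' + 1) := by
      have h6 : (1 : ℝ) ≤ (H : ℝ) ^ (r * (r + 1)) := one_le_pow₀ hH1r
      calc 2 * ((P1 ∪ P2).card : ℝ)
          ≤ 2 * (B + e * (Cc * C1 ^ (r * (r + 1))) * H ^ (r * (r + 1))) := by linarith
        _ ≤ Ct * H ^ (r * (r + 1)) := by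
          rw [hCt]
          have : (B : ℝ) ≤ B * (H : ℝ) ^ (r * (r + 1)) := le_mul_of_one_le_right (by positivity) h6
          linarith
        _ ≤ H * H ^ (r * (r + 1)) := by gcongr
        _ = (H : ℝ) ^ (r * (r + 1) + 1) := by rw [pow_succ]; ring
        _ ≤ H ^ (n' + 1) := pow_le_pow_right₀ hH1r (by omega)
    have h5' : 2 * (P1 ∪ P2).card ≤ H ^ (n' + 1) := by exact_mod_cast h5
    rw [card_zbox_succ]
    calc 2 * bad.card ≤ 2 * ((P1 ∪ P2).card * (zbox n' H).card) := Nat.mul_le_mul_left _ h1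
      _ = (zbox n' H).card * (2 * (P1 ∪ P2).card) := by ring
      _ ≤ _ := Nat.mul_le_mul_left _ h5'
  refine ⟨zbox (n' + 1) H \ bad, Finset.sdiff_subset, ?_, fun z hz => ?_⟩
  · have := Finset.card_sdiff_add_card_eq_card (Finset.filter_subset
      (fun z => ∃ x ∈ P1 ∪ P2, zev (n' + 1) z x.1 = x.2) (zbox (n' + 1) H))
    rw [← hbad] at this
    omega
  obtain ⟨hzb, hznb⟩ := Finset.mem_sdiff.1 hz
  have hgood : ∀ x ∈ P1 ∪ P2, zev (n' + 1) z x.1 ≠ x.2 := fun x hx h =>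
    hznb (Finset.mem_filter.2 ⟨hzb, x, hx, h⟩)
  have hnB : κ * e + B + 2 ≤ n' + 1 := by omega
  obtain ⟨t, y, ht1, ht2, ht3, ht4, ht5⟩ := good_param k Φ hΦ he q s hq hqs p (n' + 1) κ hp.pos w
    (zfull (n' + 1) p z) b (hub _) (hdegz z).1 hnB
    (hfac _ (coeff_zero_zfull _ p hpos z) b (hub _))
    (fun t y h1 h2 => hρ t y h1 (by omega)) (by
      intro τ hτ h0
      refine hgood _ (Finset.mem_union_left _ (Finset.mem_image_of_mem _ (Multiset.mem_toFinset.2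
        ((Polynomial.mem_roots (hq.map _).ne_zero).2 hτ)))) ?_
      simp only
      rw [eval_zfull] at h0
      rw [eq_div_iff (by positivity)]
      linear_combination h0) (by
      intro t y h1 h2 h3
      by_contra hlt
      push Not at hlt
      obtain ⟨h4, h5⟩ := hzero H hH1 z hzb t y h1 h2
      have hinteg : IsIntegral k t := (Algebra.IsAlgebraic.tower_top (K := ℚ) k).isAlgebraic t |>.isIntegral
      have htS : t ∈ S := by
        refine hS t h4 ⟨(IntermediateField.adjoin k {t}).restrictScalars ℚ, ?_, ?_, ?_⟩ h5
        · have := IntermediateField.adjoin.finiteDimensional hinteg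
          exact Module.Finite.trans (R := ℚ) k (IntermediateField.adjoin k {t})
        · exact IntermediateField.mem_adjoin_simple_self k t
        · have h6 := Module.finrank_mul_finrank ℚ k (IntermediateField.adjoin k {t})
          have h7 := IntermediateField.adjoin.finrank hinteg
          change Module.finrank ℚ (IntermediateField.adjoin k {t}) ≤ r
          rw [← h6, h7]
          exact Nat.mul_le_mul_left _ hlt
      refine hgood (t, v t y) (Finset.mem_union_right _ (Finset.mem_biUnion.2 ⟨t, htS,
        Finset.mem_image_of_mem _ (Multiset.mem_toFinset.2 ?_)⟩)) (hvz z t y h2 h3)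
      rw [Polynomial.mem_roots ((hΦ.map _).map _).ne_zero, Polynomial.IsRoot, eval_map_evalRingHom]
      exact h1)
  obtain ⟨h4, h5⟩ := hzero H hH1 z hzb t y ht1 ht2
  exact ⟨t, y, ht1, ht4, ht5, h4, h5, hvz z t y ht2 ht3⟩

/-! ### The count for a curve -/

/-- The exponent of the count: `n (n + 1) / 2` parameters minus the multiplicity `2 D`, compared
with `D ^ 2`, where `D` is at most `g (B + n)`. -/
theorem exponent_bound (g B : ℕ) (hg : 0 < g) (ε : ℝ) (hε : 0 < ε) :
    ∃ n0 : ℕ, ∀ n ≥ n0, ∀ D ≤ g * (B + n), 2 * D ≤ n * (n + 1) / 2 ∧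
      (1 / (2 * (g : ℝ) ^ 2) - ε) * (D : ℝ) ^ 2 ≤ ((n * (n + 1) / 2 - 2 * D : ℕ) : ℝ) := by
  have hg' : (0 : ℝ) < g := by exact_mod_cast hg
  refine ⟨8 * g + B + ⌈((B : ℝ) + 2 * g) / (ε * (g : ℝ) ^ 2)⌉₊, fun n hn D hD => ?_⟩
  have h2 : 2 * (n * (n + 1) / 2) = n * (n + 1) := by
    rw [mul_comm]; exact Nat.div_mul_cancel (Nat.even_mul_succ_self n).two_dvd
  have hnB : B ≤ n := by omega
  have hng : 8 * g ≤ n := by omega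
  have h3 : 2 * D ≤ n * (n + 1) / 2 := by nlinarith
  refine ⟨h3, ?_⟩
  have h4 : ((n * (n + 1) / 2 - 2 * D : ℕ) : ℝ) = (n : ℝ) * (n + 1) / 2 - 2 * D := by
    rw [Nat.cast_sub h3]
    have : (2 : ℝ) * ((n * (n + 1) / 2 : ℕ) : ℝ) = n * (n + 1) := by exact_mod_cast h2
    push_cast
    linarith
  rw [h4]
  have hDr : (D : ℝ) ≤ g * (B + n) := by exact_mod_cast hD
  have hD0 : (0 : ℝ) ≤ D := by positivity
  have hnBr : (B : ℝ) ≤ n := by exact_mod_cast hnB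
  have hngr : 8 * (g : ℝ) ≤ n := by exact_mod_cast hng
  have hB0 : (0 : ℝ) ≤ B := by positivity
  rcases le_total (1 / (2 * (g : ℝ) ^ 2) - ε) 0 with h | h
  · have : (1 / (2 * (g : ℝ) ^ 2) - ε) * (D : ℝ) ^ 2 ≤ 0 :=
      mul_nonpos_of_nonpos_of_nonneg h (by positivity)
    nlinarith
  · have h5 : ((B : ℝ) + 2 * g) / (ε * (g : ℝ) ^ 2) ≤ n := (Nat.le_ceil _).trans
      (Nat.cast_le.2 (le_trans (Nat.le_add_left _ _) hn))
    rw [div_le_iff₀ (by positivity)] at h5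
    have h6 : (1 / (2 * (g : ℝ) ^ 2) - ε) * (D : ℝ) ^ 2 ≤
        (1 / (2 * (g : ℝ) ^ 2) - ε) * (g * (B + n)) ^ 2 := by gcongr
    have h7 : (1 / (2 * (g : ℝ) ^ 2) - ε) * (g * (B + n)) ^ 2 =
        ((B : ℝ) + n) ^ 2 / 2 - (ε * (g : ℝ) ^ 2) * (B + n) * (B + n) := by
      field_simp
    have h8 : ((B : ℝ) + 2 * g) * (B + n) ≤ (ε * (g : ℝ) ^ 2) * (B + n) * (B + n) := by
      have : (n : ℝ) * (ε * (g : ℝ) ^ 2) ≤ (ε * (g : ℝ) ^ 2) * (B + n) := by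
        have : 0 ≤ ε * (g : ℝ) ^ 2 * B := by positivity
        linarith
      exact mul_le_mul_of_nonneg_right (h5.trans this) (by positivity)
    nlinarith

/-- Choice of the size `H` of the parameter box as a function of the discriminant bound `X`. -/
theorem exists_height (D E : ℕ) (hD : 0 < D) (C4 : ℝ) (hC4 : 0 < C4) (τ : ℝ)
    (hτ : τ * (D : ℝ) ^ 2 ≤ E) (H0 : ℕ) :
    ∃ c : ℝ, 0 < c ∧ ∃ X0 : ℝ, 1 ≤ X0 ∧ ∀ X ≥ X0, ∃ H : ℕ, H0 ≤ H ∧ C4 * (H : ℝ) ^ (D ^ 2) ≤ X ∧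
      c * X ^ τ ≤ (H : ℝ) ^ E := by
  have hD2 : (0 : ℝ) < (D : ℝ) ^ 2 := by positivity
  refine ⟨(2 * C4 ^ (1 / (D : ℝ) ^ 2))⁻¹ ^ E, by positivity,
    max 1 (C4 * ((H0 : ℝ) + 1) ^ (D ^ 2)), le_max_left _ _, fun X hX => ?_⟩
  have hX1 : 1 ≤ X := (le_max_left _ _).trans hX
  have hX2 : C4 * ((H0 : ℝ) + 1) ^ (D ^ 2) ≤ X := (le_max_right _ _).trans hX
  have hX0 : 0 < X := by linarith
  set x := (X / C4) ^ (1 / (D : ℝ) ^ 2) with hx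
  have hxpow : x ^ (D ^ 2) = X / C4 := by
    rw [hx, ← Real.rpow_natCast, ← Real.rpow_mul (by positivity)]
    push_cast
    rw [one_div, inv_mul_cancel₀ hD2.ne', Real.rpow_one]
  have hx0 : 0 < x := by rw [hx]; positivity
  have hxH : (H0 : ℝ) + 1 ≤ x := by
    have h : ((H0 : ℝ) + 1) ^ (D ^ 2) ≤ x ^ (D ^ 2) := by
      rw [hxpow, le_div_iff₀ hC4]; linarith
    exact le_of_pow_le_pow_left₀ (by positivity) hx0.le h
  have hx1 : 1 ≤ x := by
    have : (0 : ℝ) ≤ H0 := by positivity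
    linarith
  refine ⟨⌊x⌋₊, Nat.le_floor (by linarith), ?_, ?_⟩
  · have h1 : ((⌊x⌋₊ : ℕ) : ℝ) ^ (D ^ 2) ≤ x ^ (D ^ 2) := by
      gcongr; exact Nat.floor_le hx0.le
    rw [hxpow, le_div_iff₀ hC4] at h1
    linarith
  · have h1 : x / 2 ≤ (⌊x⌋₊ : ℝ) := by
      have h2 := Nat.lt_floor_add_one x
      have h3 : (1 : ℝ) ≤ (⌊x⌋₊ : ℝ) := by exact_mod_cast (Nat.one_le_floor_iff x).2 hx1
      linarith
    have h4 : (x / 2) ^ E ≤ (⌊x⌋₊ : ℝ) ^ E := by gcongr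
    refine le_trans ?_ h4
    have h5 : x / 2 = (2 * C4 ^ (1 / (D : ℝ) ^ 2))⁻¹ * X ^ (1 / (D : ℝ) ^ 2) := by
      rw [hx, Real.div_rpow hX0.le hC4.le]
      field_simp
    rw [h5, mul_pow]
    gcongr
    rw [← Real.rpow_natCast, ← Real.rpow_mul hX0.le]
    refine Real.rpow_le_rpow_of_exponent_le hX1 ?_
    rw [one_div, inv_mul_eq_div, le_div_iff₀ hD2]
    exact hτ

/-- A parameter polynomial is determined by its value at a point of large degree. -/
theorem zev_injective (k : IntermediateField ℚ Qbar) (n : ℕ) (hn : 0 < n) (t : Qbar)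
    (ht : n ≤ (minpoly k t).natDegree) (z z' : Fin n → ℕ) (h : zev n z t = zev n z' t) :
    z = z' := by
  have : CharZero k := algebraRat.charZero k
  have h1 : (algebraMap k Qbar).comp (Int.castRingHom k) = Int.castRingHom Qbar :=
    RingHom.ext_int _ _
  apply zpoly_injective n
  by_contra hne
  have hinj : Function.Injective (Int.castRingHom k) := (Int.castRingHom k).injective_int
  have hne' : (zpoly n z - zpoly n z').map (Int.castRingHom k) ≠ 0 := by
    rw [Ne, Polynomial.map_eq_zero_iff hinj]
    exact sub_ne_zero.2 hne
  have h2 := natDegree_minpoly_le k _ hne' t (by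
    rw [Polynomial.map_map, h1, Polynomial.map_sub, Polynomial.eval_sub]
    exact sub_eq_zero.2 h)
  have h3 := Polynomial.natDegree_sub_le (zpoly n z) (zpoly n z')
  have h4 := natDegree_zpoly_lt n hn z
  have h5 := natDegree_zpoly_lt n hn z'
  have h6 := Polynomial.natDegree_map_le (p := zpoly n z - zpoly n z') (f := Int.castRingHom k)
  have h7 : max (zpoly n z).natDegree (zpoly n z').natDegree < n := max_lt h4 h5
  omega

/-- The count of fields generated by points of the curve `Φ = 0`. -/
theorem core_count (k : IntermediateField ℚ Qbar) [FiniteDimensional ℚ k]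
    (Φ : Polynomial (Polynomial k)) (hΦ : Φ.Monic) (he : 0 < Φ.natDegree)
    (hirr : Irreducible (bc Φ))
    (hsep : ∀ y, (bc Φ).evalEval 0 y = 0 → (Polynomial.derivative (bc Φ)).evalEval 0 y ≠ 0)
    (q s : Polynomial k) (hq : q.Monic) (hq0 : q.eval 0 ≠ 0)
    (hqs : ∀ τ : Qbar, (bc₁ q).eval τ = 0 →
      (bc Φ).evalEval τ ((bc₁ s).eval τ) = 0 ∧
      (Polynomial.derivative (bc Φ)).evalEval τ ((bc₁ s).eval τ) ≠ 0)
    (ε : ℝ) (hε : 0 < ε) :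
    ∃ n0 : ℕ, ∀ n ≥ n0, ∃ c : ℝ, 0 < c ∧ ∃ X0 : ℝ, ∀ X ≥ X0,
      ∃ Ks : Finset (IntermediateField ℚ Qbar),
        c * X ^ (1 / (2 * ((Module.finrank ℚ k * Φ.natDegree : ℕ) : ℝ) ^ 2) - ε) ≤ Ks.card ∧
        ∀ K ∈ Ks, ∃ hK : FiniteDimensional ℚ K,
          Module.finrank ℚ K =
            Module.finrank ℚ k * (Φ.natDegree * (q.natDegree + n) - q.natDegree) ∧
          |(absDiscr K hK : ℝ)| ≤ X ∧ ∃ t y : Qbar,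
            K = (IntermediateField.adjoin k {t}).restrictScalars ℚ ∧
            y ∈ IntermediateField.adjoin k {t} ∧ (bc Φ).evalEval t y = 0 ∧
            (minpoly k t).natDegree = Φ.natDegree * (q.natDegree + n) - q.natDegree := by
  classical
  set δ := Module.finrank ℚ k with hδ
  set e := Φ.natDegree with hedef
  set B := q.natDegree with hB
  have hδ0 : 0 < δ := Module.finrank_pos
  obtain ⟨n1, hn1⟩ := family k Φ hΦ he hirr hsep q s hq hq0 hqs
  obtain ⟨n2, hn2⟩ := exponent_bound (δ * e) B (Nat.mul_pos hδ0 he) ε hε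
  refine ⟨n1 + n2 + 1, fun n hn => ?_⟩
  obtain ⟨A, hA, C1, hC1, v, H0, hfam⟩ := hn1 n (by omega)
  set D' := e * (B + n) - B with hD'
  set D := δ * D' with hD
  have hnD' : n ≤ D' := by
    have := Nat.le_mul_of_pos_left (B + n) he
    omega
  have hDpos : 0 < D := Nat.mul_pos hδ0 (by omega)
  obtain ⟨hE1, hE2⟩ := hn2 n (by omega) D (by
    rw [hD, mul_assoc]; exact Nat.mul_le_mul_left _ (Nat.sub_le _ _))
  set E := n * (n + 1) / 2 - 2 * D with hE
  obtain ⟨C2, hC2, hfield⟩ := count_in_field D A hA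
  obtain ⟨C3, hC3, hdisc⟩ := exists_discr_bound k A hA D
  obtain ⟨c, hc, X0, hX01, hX0⟩ := exists_height D E hDpos (C3 * C1 ^ (D ^ 2)) (by positivity) _ hE2
    (H0 + 1)
  refine ⟨c / (2 * (e * (C2 * C1 ^ (2 * D)))), by positivity, X0, fun X hX => ?_⟩
  obtain ⟨H, hH, hHX, hHc⟩ := hX0 X hX
  have hH1 : (1 : ℝ) ≤ H := by exact_mod_cast (by omega : 1 ≤ H)
  have hCH : 1 ≤ C1 * H := by nlinarith
  obtain ⟨Zs, hZs, hZc, hZp⟩ := hfam H (by omega)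
  choose! t y h1 h2 h3 h4 h5 h6 using hZp
  set Kf : (Fin n → ℕ) → IntermediateField ℚ Qbar := fun z =>
    (IntermediateField.adjoin k {t z}).restrictScalars ℚ with hKf
  have hinteg : ∀ t : Qbar, IsIntegral k t := fun t =>
    ((Algebra.IsAlgebraic.tower_top (K := ℚ) k).isAlgebraic t).isIntegral
  have hfd : ∀ z, FiniteDimensional ℚ (Kf z) := fun z => by
    have := IntermediateField.adjoin.finiteDimensional (hinteg (t z))
    exact Module.Finite.trans (R := ℚ) k (IntermediateField.adjoin k {t z})
  have hfr : ∀ z ∈ Zs, Module.finrank ℚ (Kf z) = D := fun z hz => by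
    have h6 := Module.finrank_mul_finrank ℚ k (IntermediateField.adjoin k {t z})
    have h7 := IntermediateField.adjoin.finrank (hinteg (t z))
    change Module.finrank ℚ (IntermediateField.adjoin k {t z}) = D
    rw [← h6, h7, h3 z hz]
  have htK : ∀ z, t z ∈ Kf z := fun z => IntermediateField.mem_adjoin_simple_self k (t z)
  have hkK : ∀ z, k ≤ Kf z := fun z x hx =>
    (IntermediateField.adjoin k {t z}).algebraMap_mem ⟨x, hx⟩
  refine ⟨Zs.image Kf, ?_, ?_⟩
  · -- fibres of `z ↦ K_z`
    set M : ℝ := e * (C2 * (C1 * H) ^ (2 * D)) with hM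
    have hM0 : 0 ≤ M := by positivity
    have hfib : ∀ K ∈ Zs.image Kf, (Zs.filter fun z => Kf z = K).card ≤ ⌊M⌋₊ := by
      intro K hK
      obtain ⟨z0, hz0, rfl⟩ := Finset.mem_image.1 hK
      refine Nat.le_floor ?_
      set Fz := Zs.filter fun z => Kf z = Kf z0 with hFz
      have hcard : ((Fz.image t).card : ℝ) ≤ C2 * (C1 * H) ^ (2 * D) := by
        refine hfield (C1 * H) hCH (Kf z0) (hfd z0) (hfr z0 hz0) _ fun x hx => ?_
        obtain ⟨z, hz, rfl⟩ := Finset.mem_image.1 hx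
        obtain ⟨hz1, hz2⟩ := Finset.mem_filter.1 hz
        exact ⟨hz2 ▸ htK z, h4 z hz1, h5 z hz1⟩
      have hpair : Fz.card ≤ (Fz.image t).card * e := by
        rw [mul_comm]
        refine Finset.card_le_mul_card_image Fz e fun x hx => ?_
        refine le_trans (Finset.card_le_card_of_injOn (t :=
          ((bc Φ).map (Polynomial.evalRingHom x)).roots.toFinset) y ?_ ?_)
          ((Multiset.toFinset_card_le _).trans ((Polynomial.card_roots' _).trans
            (Polynomial.natDegree_map_le.trans Polynomial.natDegree_map_le)))
        · intro z hz
          obtain ⟨hz1, rfl⟩ := Finset.mem_filter.1 hz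
          have hz2 := (Finset.mem_filter.1 hz1).1
          rw [Finset.mem_coe, Multiset.mem_toFinset,
            Polynomial.mem_roots ((hΦ.map _).map _).ne_zero, Polynomial.IsRoot,
            eval_map_evalRingHom]
          exact h1 z hz2
        · intro z hz z' hz' hyy
          obtain ⟨hz1, hx1⟩ := Finset.mem_filter.1 hz
          obtain ⟨hz1', hx2⟩ := Finset.mem_filter.1 hz'
          have hz2 := (Finset.mem_filter.1 hz1).1
          have hz2' := (Finset.mem_filter.1 hz1').1
          have htt : t z = t z' := hx1.trans hx2.symm
          refine zev_injective k n (by omega) (t z) (by rw [h3 z hz2]; exact hnD') z z' ?_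
          rw [h6 z hz2]
          nth_rewrite 2 [htt]
          rw [h6 z' hz2', htt, hyy]
      calc (Fz.card : ℝ) ≤ (Fz.image t).card * e := by exact_mod_cast hpair
        _ ≤ C2 * (C1 * H) ^ (2 * D) * e := by gcongr
        _ = M := by rw [hM]; ring
    have h7 : Zs.card ≤ ⌊M⌋₊ * (Zs.image Kf).card := Finset.card_le_mul_card_image Zs _ hfib
    have h8 : (Zs.card : ℝ) ≤ M * (Zs.image Kf).card := by
      have : (Zs.card : ℝ) ≤ (⌊M⌋₊ : ℝ) * (Zs.image Kf).card := by exact_mod_cast h7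
      refine this.trans ?_
      gcongr
      exact Nat.floor_le hM0
    have h9 : (H : ℝ) ^ (n * (n + 1) / 2) ≤ 2 * Zs.card := by
      rw [card_zbox] at hZc
      exact_mod_cast hZc
    have h10 : (H : ℝ) ^ (n * (n + 1) / 2) = (H : ℝ) ^ E * (H : ℝ) ^ (2 * D) := by
      rw [← pow_add]; congr 1; omega
    have h11 : (H : ℝ) ^ E ≤ 2 * (e * (C2 * C1 ^ (2 * D))) * (Zs.image Kf).card := by
      have hpos : (0 : ℝ) < (H : ℝ) ^ (2 * D) := by positivity
      refine le_of_mul_le_mul_right ?_ hpos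
      calc (H : ℝ) ^ E * (H : ℝ) ^ (2 * D) ≤ 2 * (M * (Zs.image Kf).card) := by
            rw [← h10]; linarith
        _ = _ := by rw [hM, mul_pow]; ring
    rw [div_mul_eq_mul_div, div_le_iff₀ (by positivity)]
    linarith [hHc.trans h11]
  · intro K hK
    obtain ⟨z, hz, rfl⟩ := Finset.mem_image.1 hK
    refine ⟨hfd z, hfr z hz, ?_, t z, y z, rfl, h2 z hz, h1 z hz, h3 z hz⟩
    refine (hdisc (C1 * H) hCH (Kf z) (hfd z) (hkK z) (t z) (htK z) (h4 z hz) (h5 z hz) ?_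
      (hfr z hz)).trans ?_
    · rw [hfr z hz, h3 z hz]
    · rw [mul_pow, ← mul_assoc]
      exact hHX

/-! ### Homogeneous factors and Galois descent -/

/-- The weight map `x_j ↦ x_j T` separates homogeneous components. -/
def wt {σ R : Type*} [CommRing R] : MvPolynomial σ R →ₐ[R] Polynomial (MvPolynomial σ R) :=
  aeval fun j => Polynomial.C (X j) * Polynomial.X

theorem wt_monomial {σ R : Type*} [CommRing R] (s : σ →₀ ℕ) (a : R) :
    wt (monomial s a) = Polynomial.monomial s.degree (monomial s a) := by
  have hC : (algebraMap R (Polynomial (MvPolynomial σ R))) a = Polynomial.C (C a) := rfl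
  rw [wt, aeval_monomial, Finsupp.prod]
  simp_rw [mul_pow]
  rw [Finset.prod_mul_distrib, Finset.prod_pow_eq_pow_sum, hC, monomial_eq, Finsupp.prod,
    ← Polynomial.C_mul_X_pow_eq_monomial]
  simp only [map_mul, map_prod, map_pow]
  rw [mul_assoc]
  rfl

theorem wt_of_homogeneous {σ R : Type*} [CommRing R] {p : MvPolynomial σ R} {d : ℕ}
    (hp : p.IsHomogeneous d) : wt p = Polynomial.monomial d p := by
  conv_lhs => rw [p.as_sum]
  conv_rhs => rw [p.as_sum]
  rw [map_sum, map_sum]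
  refine Finset.sum_congr rfl fun s hs => ?_
  have h : s.degree = d := (hp.degree_eq_sum_deg_support hs).symm
  rw [wt_monomial, h]

theorem isHomogeneous_of_wt {σ R : Type*} [CommRing R] {p : MvPolynomial σ R} {d : ℕ}
    {q : MvPolynomial σ R} (hp : wt p = Polynomial.monomial d q) : p.IsHomogeneous d := by
  have h1 : ∀ r : MvPolynomial σ R, (wt r).coeff d = homogeneousComponent d r := by
    intro r
    induction r using MvPolynomial.induction_on' with
    | monomial s a =>
      rw [wt_monomial, Polynomial.coeff_monomial]
      split_ifs with h
      · exact (homogeneousComponent_eq_self (isHomogeneous_monomial a h)).symm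
      · exact ((homogeneousComponent_of_mem (isHomogeneous_monomial a rfl)).trans
          (by rw [if_neg (fun h' => h h'.symm)])).symm
    | add p q h1 h2 => rw [map_add, map_add, Polynomial.coeff_add, h1, h2]
  have h2 : ∀ r : MvPolynomial σ R, (wt r).eval 1 = r := by
    intro r
    have : ((Polynomial.evalRingHom (1 : MvPolynomial σ R)).comp
        (wt : MvPolynomial σ R →ₐ[R] _).toRingHom) = RingHom.id _ := by
      apply MvPolynomial.ringHom_ext
      · intro a
        simp only [RingHom.comp_apply, AlgHom.toRingHom_eq_coe, RingHom.coe_coe, RingHom.id_apply]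
        rw [← MvPolynomial.algebraMap_eq, AlgHom.commutes]
        change (Polynomial.C (C a)).eval 1 = _
        simp [MvPolynomial.algebraMap_eq]
      · intro j
        simp [wt]
    exact RingHom.congr_fun this r
  have h3 : p = q := by
    rw [← h2 p, hp]; simp
  have h4 := h1 p
  rw [hp, Polynomial.coeff_monomial, if_pos rfl, ← h3] at h4
  rw [h4]
  exact homogeneousComponent_isHomogeneous d p

/-- Factors of homogeneous polynomials are homogeneous: the weight map turns the product into a
monomial, whose factors have equal degree and trailing degree. -/
theorem isHomogeneous_factor {σ R : Type*} [CommRing R] [IsDomain R] {p q : MvPolynomial σ R}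
    {d : ℕ} (h : (p * q).IsHomogeneous d) (h0 : p * q ≠ 0) : ∃ e, p.IsHomogeneous e := by
  have h1 := wt_of_homogeneous h
  rw [map_mul] at h1
  have hne : wt p * wt q ≠ 0 := by
    rw [h1]; simpa using h0
  have hp := left_ne_zero_of_mul hne
  have hq := right_ne_zero_of_mul hne
  have h2 := Polynomial.natDegree_mul hp hq
  have h3 := Polynomial.natTrailingDegree_mul hp hq
  rw [h1, Polynomial.natDegree_monomial_eq _ h0] at h2
  rw [h1, Polynomial.natTrailingDegree_monomial h0] at h3
  have h4 := (wt p).natTrailingDegree_le_natDegree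
  have h5 := (wt q).natTrailingDegree_le_natDegree
  have h6 : (wt p).natDegree = (wt p).natTrailingDegree := by omega
  refine ⟨(wt p).natDegree, isHomogeneous_of_wt (q := (wt p).coeff (wt p).natDegree) ?_⟩
  ext1 n
  rw [Polynomial.coeff_monomial]
  split_ifs with h
  · rw [h]
  · rcases lt_or_gt_of_ne h with h | h
    · exact Polynomial.coeff_eq_zero_of_natDegree_lt h
    · exact Polynomial.coeff_eq_zero_of_lt_natTrailingDegree (by omega)

theorem exists_galois_lift (k : IntermediateField ℚ Qbar) (φ : k →ₐ[ℚ] Qbar) :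
    ∃ σ : Qbar ≃ₐ[ℚ] Qbar, ∀ x : k, σ x = φ x := by
  obtain ⟨ψ, hψ⟩ := IntermediateField.exists_algHom_of_splits
    (fun s => ⟨(Algebra.IsAlgebraic.isAlgebraic (R := ℚ) s).isIntegral,
      IsAlgClosed.splits _⟩) φ
  refine ⟨AlgEquiv.ofBijective ψ (Algebra.IsAlgebraic.algHom_bijective ψ), fun x => ?_⟩
  rw [← hψ]; rfl

/-- Galois descent for polynomials. -/
theorem exists_map_of_fixed {τ : Type*} (p : MvPolynomial τ Qbar)
    (h : ∀ σ : Qbar ≃ₐ[ℚ] Qbar, map (σ : Qbar →+* Qbar) p = p) :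
    ∃ p0 : MvPolynomial τ ℚ, map (algebraMap ℚ Qbar) p0 = p := by
  have : p ∈ Set.range (map (algebraMap ℚ Qbar)) := by
    rw [mem_range_map_iff_coeffs_subset]
    intro x hx
    obtain ⟨s, hs, rfl⟩ := mem_coeffs_iff.mp hx
    have := (InfiniteGalois.mem_bot_iff_fixed (k := ℚ) (coeff s p)).mpr fun σ => by
      conv_rhs => rw [← h σ, coeff_map]
      rfl
    exact IntermediateField.mem_bot.mp this
  exact this

theorem map_galois_map {τ : Type*} (σ : Qbar ≃ₐ[ℚ] Qbar) (f : MvPolynomial τ ℚ) :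
    map (σ : Qbar →+* Qbar) (map (algebraMap ℚ Qbar) f) = map (algebraMap ℚ Qbar) f := by
  rw [map_map]
  congr 2
  exact Subsingleton.elim _ _

theorem irreducible_map_galois {τ : Type*} (σ : Qbar ≃ₐ[ℚ] Qbar) (p : MvPolynomial τ Qbar)
    (hp : Irreducible p) : Irreducible (map (σ : Qbar →+* Qbar) p) :=
  (MulEquiv.irreducible_iff (mapEquiv τ σ.toRingEquiv)).mpr hp

theorem eval_map_galois {τ : Type*} (σ : Qbar ≃ₐ[ℚ] Qbar) (p : MvPolynomial τ Qbar)
    (a : τ → Qbar) : eval (fun j => σ (a j)) (map (σ : Qbar →+* Qbar) p) = σ (eval a p) := by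
  rw [eval_map]
  exact (eval₂_comp_left (σ : Qbar →+* Qbar) (RingHom.id _) a p).symm

/-- Associated polynomials with the value `1` at a common point are equal. -/
theorem eq_of_dvd_normalised {τ : Type*} {p q : MvPolynomial τ Qbar} {a : τ → Qbar}
    (hp : Irreducible p) (hq : Irreducible q) (h : p ∣ q) (hpa : eval a p = 1)
    (hqa : eval a q = 1) : p = q := by
  obtain ⟨u, rfl⟩ := h
  have hu : IsUnit u := (hq.isUnit_or_isUnit rfl).resolve_left hp.not_isUnit
  obtain ⟨r, -, rfl⟩ := isUnit_iff_eq_C_of_isReduced.mp hu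
  rw [map_mul, hpa, eval_C, one_mul] at hqa
  rw [hqa, C_1, mul_one]

/-! ### Geometrically irreducible factors -/

/-- A normalised absolutely irreducible factor `g` of `f`, with field of definition `k`. -/
theorem exists_normalised_factor {m d : ℕ} (f : MvPolynomial (Fin m) ℚ) (hirr : Irreducible f)
    (hhom : f.IsHomogeneous d) (p : Fin m → ℚ) (hp : eval p f ≠ 0) :
    ∃ (k : IntermediateField ℚ Qbar) (_ : FiniteDimensional ℚ k) (S : Set Qbar)
      (g : MvPolynomial (Fin m) k) (e : ℕ), g.IsHomogeneous e ∧
      eval (fun j => algebraMap ℚ k (p j)) g = 1 ∧ Irreducible (map (algebraMap k Qbar) g) ∧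
      map (algebraMap k Qbar) g ∣ map (algebraMap ℚ Qbar) f ∧
      k = IntermediateField.adjoin ℚ S ∧ S = {x | ∃ s, x = coeff s (map (algebraMap k Qbar) g)} := by
  classical
  have hf0 : map (algebraMap ℚ Qbar) f ≠ 0 := by
    rw [Ne, map_eq_zero_iff _ (map_injective _ (algebraMap ℚ Qbar).injective)]
    exact hirr.ne_zero
  have hfu : ¬ IsUnit (map (algebraMap ℚ Qbar) f) := by
    intro h
    obtain ⟨r, hr, h⟩ := isUnit_iff_eq_C_of_isReduced.mp h
    apply hirr.not_isUnit
    have h1 : f = C (coeff 0 f) := by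
      apply map_injective _ (algebraMap ℚ Qbar).injective
      rw [map_C, h, ← coeff_map, h, coeff_C, if_pos rfl]
    rw [isUnit_iff_eq_C_of_isReduced]
    refine ⟨_, isUnit_iff_ne_zero.mpr ?_, h1⟩
    intro h2
    rw [h2, C_0] at h1
    exact hirr.ne_zero h1
  obtain ⟨g', hg', h, hh⟩ := WfDvdMonoid.exists_irreducible_factor hfu hf0
  have hep : ∀ q : MvPolynomial (Fin m) ℚ, eval (fun j => algebraMap ℚ Qbar (p j))
      (map (algebraMap ℚ Qbar) q) = algebraMap ℚ Qbar (eval p q) := by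
    intro q
    rw [eval_map]
    exact (eval₂_comp_left (algebraMap ℚ Qbar) (RingHom.id _) p q).symm
  have hg'p : eval (fun j => algebraMap ℚ Qbar (p j)) g' ≠ 0 := by
    intro h0
    have := hep f
    rw [hh, map_mul, h0, zero_mul] at this
    exact hp ((map_eq_zero _).mp this.symm)
  set w := eval (fun j => algebraMap ℚ Qbar (p j)) g' with hw
  have hwu : IsUnit (C w⁻¹ : MvPolynomial (Fin m) Qbar) :=
    (isUnit_iff_ne_zero.mpr (inv_ne_zero hg'p)).map C
  set g₁ := C w⁻¹ * g' with hg₁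
  have hg₁irr : Irreducible g₁ := (irreducible_isUnit_mul hwu).mpr hg'
  obtain ⟨e, he'⟩ := isHomogeneous_factor (p := g') (q := h) (d := d)
    (by rw [← hh]; exact hhom.map _) (by rw [← hh]; exact hf0)
  have he : g₁.IsHomogeneous e := he'.C_mul _
  have hg₁p : eval (fun j => algebraMap ℚ Qbar (p j)) g₁ = 1 := by
    rw [hg₁, map_mul, eval_C, ← hw, inv_mul_cancel₀ hg'p]
  set k := IntermediateField.adjoin ℚ (g₁.coeffs : Set Qbar ) with hk
  have hkfin : FiniteDimensional ℚ k :=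
    IntermediateField.finiteDimensional_adjoin fun x _ =>
      (Algebra.IsAlgebraic.isAlgebraic (R := ℚ) x).isIntegral
  have hgk : g₁ ∈ Set.range (map (algebraMap k Qbar)) := by
    rw [mem_range_map_iff_coeffs_subset]
    intro x hx
    exact ⟨⟨x, IntermediateField.subset_adjoin _ _ hx⟩, rfl⟩
  obtain ⟨g, hg⟩ := hgk
  refine ⟨k, hkfin, {x | ∃ s, x = coeff s (map (algebraMap k Qbar) g)}, g, e,
    IsHomogeneous.of_map (algebraMap k Qbar).injective (by rw [hg]; exact he), ?_,
    by rw [hg]; exact hg₁irr, ?_, ?_, rfl⟩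
  · apply (algebraMap k Qbar).injective
    rw [map_one, ← hg₁p, ← hg, eval_map]
    exact (eval₂_comp_left (algebraMap k Qbar) (RingHom.id _) _ g)
  · rw [hg, hg₁, hwu.mul_left_dvd]
    exact ⟨h, hh⟩
  · apply le_antisymm
    · refine hk.le.trans ?_
      apply IntermediateField.adjoin.mono
      intro x hx
      obtain ⟨s, -, rfl⟩ := mem_coeffs_iff.mp hx
      exact ⟨s, by rw [hg]⟩
    · rw [IntermediateField.adjoin_le_iff]
      rintro x ⟨s, rfl⟩
      rw [hg]
      by_cases h0 : coeff s g₁ = 0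
      · rw [h0]; exact zero_mem _
      · exact IntermediateField.subset_adjoin _ _ (coeff_mem_coeffs s h0)

/-- A geometrically irreducible factor `g` of `f`, with field of definition `k` and normalised by
`g(p) = 1`. Over `ℚ̄` the polynomial `f` is a constant times the product of the conjugates of `g`, so
every zero of `f` has a conjugate which is a zero of `g`; a smooth zero of `f` lies on one conjugate
of `g` only, so the field of a smooth zero lying on `g` contains `k`. -/
theorem exists_geometric_factor {m d : ℕ} (f : MvPolynomial (Fin m) ℚ) (hirr : Irreducible f)
    (hhom : f.IsHomogeneous d) (p : Fin m → ℚ) (hp : eval p f ≠ 0) :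
    ∃ (k : IntermediateField ℚ Qbar) (_ : FiniteDimensional ℚ k)
      (g : MvPolynomial (Fin m) k) (e : ℕ), g.IsHomogeneous e ∧ Module.finrank ℚ k * e = d ∧
      eval (fun j => algebraMap ℚ k (p j)) g = 1 ∧ Irreducible (map (algebraMap k Qbar) g) ∧
      map (algebraMap k Qbar) g ∣ map (algebraMap ℚ Qbar) f ∧
      (∀ a : Fin m → Qbar, aeval a f = 0 → ∃ σ : Qbar ≃ₐ[ℚ] Qbar,
        aeval (fun j => σ (a j)) g = 0) ∧
      (∀ (a : Fin m → Qbar) (L : IntermediateField ℚ Qbar), aeval a g = 0 →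
        (∃ j, aeval a (pderiv j f) ≠ 0) → (∀ j, a j ∈ L) → k ≤ L) := by
  classical
  obtain ⟨k, hkfin, S, g, e, hge, hg1, hgirr, hgdvd, hkS, hS⟩ :=
    exists_normalised_factor f hirr hhom p hp
  have hf0 : map (algebraMap ℚ Qbar) f ≠ 0 := by
    rw [Ne, map_eq_zero_iff _ (map_injective _ (algebraMap ℚ Qbar).injective)]
    exact hirr.ne_zero
  set gh := map (algebraMap k Qbar) g with hgh
  let Gf : (k →ₐ[ℚ] Qbar) → MvPolynomial (Fin m) Qbar := fun φ => map (φ : k →+* Qbar) g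
  have hGσ : ∀ (φ : k →ₐ[ℚ] Qbar) (σ : Qbar ≃ₐ[ℚ] Qbar), (∀ x : k, σ x = φ x) →
      Gf φ = map (σ : Qbar →+* Qbar) gh := by
    intro φ σ h
    rw [hgh, map_map]
    change map (φ : k →+* Qbar) g = _
    congr 2
    ext x
    exact (h x).symm
  have hGirr : ∀ φ, Irreducible (Gf φ) := by
    intro φ
    obtain ⟨σ, hσ⟩ := exists_galois_lift k φ
    rw [hGσ φ σ hσ]
    exact irreducible_map_galois σ _ hgirr
  have hGdvd : ∀ φ, Gf φ ∣ map (algebraMap ℚ Qbar) f := by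
    intro φ
    obtain ⟨σ, hσ⟩ := exists_galois_lift k φ
    rw [hGσ φ σ hσ, ← map_galois_map σ f]
    exact map_dvd _ hgdvd
  have hG1 : ∀ φ, eval (fun j => algebraMap ℚ Qbar (p j)) (Gf φ) = 1 := by
    intro φ
    have := congrArg φ hg1
    rw [map_one] at this
    rw [← this]
    change eval _ (map (φ : k →+* Qbar) g) = _
    rw [eval_map]
    refine Eq.trans ?_ (eval₂_comp_left (φ : k →+* Qbar) (RingHom.id _) _ g).symm
    congr 1
    ext j
    exact (φ.commutes _).symm
  have hGinj : Function.Injective Gf := by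
    intro φ ψ h
    refine IntermediateField.algHom_ext_of_eq_adjoin ℚ hkS fun x hx => ?_
    have hx' := hx
    rw [hS] at hx'
    obtain ⟨s, hs⟩ := hx'
    have h2 := congrArg (coeff s) h
    change coeff s (map (φ : k →+* Qbar) g) = coeff s (map (ψ : k →+* Qbar) g) at h2
    rw [coeff_map, coeff_map] at h2
    have h3 : ∀ hx, (⟨x, hx⟩ : k) = coeff s g := by
      intro hx
      apply (algebraMap k Qbar).injective
      rw [← coeff_map]
      exact hs
    rw [h3]
    exact h2
  have hrel : ∀ φ ψ, φ ≠ ψ → IsRelPrime (Gf φ) (Gf ψ) := by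
    intro φ ψ h
    rw [(hGirr φ).isRelPrime_iff_not_dvd]
    intro h2
    exact h (hGinj (eq_of_dvd_normalised (hGirr φ) (hGirr ψ) h2 (hG1 φ) (hG1 ψ)))
  set N := ∏ φ, Gf φ with hN
  obtain ⟨h, hh⟩ : N ∣ map (algebraMap ℚ Qbar) f :=
    Fintype.prod_dvd_of_isRelPrime (fun φ ψ h => hrel φ ψ h) hGdvd
  have hNfix : ∀ σ : Qbar ≃ₐ[ℚ] Qbar, map (σ : Qbar →+* Qbar) N = N := by
    intro σ
    rw [hN, map_prod]
    let E : (k →ₐ[ℚ] Qbar) ≃ (k →ₐ[ℚ] Qbar) :=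
      { toFun := fun φ => (σ : Qbar →ₐ[ℚ] Qbar).comp φ
        invFun := fun φ => (σ.symm : Qbar →ₐ[ℚ] Qbar).comp φ
        left_inv := fun φ => by ext x; simp
        right_inv := fun φ => by ext x; simp }
    refine Fintype.prod_equiv E _ _ fun φ => ?_
    change map (σ : Qbar →+* Qbar) (map (φ : k →+* Qbar) g) = map _ g
    rw [map_map]
    rfl
  have hNne : N ≠ 0 := fun h0 => hf0 (by rw [hh, h0, zero_mul])
  have hhfix : ∀ σ : Qbar ≃ₐ[ℚ] Qbar, map (σ : Qbar →+* Qbar) h = h := by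
    intro σ
    apply mul_left_cancel₀ hNne
    conv_lhs => rw [← hNfix σ]
    rw [← map_mul, ← hh, map_galois_map, hh]
  obtain ⟨N0, hN0⟩ := exists_map_of_fixed N hNfix
  obtain ⟨h0, hh0⟩ := exists_map_of_fixed h hhfix
  have hf : f = N0 * h0 := by
    apply map_injective _ (algebraMap ℚ Qbar).injective
    rw [map_mul, hN0, hh0, hh]
  have hunit : IsUnit h0 := by
    refine (hirr.isUnit_or_isUnit hf).resolve_left fun hu => ?_
    have h1 : IsUnit N := by rw [← hN0]; exact hu.map _
    have h2 : Gf k.val ∣ N := Finset.dvd_prod_of_mem Gf (Finset.mem_univ _)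
    exact (hGirr k.val).not_isUnit (isUnit_of_dvd_unit h2 h1)
  obtain ⟨u, hu, hu'⟩ := isUnit_iff_eq_C_of_isReduced.mp hunit
  have hfac : map (algebraMap ℚ Qbar) f = N * C (algebraMap ℚ Qbar u) := by
    rw [hh, ← hh0, hu', map_C]
  have hgv : Gf k.val = gh := rfl
  have haeval : ∀ (a : Fin m → Qbar), aeval a g = eval a gh := by
    intro a
    rw [hgh, eval_map, aeval_def]
  have haevalf : ∀ (a : Fin m → Qbar) (q : MvPolynomial (Fin m) ℚ),
      aeval a q = eval a (map (algebraMap ℚ Qbar) q) := by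
    intro a q
    rw [eval_map, aeval_def]
  refine ⟨k, hkfin, g, e, hge, ?_, hg1, hgirr, hgdvd, ?_, ?_⟩
  · have h1 : N.IsHomogeneous (∑ φ : k →ₐ[ℚ] Qbar, e) :=
      IsHomogeneous.prod _ _ _ fun φ _ => hge.map _
    have h2 := (h1.C_mul (algebraMap ℚ Qbar u))
    rw [mul_comm, ← hfac] at h2
    have h3 := h2.inj_right (hhom.map _) hf0
    rw [← h3, Finset.sum_const, Finset.card_univ, AlgHom.card, smul_eq_mul]
  · intro a ha
    rw [haevalf, hfac, map_mul, eval_C, mul_eq_zero] at ha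
    have h1 := ha.resolve_right (by rw [map_eq_zero]; exact hu.ne_zero)
    rw [hN, map_prod, Finset.prod_eq_zero_iff] at h1
    obtain ⟨φ, -, hφ⟩ := h1
    obtain ⟨σ, hσ⟩ := exists_galois_lift k φ
    refine ⟨σ.symm, ?_⟩
    rw [haeval]
    apply σ.injective
    rw [map_zero, ← eval_map_galois, ← hGσ φ σ hσ]
    simpa using hφ
  · rintro a L ha ⟨j, hj⟩ haL
    rw [← InfiniteGalois.fixedField_fixingSubgroup L]
    rw [IntermediateField.le_iff_le]
    intro τ hτ
    rw [IntermediateField.mem_fixingSubgroup_iff] at hτ ⊢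
    by_contra hcon
    have hne : (τ : Qbar →ₐ[ℚ] Qbar).comp k.val ≠ k.val := by
      intro h
      exact hcon fun x hx => AlgHom.congr_fun h ⟨x, hx⟩
    have e1 : eval a (Gf k.val) = 0 := by rw [hgv, ← haeval, ha]
    have e2 : eval a (Gf ((τ : Qbar →ₐ[ℚ] Qbar).comp k.val)) = 0 := by
      rw [hGσ _ τ fun x => rfl]
      have h1 := eval_map_galois τ gh a
      rw [← haeval, ha, map_zero] at h1
      rw [← h1]
      congr 2
      ext j
      exact (hτ _ (haL j)).symm
    apply hj
    rw [haevalf, ← pderiv_map]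
    obtain ⟨r, hr⟩ := (hrel _ _ hne).mul_dvd (hGdvd _) (hGdvd _)
    rw [hr]
    simp only [Derivation.leibniz, smul_eq_mul, map_add, map_mul, e1, zero_mul, mul_zero, zero_add,
      add_zero, mul_eq_zero]
    exact Or.inr (Or.inl e2)

/-! ### Sections of a hypersurface by curves -/

/-- The polynomial `g(Y, r_1, …, r_N)` in the variable `Y`, with coefficients taken along `j`. -/
def cur {k A : Type*} [CommRing k] [CommRing A] (j : k →+* A) {N : ℕ}
    (g : MvPolynomial (Fin (N + 1)) k) (r : Fin N → A) : Polynomial A :=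
  eval₂Hom (Polynomial.C.comp j)
    (Fin.cons Polynomial.X fun i => Polynomial.C (r i) : Fin (N + 1) → Polynomial A) g

section cur
variable {k A B : Type*} [CommRing k] [CommRing A] [CommRing B] {N : ℕ}

theorem cur_eq (j : k →+* A) (g : MvPolynomial (Fin (N + 1)) k) (r : Fin N → A) :
    cur j g r = (finSuccEquiv k N g).map (eval₂Hom j r) := by
  have : eval₂Hom (Polynomial.C.comp j)
      (Fin.cons Polynomial.X fun i => Polynomial.C (r i) : Fin (N + 1) → Polynomial A) =
      (Polynomial.mapRingHom (eval₂Hom j r)).comp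
        (finSuccEquiv k N : MvPolynomial (Fin (N + 1)) k →+* _) := by
    rw [finSuccEquiv_eq]
    apply MvPolynomial.ringHom_ext
    · intro a; simp
    · intro i
      refine Fin.cases ?_ (fun i => ?_) i <;> simp
  exact RingHom.congr_fun this g

theorem cur_map (j : k →+* A) (θ : A →+* B) (g : MvPolynomial (Fin (N + 1)) k) (r : Fin N → A) :
    (cur j g r).map θ = cur (θ.comp j) g fun i => θ (r i) := by
  have : (Polynomial.mapRingHom θ).comp (eval₂Hom (Polynomial.C.comp j)
      (Fin.cons Polynomial.X fun i => Polynomial.C (r i) : Fin (N + 1) → Polynomial A)) =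
      eval₂Hom (Polynomial.C.comp (θ.comp j))
      (Fin.cons Polynomial.X fun i => Polynomial.C (θ (r i)) : Fin (N + 1) → Polynomial B) := by
    apply MvPolynomial.ringHom_ext
    · intro a; simp
    · intro i
      refine Fin.cases ?_ (fun i => ?_) i <;> simp
  exact RingHom.congr_fun this g

theorem cur_eval (j : k →+* A) (g : MvPolynomial (Fin (N + 1)) k) (r : Fin N → A) (y : A) :
    (cur j g r).eval y = eval₂ j (Fin.cons y r : Fin (N + 1) → A) g := by
  have : (Polynomial.evalRingHom y).comp (eval₂Hom (Polynomial.C.comp j)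
      (Fin.cons Polynomial.X fun i => Polynomial.C (r i) : Fin (N + 1) → Polynomial A)) =
      eval₂Hom j (Fin.cons y r : Fin (N + 1) → A) := by
    apply MvPolynomial.ringHom_ext
    · intro a; simp
    · intro i
      refine Fin.cases ?_ (fun i => ?_) i <;> simp
  exact RingHom.congr_fun this g

theorem cur_map_left (i : A →+* k) (j : k →+* B) (g : MvPolynomial (Fin (N + 1)) A)
    (r : Fin N → B) : cur j (map i g) r = cur (j.comp i) g r := by
  rw [cur, cur, coe_eval₂Hom, eval₂_map]
  rfl

theorem cur_mul (j : k →+* A) (g h : MvPolynomial (Fin (N + 1)) k) (r : Fin N → A) :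
    cur j (g * h) r = cur j g r * cur j h r := map_mul _ _ _

theorem cur_derivative (j : k →+* A) (g : MvPolynomial (Fin (N + 1)) k) (r : Fin N → A) :
    Polynomial.derivative (cur j g r) = cur j (pderiv 0 g) r := by
  induction g using MvPolynomial.induction_on with
  | C a => simp [cur]
  | add p q hp hq =>
    have h1 : cur j (p + q) r = cur j p r + cur j q r := map_add _ _ _
    have h2 : cur j (pderiv 0 p + pderiv 0 q) r = cur j (pderiv 0 p) r + cur j (pderiv 0 q) r :=
      map_add _ _ _
    rw [h1, map_add, map_add, h2, hp, hq]
  | mul_X p i hp =>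
    have h2 : ∀ p q : MvPolynomial (Fin (N + 1)) k, cur j (p + q) r = cur j p r + cur j q r :=
      fun p q => map_add _ _ _
    rw [cur_mul, pderiv_mul, h2, cur_mul, cur_mul, Polynomial.derivative_mul, hp]
    congr 2
    refine Fin.cases ?_ (fun i => ?_) i
    · rw [pderiv_X_self]; simp [cur]
    · rw [pderiv_X_of_ne (Fin.succ_ne_zero i)]; simp [cur]

theorem finSucc_monic {e : ℕ} (g : MvPolynomial (Fin (N + 1)) k) (hg : g.IsHomogeneous e)
    (h1 : eval (Fin.cons 1 fun _ => 0 : Fin (N + 1) → k) g = 1) :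
    (finSuccEquiv k N g).natDegree ≤ e ∧ (finSuccEquiv k N g).coeff e = 1 := by
  have hdeg : (finSuccEquiv k N g).natDegree ≤ e := by
    rw [natDegree_finSuccEquiv]
    exact (degreeOf_le_totalDegree g 0).trans hg.totalDegree_le
  refine ⟨hdeg, ?_⟩
  have h0 : ∀ i, i < e → eval (fun _ => (0 : k)) ((finSuccEquiv k N g).coeff i) = 0 := by
    intro i hi
    have h := hg.finSuccEquiv_coeff_isHomogeneous i (e - i) (by omega)
    have h2 : eval (0 : Fin N → k) ((finSuccEquiv k N g).coeff i) = 0 := by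
      rw [eval_zero, constantCoeff_eq]
      apply h.coeff_eq_zero
      rw [map_zero]
      omega
    exact h2
  have hhom := hg.finSuccEquiv_coeff_isHomogeneous e 0 (by omega)
  have hC : (finSuccEquiv k N g).coeff e = C (coeff 0 ((finSuccEquiv k N g).coeff e)) :=
    (totalDegree_eq_zero_iff_eq_C).mp ((totalDegree_zero_iff_isHomogeneous _).mpr hhom)
  rw [eval_eq_eval_mv_eval', Polynomial.eval_eq_sum_range' (n := e + 1)
    (lt_of_le_of_lt Polynomial.natDegree_map_le (by omega)), Finset.sum_range_succ,
    Finset.sum_eq_zero, zero_add, Polynomial.coeff_map, hC, eval_C, one_pow, mul_one] at h1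
  · rw [hC, h1, C_1]
  · intro i hi
    rw [Polynomial.coeff_map, h0 i (Finset.mem_range.mp hi), zero_mul]

theorem cur_monic [Nontrivial A] {e : ℕ} (j : k →+* A) (g : MvPolynomial (Fin (N + 1)) k)
    (hg : g.IsHomogeneous e) (h1 : eval (Fin.cons 1 fun _ => 0 : Fin (N + 1) → k) g = 1)
    (r : Fin N → A) : (cur j g r).Monic ∧ (cur j g r).natDegree = e := by
  obtain ⟨h2, h3⟩ := finSucc_monic g hg h1
  have h4 : (cur j g r).natDegree ≤ e := by
    rw [cur_eq]; exact Polynomial.natDegree_map_le.trans h2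
  have h5 : (cur j g r).coeff e = 1 := by
    rw [cur_eq, Polynomial.coeff_map, h3, map_one]
  refine ⟨Polynomial.monic_of_natDegree_le_of_coeff_eq_one e h4 h5, le_antisymm h4 ?_⟩
  exact Polynomial.le_natDegree_of_ne_zero (by rw [h5]; exact one_ne_zero)

theorem eval₂_smul_of_homogeneous {σ : Type*} {e : ℕ} (j : k →+* A) (g : MvPolynomial σ k)
    (hg : g.IsHomogeneous e) (l : A) (r : σ → A) :
    eval₂ j (fun i => l * r i) g = l ^ e * eval₂ j r g := by
  rw [eval₂_eq, eval₂_eq, Finset.mul_sum]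
  refine Finset.sum_congr rfl fun s hs => ?_
  have h : e = ∑ i ∈ s.support, s i := hg.degree_eq_sum_deg_support hs
  simp_rw [mul_pow]
  rw [Finset.prod_mul_distrib, Finset.prod_pow_eq_pow_sum, ← h]
  ring

theorem cur_scale [Nontrivial A] {e : ℕ} (j : k →+* A) (g : MvPolynomial (Fin (N + 1)) k)
    (hg : g.IsHomogeneous e) (h1 : eval (Fin.cons 1 fun _ => 0 : Fin (N + 1) → k) g = 1)
    (l : A) (r : Fin N → A) : cur j g (fun i => l * r i) = (cur j g r).scaleRoots l := by
  ext1 i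
  rw [Polynomial.coeff_scaleRoots, (cur_monic j g hg h1 r).2]
  rcases le_or_gt i e with hi | hi
  · rw [cur_eq, cur_eq, Polynomial.coeff_map, Polynomial.coeff_map, mul_comm]
    exact eval₂_smul_of_homogeneous j _
      (hg.finSuccEquiv_coeff_isHomogeneous i (e - i) (by omega)) l r
  · rw [Polynomial.coeff_eq_zero_of_natDegree_lt, Polynomial.coeff_eq_zero_of_natDegree_lt,
      zero_mul]
    · rw [(cur_monic j g hg h1 r).2]; exact hi
    · rw [(cur_monic j g hg h1 _).2]; exact hi

end cur

theorem irreducible_scaleRoots {L : Type*} [Field L] (p : Polynomial L) (hp : p.Monic)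
    (hirr : Irreducible p) (l : L) (hl : l ≠ 0) : Irreducible (p.scaleRoots l) := by
  rw [Polynomial.Monic.irreducible_iff_natDegree ((Polynomial.monic_scaleRoots_iff l).mpr hp)]
  rw [Polynomial.Monic.irreducible_iff_natDegree hp] at hirr
  have hinv : ∀ q : Polynomial L, (q.scaleRoots l).scaleRoots l⁻¹ = q := by
    intro q
    rw [← Polynomial.scaleRoots_mul, mul_inv_cancel₀ hl, Polynomial.scaleRoots_one]
  refine ⟨fun h => hirr.1 ?_, fun a b ha hb hab => ?_⟩
  · rw [← hinv p, h]
    simp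
  · have := hirr.2 (a.scaleRoots l⁻¹) (b.scaleRoots l⁻¹)
      ((Polynomial.monic_scaleRoots_iff _).mpr ha) ((Polynomial.monic_scaleRoots_iff _).mpr hb)
      (by rw [← Polynomial.mul_scaleRoots_of_noZeroDivisors, hab, hinv])
    simpa only [Polynomial.natDegree_scaleRoots] using this

/-! ### A Bertini theorem for curve sections -/

/-- The coordinates `(1, t, γ_1(t) + c_1 Q(t), …)` of a curve, over a ring of parameters. -/
def crv {K R : Type*} [CommRing K] [CommRing R] (i : K →+* R) {n : ℕ} (γ : Fin n → Polynomial K)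
    (Q : Polynomial K) (c : Fin n → R) : Fin (n + 2) → Polynomial R :=
  Fin.cons 1 (Fin.cons Polynomial.X fun j => (γ j).map i + Polynomial.C (c j) * Q.map i)

theorem crv_map {K R S : Type*} [CommRing K] [CommRing R] [CommRing S] (i : K →+* R) (θ : R →+* S)
    {n : ℕ} (γ : Fin n → Polynomial K) (Q : Polynomial K) (c : Fin n → R) (l : Fin (n + 2)) :
    (crv i γ Q c l).map θ = crv (θ.comp i) γ Q (fun j => θ (c j)) l := by
  refine Fin.cases ?_ (fun l => ?_) l
  · simp [crv]
  · refine Fin.cases ?_ (fun l => ?_) l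
    · simp [crv]
    · simp [crv, Polynomial.map_map]

theorem aux_clear {L : Type*} [Field L] {d : L} (h : d ≠ 0) (a b c : L) :
    a * b * c = c * d * (a * (b / d)) := by
  field_simp

/-- With indeterminate coefficients `c_j` the curve section is irreducible: after inverting, it is
the generic point of the hypersurface. -/
theorem generic_irreducible {K : Type*} [Field K] {n e : ℕ} (g : MvPolynomial (Fin (n + 3)) K)
    (hg : g.IsHomogeneous e) (h1 : eval (Fin.cons 1 fun _ => 0 : Fin (n + 3) → K) g = 1)
    (hirr : Irreducible g) (γ : Fin n → Polynomial K) (Q : Polynomial K) (hQ : Q ≠ 0) :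
    Irreducible (cur (Polynomial.C.comp C) g
      (crv (C : K →+* MvPolynomial (Fin n) K) γ Q X)) := by
  let S := MvPolynomial (Fin (n + 2)) K
  let L := FractionRing S
  let ι : S →+* L := algebraMap S L
  have hι : Function.Injective ι := IsFractionRing.injective S L
  let κ : K →+* L := ι.comp C
  have hx0 : ι (X 0) ≠ 0 := by
    rw [Ne, map_eq_zero_iff _ hι]; exact X_ne_zero 0
  let T : L := ι (X 1) / ι (X 0)
  have hQT : Q.eval₂ κ T ≠ 0 := by
    intro h0
    -- clearing denominators gives a homogeneous relation between two variables
    have h2 : ι (∑ i ∈ Finset.range (Q.natDegree + 1),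
        C (Q.coeff i) * X 1 ^ i * X 0 ^ (Q.natDegree - i)) = 0 := by
      rw [Polynomial.eval₂_eq_sum_range] at h0
      have h3 := congrArg (fun z => ι (X 0) ^ Q.natDegree * z) h0
      simp only [mul_zero] at h3
      rw [Finset.mul_sum] at h3
      rw [map_sum, ← h3]
      refine Finset.sum_congr rfl fun i hi => ?_
      have hi' : i ≤ Q.natDegree := by
        have := Finset.mem_range.mp hi; omega
      have h4 : ι (X 0) ^ Q.natDegree = ι (X 0) ^ (Q.natDegree - i) * ι (X 0) ^ i := by
        rw [← pow_add]; congr 1; omega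
      rw [h4]
      simp only [map_mul, map_pow, T, κ, RingHom.comp_apply, div_pow]
      exact aux_clear (pow_ne_zero _ hx0) _ _ _
    rw [map_eq_zero_iff _ hι] at h2
    have h5 := congrArg (eval₂ Polynomial.C
      (Fin.cons 1 (fun _ => Polynomial.X) : Fin (n + 2) → Polynomial K)) h2
    rw [eval₂_sum, eval₂_zero] at h5
    apply hQ
    rw [Q.as_sum_range_C_mul_X_pow, ← h5]
    refine Finset.sum_congr rfl fun i hi => ?_
    have h01 : (1 : Fin (n + 2)) = Fin.succ 0 := rfl
    rw [eval₂_mul, eval₂_mul, eval₂_C, eval₂_pow, eval₂_pow, eval₂_X, eval₂_X, Fin.cons_zero,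
      h01, Fin.cons_succ, one_pow, mul_one]
  let θ : Polynomial (MvPolynomial (Fin n) K) →+* L :=
    Polynomial.eval₂RingHom (eval₂Hom κ fun j =>
      (ι (X j.succ.succ) / ι (X 0) - (γ j).eval₂ κ T) / Q.eval₂ κ T) T
  refine Polynomial.Monic.irreducible_of_irreducible_map θ _ (cur_monic _ g hg h1 _).1 ?_
  rw [cur_map]
  have hθC : θ.comp (Polynomial.C.comp C) = κ := by
    ext a; simp [θ]
  have hr : (fun i => θ (crv C γ Q X i)) = fun i => (ι (X 0))⁻¹ * ι (X i) := by
    funext l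
    have hmap : ∀ P : Polynomial K, θ (P.map C) = P.eval₂ κ T := by
      intro P
      simp only [θ, Polynomial.coe_eval₂RingHom, Polynomial.eval₂_map]
      congr 1
      ext a; simp
    refine Fin.cases ?_ (fun l => ?_) l
    · rw [inv_mul_cancel₀ hx0]
      simp [crv]
    · refine Fin.cases ?_ (fun l => ?_) l
      · have h01 : (Fin.succ 0 : Fin (n + 2)) = 1 := rfl
        simp only [crv, Fin.cons_succ, Fin.cons_zero]
        rw [h01]
        simp [θ, T, div_eq_inv_mul]
      · simp only [crv, Fin.cons_succ, map_add, map_mul, hmap]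
        simp only [θ, Polynomial.coe_eval₂RingHom, Polynomial.eval₂_C, coe_eval₂Hom, eval₂_X]
        rw [div_mul_cancel₀ _ hQT, div_eq_inv_mul]
        ring
  rw [hθC, hr, cur_scale κ g hg h1]
  refine irreducible_scaleRoots _ (cur_monic κ g hg h1 _).1 ?_ _ (inv_ne_zero hx0)
  have hid : (fun i => ι (X i)) = fun i : Fin (n + 2) => ι (X i) := rfl
  have h6 : cur κ g (fun i => ι (X i)) = (cur C g X).map ι := by rw [cur_map]
  have h7 : cur (C : K →+* S) g X = finSuccEquiv K (n + 2) g := by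
    rw [cur_eq]
    have : eval₂Hom (C : K →+* S) X = RingHom.id _ := by
      ext <;> simp
    rw [this, Polynomial.map_id]
  rw [h6]
  rw [← Polynomial.Monic.irreducible_iff_irreducible_map_fraction_map (K := L)
    (cur_monic _ g hg h1 _).1, h7]
  exact (MulEquiv.irreducible_iff (finSuccEquiv K (n + 2))).mpr hirr

/-- Independent rows over a domain have a nonvanishing minor. -/
theorem exists_minor {R ι : Type*} [CommRing R] [IsDomain R] [Fintype ι] [DecidableEq ι]
    (v : ι → ℕ → R) (hv : ∀ a : ι → R, (∀ n, ∑ i, a i * v i n = 0) → a = 0) :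
    ∃ s : ι → ℕ, (Matrix.of fun i j => v i (s j)).det ≠ 0 := by
  classical
  let F := FractionRing R
  let col : ℕ → ι → F := fun n i => algebraMap R F (v i n)
  have hinj := IsFractionRing.injective R F
  have hspan : Submodule.span F (Set.range col) = ⊤ := by
    by_contra hne
    obtain ⟨φ, hφ, hker⟩ := Submodule.exists_le_ker_of_lt_top _ (lt_top_iff_ne_top.mpr hne)
    let a : ι → F := fun i => φ (Pi.single i 1)
    have hφa : ∀ w : ι → F, φ w = ∑ i, a i * w i := by
      intro w
      conv_lhs => rw [← Finset.univ_sum_single w]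
      rw [map_sum]
      refine Finset.sum_congr rfl fun i _ => ?_
      have : (Pi.single i (w i) : ι → F) = w i • Pi.single i 1 := by
        rw [← Pi.single_smul, smul_eq_mul, mul_one]
      rw [this, map_smul, smul_eq_mul, mul_comm]
    obtain ⟨b, hb⟩ := IsLocalization.exist_integer_multiples_of_finset (nonZeroDivisors R)
      (Finset.univ.image a)
    have hb' : ∀ i, ∃ r : R, algebraMap R F r = algebraMap R F b * a i := by
      intro i
      obtain ⟨r, hr⟩ := hb (a i) (Finset.mem_image_of_mem a (Finset.mem_univ i))
      exact ⟨r, by rw [hr]; exact Algebra.smul_def _ _⟩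
    choose r hr using hb'
    have hr0 := hv r fun n => by
      apply hinj
      rw [map_zero, map_sum]
      have h1 : φ (col n) = 0 := hker (Submodule.subset_span ⟨n, rfl⟩)
      rw [hφa] at h1
      calc ∑ i, algebraMap R F (r i * v i n) = algebraMap R F b * ∑ i, a i * col n i := by
            rw [Finset.mul_sum]
            refine Finset.sum_congr rfl fun i _ => ?_
            rw [map_mul, hr, mul_assoc]
        _ = 0 := by rw [h1, mul_zero]
    apply hφ
    refine LinearMap.ext fun w => ?_
    rw [hφa, LinearMap.zero_apply]
    refine Finset.sum_eq_zero fun i _ => ?_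
    have h2 := hr i
    rw [hr0, Pi.zero_apply, map_zero] at h2
    have h3 : algebraMap R F b ≠ 0 := by
      rw [Ne, map_eq_zero_iff _ hinj]; exact nonZeroDivisors.ne_zero b.2
    rw [(mul_eq_zero.mp h2.symm).resolve_left h3, zero_mul]
  obtain ⟨B, hB, hBs, hBi⟩ := exists_linearIndependent F (Set.range col)
  rw [hspan] at hBs
  let bas := Module.Basis.mk hBi (by rw [Subtype.range_coe]; exact hBs.ge)
  have hfin : Finite B := Module.Finite.finite_basis bas
  have := Fintype.ofFinite B
  have hcard : Fintype.card ι = Fintype.card B := by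
    rw [← Module.finrank_eq_card_basis bas, Module.finrank_fintype_fun_eq_card]
  let E : ι ≃ B := Fintype.equivOfCardEq hcard
  choose s hs using fun i => hB (E i).2
  refine ⟨s, fun h0 => ?_⟩
  have hli : LinearIndependent F (fun i => col (s i)) := by
    have := hBi.comp E E.injective
    convert! this with i
    exact hs i
  have h2 : (Matrix.of fun i j => col (s i) j).det ≠ 0 := by
    have := (Matrix.linearIndependent_rows_iff_isUnit
      (A := (Matrix.of fun i j => col (s i) j : Matrix ι ι F))).mp hli
    exact ((Matrix.isUnit_iff_isUnit_det _).mp this).ne_zero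
  apply h2
  rw [← Matrix.det_transpose]
  have h3 := congrArg (algebraMap R F) h0
  rw [map_zero, RingHom.map_det] at h3
  rw [← h3]
  rfl

theorem coeff_coeff_swap {R : Type*} [CommRing R] (p : Polynomial (Polynomial R)) (i l : ℕ) :
    ((Polynomial.Bivariate.swap p).coeff i).coeff l = (p.coeff l).coeff i := by
  induction p using Polynomial.induction_on' with
  | add p q hp hq => simp only [map_add, Polynomial.coeff_add, hp, hq]
  | monomial n a =>
    induction a using Polynomial.induction_on' with
    | add p q hp hq => simp only [map_add, Polynomial.coeff_add, hp, hq]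
    | monomial m r =>
      rw [Polynomial.Bivariate.swap_monomial_monomial]
      simp only [Polynomial.coeff_monomial]
      split_ifs <;> simp_all [Polynomial.coeff_monomial]

/-- The inner degree of a factor is bounded by the inner degree of the product. -/
theorem inner_degree_factor {K : Type*} [Field K] (f p : Polynomial (Polynomial K)) (hp : p ≠ 0)
    (h : f ∣ p) (T : ℕ) (hT : ∀ l, (p.coeff l).natDegree ≤ T) (l : ℕ) :
    (f.coeff l).natDegree ≤ T := by
  have hs : (Polynomial.Bivariate.swap p) ≠ 0 := by simpa using hp
  have h1 : (Polynomial.Bivariate.swap p).natDegree ≤ T := by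
    rw [Polynomial.natDegree_le_iff_coeff_eq_zero]
    intro N hN
    ext l
    rw [coeff_coeff_swap, Polynomial.coeff_eq_zero_of_natDegree_lt ((hT l).trans_lt hN),
      Polynomial.coeff_zero]
  have h2 : (Polynomial.Bivariate.swap f).natDegree ≤ T :=
    (Polynomial.natDegree_le_of_dvd (map_dvd _ h) hs).trans h1
  rw [Polynomial.natDegree_le_iff_coeff_eq_zero]
  intro N hN
  rw [← coeff_coeff_swap, Polynomial.coeff_eq_zero_of_natDegree_lt (h2.trans_lt hN),
    Polynomial.coeff_zero]

theorem coeff_br_eq_sum {R : Type*} [CommRing R] (η : PowerSeries R)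
    (u : Polynomial (Polynomial R)) (e T : ℕ) (hu : u.natDegree < e)
    (hT : ∀ l, (u.coeff l).natDegree ≤ T) (n : ℕ) :
    PowerSeries.coeff n (br 0 η u) = ∑ p : Fin (T + 1) × Fin e,
      (u.coeff p.2).coeff p.1 *
        PowerSeries.coeff n (tay 0 (Polynomial.X ^ (p.1 : ℕ)) * η ^ (p.2 : ℕ)) := by
  rw [br_eq, Polynomial.eval_map, Polynomial.eval₂_eq_sum_range' _ hu, map_sum,
    Fintype.sum_prod_type_right, ← Fin.sum_univ_eq_sum_range (fun l =>
      PowerSeries.coeff n (tay 0 (u.coeff l) * η ^ l)) e]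
  refine Finset.sum_congr rfl fun l _ => ?_
  conv_lhs => rw [(u.coeff l).as_sum_range_C_mul_X_pow' (n := T + 1) (Nat.lt_succ_of_le (hT l))]
  rw [map_sum, Finset.sum_mul, map_sum, ← Fin.sum_univ_eq_sum_range (fun i =>
      PowerSeries.coeff n
        (tay 0 (Polynomial.C ((u.coeff l).coeff i) * Polynomial.X ^ i) * η ^ (l : ℕ))) (T + 1)]
  refine Finset.sum_congr rfl fun i _ => ?_
  rw [map_mul (tay 0), mul_assoc]
  have : tay (0 : R) (Polynomial.C ((u.coeff l).coeff i)) =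
      PowerSeries.C ((u.coeff l).coeff i) := by
    rw [tay_apply]; simp
  rw [this, PowerSeries.coeff_C_mul]

theorem cur_evalEval {k A : Type*} [CommRing k] [CommRing A] {N : ℕ} (j : k →+* A)
    (g : MvPolynomial (Fin (N + 1)) k) (r : Fin N → Polynomial A) (t y : A) :
    (cur (Polynomial.C.comp j) g r).evalEval t y =
      eval₂ j (Fin.cons y fun i => (r i).eval t : Fin (N + 1) → A) g := by
  rw [Polynomial.evalEval, cur_eval]
  refine (eval₂_comp_left (Polynomial.evalRingHom t) _ _ g).trans ?_
  congr 1
  · ext a; simp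
  · funext i
    refine Fin.cases ?_ (fun i => ?_) i <;> simp

theorem crv_eval_zero {K R : Type*} [CommRing K] [CommRing R] (i : K →+* R) {n : ℕ}
    (γ : Fin n → Polynomial K) (Q : Polynomial K) (hγ : ∀ j, (γ j).eval 0 = 0)
    (hQ : Q.eval 0 = 0) (c : Fin n → R) (l : Fin (n + 2)) :
    (crv i γ Q c l).eval 0 = (Fin.cons 1 fun _ => 0 : Fin (n + 2) → R) l := by
  have h : ∀ P : Polynomial K, (P.map i).eval 0 = i (P.eval 0) := by
    intro P
    rw [← map_zero i, Polynomial.eval_map_apply]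
  refine Fin.cases ?_ (fun l => ?_) l
  · simp [crv]
  · refine Fin.cases ?_ (fun l => ?_) l
    · simp [crv]
    · simp [crv, h, hγ, hQ]

/-- Specialisation of the generic section at integers keeps irreducibility: the power series branch
has a nonvanishing minor certifying that it satisfies no equation of smaller degree. -/
theorem bertini {K : Type*} [Field K] [CharZero K] {n e : ℕ} (g : MvPolynomial (Fin (n + 3)) K)
    (hg : g.IsHomogeneous e) (he : 0 < e)
    (h1 : eval (Fin.cons 1 fun _ => 0 : Fin (n + 3) → K) g = 1)
    (hirr : Irreducible g) (γ : Fin n → Polynomial K) (Q : Polynomial K) (hQ : Q ≠ 0)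
    (hγ0 : ∀ j, (γ j).eval 0 = 0) (hQ0 : Q.eval 0 = 0) (y0 : K)
    (hy0 : eval (Fin.cons y0 (Fin.cons 1 fun _ => 0) : Fin (n + 3) → K) g = 0)
    (hy1 : eval (Fin.cons y0 (Fin.cons 1 fun _ => 0) : Fin (n + 3) → K) (pderiv 0 g) ≠ 0) :
    ∃ c : Fin n → ℤ, Irreducible
      (cur Polynomial.C g (crv (RingHom.id K) γ Q fun j => (c j : K))) := by
  classical
  set Φ := cur (Polynomial.C.comp (C : K →+* MvPolynomial (Fin n) K)) g (crv (C : K →+* MvPolynomial (Fin n) K) γ Q X) with hΦdef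
  have hΦirr : Irreducible Φ := generic_irreducible g hg h1 hirr γ Q hQ
  obtain ⟨hΦ, hΦe⟩ := cur_monic (Polynomial.C.comp (C : K →+* MvPolynomial (Fin n) K)) g hg h1 (crv C γ Q X)
  rw [← hΦdef] at hΦ hΦe
  have hev : ∀ q : MvPolynomial (Fin (n + 3)) K,
      (cur (Polynomial.C.comp (C : K →+* MvPolynomial (Fin n) K)) q (crv (C : K →+* MvPolynomial (Fin n) K) γ Q X)).evalEval 0 (C y0) =
      C (eval (Fin.cons y0 (Fin.cons 1 fun _ => 0) : Fin (n + 3) → K) q) := by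
    intro q
    rw [cur_evalEval]
    refine Eq.trans ?_ (eval₂_comp_left (C : K →+* MvPolynomial (Fin n) K) (RingHom.id K) _ q).symm
    congr 1
    funext i
    refine Fin.cases ?_ (fun i => ?_) i
    · simp
    · simp only [Fin.cons_succ, Function.comp_apply]
      rw [crv_eval_zero C γ Q hγ0 hQ0]
      refine Fin.cases ?_ (fun i => ?_) i <;> simp
  obtain ⟨η, -, hη⟩ := exists_branch Φ hΦ 0 (C y0) (by rw [hΦdef, hev, hy0, C_0]) (by
    rw [hΦdef, cur_derivative, hev]
    exact (isUnit_iff_ne_zero.mpr hy1).map C)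
  obtain ⟨T, hT⟩ : ∃ T, ∀ l, (Φ.coeff l).natDegree ≤ T := by
    refine ⟨Φ.support.sup fun l => (Φ.coeff l).natDegree, fun l => ?_⟩
    by_cases h : l ∈ Φ.support
    · exact Finset.le_sup (f := fun l => (Φ.coeff l).natDegree) h
    · rw [Polynomial.notMem_support_iff.mp h]; simp
  let v : Fin (T + 1) × Fin e → ℕ → MvPolynomial (Fin n) K := fun p n =>
    PowerSeries.coeff n (tay 0 (Polynomial.X ^ (p.1 : ℕ)) * η ^ (p.2 : ℕ))
  obtain ⟨s, hs⟩ := exists_minor v (by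
    intro a ha
    let u : Polynomial (Polynomial (MvPolynomial (Fin n) K)) := ∑ l : Fin e, Polynomial.monomial l
      (∑ i : Fin (T + 1), Polynomial.monomial i (a (i, l)))
    have hc1 : ∀ l : ℕ, u.coeff l = if h : l < e then
        (∑ i : Fin (T + 1), Polynomial.monomial i (a (i, ⟨l, h⟩))) else 0 := by
      intro l
      simp only [u, Polynomial.finsetSum_coeff, Polynomial.coeff_monomial]
      split_ifs with h
      · rw [Finset.sum_eq_single ⟨l, h⟩]
        · simp
        · intro b _ hb
          rw [if_neg]
          intro h2; exact hb (Fin.ext h2)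
        · simp
      · refine Finset.sum_eq_zero fun b _ => ?_
        rw [if_neg]
        intro h2; exact h (h2 ▸ b.2)
    have hc2 : ∀ p : Fin (T + 1) × Fin e, (u.coeff p.2).coeff p.1 = a p := by
      intro p
      rw [hc1, dif_pos p.2.2, Polynomial.finsetSum_coeff, Finset.sum_eq_single p.1]
      · simp
      · intro b _ hb
        rw [Polynomial.coeff_monomial, if_neg]
        intro h2; exact hb (Fin.ext h2)
      · simp
    have hu : u.natDegree < e := by
      have hle : u.natDegree ≤ e - 1 := by
        rw [Polynomial.natDegree_le_iff_coeff_eq_zero]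
        intro l hl
        rw [hc1, dif_neg (by omega)]
      omega
    have huT : ∀ l, (u.coeff l).natDegree ≤ T := by
      intro l
      rw [hc1]
      split_ifs
      · refine Polynomial.natDegree_sum_le_of_forall_le _ _ fun i _ => ?_
        exact (Polynomial.natDegree_monomial_le _).trans (by have := i.2; omega)
      · simp
    have hbr : br 0 η u = 0 := by
      refine PowerSeries.ext fun n => ?_
      rw [coeff_br_eq_sum η u e T hu huT, map_zero]
      refine Eq.trans ?_ (ha n)
      refine Finset.sum_congr rfl fun p _ => ?_
      rw [hc2]
    have hu0 : u = 0 := eq_zero_of_aeval_root (tay (0 : MvPolynomial (Fin n) K)) (tay_injective 0) Φ hΦ hΦirr η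
      (by rw [← Polynomial.eval_map, ← br_eq]; exact hη) u
      (by rw [← Polynomial.eval_map, ← br_eq]; exact hbr) (by rw [hΦe]; exact hu)
    funext p
    rw [← hc2, hu0]; simp)
  set D : MvPolynomial (Fin n) K := (Matrix.of fun i j => v i (s j)).det with hD
  obtain ⟨c, hc⟩ : ∃ c : Fin n → ℤ, eval (fun j => (c j : K)) D ≠ 0 := by
    by_contra hcon
    push Not at hcon
    apply hs
    refine funext_set (fun _ => Set.range (Int.cast : ℤ → K))
      (fun _ => Set.infinite_range_of_injective Int.cast_injective) fun x hx => ?_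
    have h2 : ∀ j, ∃ z : ℤ, (z : K) = x j := fun j => hx j (Set.mem_univ j)
    choose z hz using h2
    have h3 : x = fun j => (z j : K) := funext fun j => (hz j).symm
    rw [h3, hcon z, map_zero]
  refine ⟨c, ?_⟩
  set ev : MvPolynomial (Fin n) K →+* K := eval (fun j => (c j : K)) with hevdef
  have hmap : Φ.map (Polynomial.mapRingHom ev) =
      cur Polynomial.C g (crv (RingHom.id K) γ Q fun j => (c j : K)) := by
    rw [hΦdef, cur_map]
    congr 1
    · ext a; simp [ev]
    · funext i
      rw [Polynomial.coe_mapRingHom, crv_map]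
      congr 1
      · ext a; simp [ev]
      · funext j; simp [ev]
  set Φ0 := cur Polynomial.C g (crv (RingHom.id K) γ Q fun j => (c j : K)) with hcur_def
  obtain ⟨hΦ0, hcur_deg⟩ := cur_monic (Polynomial.C : K →+* _) g hg h1
    (crv (RingHom.id K) γ Q fun j => (c j : K))
  rw [← hcur_def] at hΦ0 hcur_deg
  have hη0 : br 0 (PowerSeries.map ev η) Φ0 = 0 := by
    rw [← hmap, ← map_zero ev, ← map_br, hη, map_zero]
  have hT0 : ∀ l, (Φ0.coeff l).natDegree ≤ T := by
    intro l
    rw [← hmap, Polynomial.coeff_map]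
    exact Polynomial.natDegree_map_le.trans (hT l)
  have key : ∀ u : Polynomial (Polynomial K), u ∣ Φ0 → u.natDegree < e →
      br 0 (PowerSeries.map ev η) u = 0 → u = 0 := by
    intro u hdvd hu hbr
    have huT := inner_degree_factor u Φ0 hΦ0.ne_zero hdvd T hT0
    have h0 : (fun p : Fin (T + 1) × Fin e => (u.coeff p.2).coeff p.1) = 0 := by
      refine Matrix.eq_zero_of_vecMul_eq_zero
        (M := (Matrix.of fun i j => ev (v i (s j)))) ?_ ?_
      · have : ev D = (Matrix.of fun i j => ev (v i (s j))).det := by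
          rw [hD, RingHom.map_det]; rfl
        rw [← this]; exact hc
      · funext j
        have h2 := coeff_br_eq_sum (PowerSeries.map ev η) u e T hu huT (s j)
        rw [hbr, map_zero] at h2
        rw [Pi.zero_apply, h2]
        simp only [Matrix.vecMul, dotProduct, Matrix.of_apply]
        refine Finset.sum_congr rfl fun p _ => ?_
        congr 1
        simp only [v]
        rw [← PowerSeries.coeff_map, map_mul, map_tay, map_pow, map_zero,
          Polynomial.map_pow, Polynomial.map_X]
    ext l i
    simp only [Polynomial.coeff_zero]
    by_cases hl : l < e
    · by_cases hi : i < T + 1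
      · exact congrFun h0 (⟨i, hi⟩, ⟨l, hl⟩)
      · exact Polynomial.coeff_eq_zero_of_natDegree_lt ((huT l).trans_lt (by omega))
    · have h3 : u.coeff l = 0 := Polynomial.coeff_eq_zero_of_natDegree_lt (by omega)
      rw [h3, Polynomial.coeff_zero]
  rw [hΦ0.irreducible_iff_natDegree']
  refine ⟨fun h => ?_, fun p q hp hq hpq hmem => ?_⟩
  · rw [h, Polynomial.natDegree_one] at hcur_deg; omega
  · rw [hcur_deg, Finset.mem_Ioc] at hmem
    have hdeg : p.natDegree + q.natDegree = e := by
      rw [← hcur_deg, ← hpq, hp.natDegree_mul hq]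
    rw [← hpq, map_mul, mul_eq_zero] at hη0
    rcases hη0 with h | h
    · exact hp.ne_zero (key p ⟨q, hpq.symm⟩ (by omega) h)
    · exact hq.ne_zero (key q ⟨p, by rw [← hpq, mul_comm]⟩ (by omega) h)

/-! ### Curves through prescribed points -/

theorem finrank_mul_natDegree_minpoly (k : IntermediateField ℚ Qbar) [FiniteDimensional ℚ k]
    (t : Qbar) (hk : k ≤ IntermediateField.adjoin ℚ {t}) :
    Module.finrank ℚ k * (minpoly k t).natDegree = (minpoly ℚ t).natDegree := by
  have : Algebra.IsAlgebraic k Qbar := Algebra.IsAlgebraic.tower_top (K := ℚ) k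
  have h1 : (IntermediateField.adjoin k {t}).restrictScalars ℚ =
      IntermediateField.adjoin ℚ {t} := by
    exact (IntermediateField.restrictScalars_adjoin ℚ k {t}).trans (by
      rw [IntermediateField.adjoin_union, IntermediateField.adjoin_self]
      exact sup_eq_right.mpr hk)
  rw [← IntermediateField.adjoin.finrank (Algebra.IsIntegral.isIntegral (R := k) t),
    ← IntermediateField.adjoin.finrank (Algebra.IsIntegral.isIntegral (R := ℚ) t), ← h1,
    Module.finrank_mul_finrank ℚ k _]
  rfl

theorem exists_poly_of_mem_adjoin (k : IntermediateField ℚ Qbar) (t w : Qbar)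
    (hw : w ∈ IntermediateField.adjoin k {t}) : ∃ p : Polynomial k, Polynomial.aeval t p = w := by
  have : Algebra.IsAlgebraic k Qbar := Algebra.IsAlgebraic.tower_top (K := ℚ) k
  have h1 : w ∈ (IntermediateField.adjoin k {t}).toSubalgebra := hw
  rw [IntermediateField.adjoin_simple_toSubalgebra_of_isAlgebraic
    (Algebra.IsAlgebraic.isAlgebraic t), Algebra.adjoin_singleton_eq_range_aeval] at h1
  exact h1

/-- Simultaneous interpolation at points with pairwise coprime minimal polynomials, by a
polynomial without constant term. -/
theorem exists_interpolation (k : IntermediateField ℚ Qbar) (I : Finset ℕ) (t w : ℕ → Qbar)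
    (ht0 : ∀ i ∈ I, t i ≠ 0)
    (hne : ∀ i ∈ I, ∀ j ∈ I, i ≠ j → Polynomial.aeval (t i) (minpoly k (t j)) ≠ 0)
    (hw : ∀ i ∈ I, w i ∈ IntermediateField.adjoin k {t i}) :
    ∃ s : Polynomial k, s.eval 0 = 0 ∧ ∀ i ∈ I, Polynomial.aeval (t i) s = w i := by
  classical
  have hP : ∀ i, ∃ p : Polynomial k, i ∈ I → Polynomial.aeval (t i) p =
      w i / (t i * ∏ j ∈ I.erase i, Polynomial.aeval (t i) (minpoly k (t j))) := by
    intro i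
    by_cases hi : i ∈ I
    · have hti : t i ∈ IntermediateField.adjoin k {t i} :=
        IntermediateField.mem_adjoin_simple_self k (t i)
      obtain ⟨p, hp⟩ := exists_poly_of_mem_adjoin k (t i)
        (w i / (t i * ∏ j ∈ I.erase i, Polynomial.aeval (t i) (minpoly k (t j))))
        (div_mem (hw i hi) (mul_mem hti (prod_mem fun j _ => by
          have := Subalgebra.aeval_coe (S := (IntermediateField.adjoin k {t i}).toSubalgebra)
            ⟨t i, hti⟩ (minpoly k (t j))
          rw [this]
          exact Subtype.property _)))
      exact ⟨p, fun _ => hp⟩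
    · exact ⟨0, fun h => absurd h hi⟩
  choose p hp using hP
  refine ⟨∑ i ∈ I, p i * (Polynomial.X * ∏ j ∈ I.erase i, minpoly k (t j)), ?_, fun i hi => ?_⟩
  · simp [Polynomial.eval_finsetSum]
  · rw [map_sum, Finset.sum_eq_single_of_mem i hi]
    · rw [map_mul, map_mul, Polynomial.aeval_X, map_prod, hp i hi]
      refine div_mul_cancel₀ _ (mul_ne_zero (ht0 i hi) (Finset.prod_ne_zero_iff.mpr ?_))
      intro j hj
      exact hne i hi j (Finset.mem_of_mem_erase hj) (Finset.ne_of_mem_erase hj).symm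
    · intro j _ hji
      rw [map_mul, map_mul, map_prod,
        Finset.prod_eq_zero (Finset.mem_erase.mpr ⟨hji.symm, hi⟩) (minpoly.aeval k (t i))]
      ring

/-- A polynomial over `k` vanishing at `t` vanishes at all conjugates of `t` over `k`, and one not
vanishing at `t` vanishes at none of them. -/
theorem conj_eval (k : IntermediateField ℚ Qbar) (t τ : Qbar)
    (hτ : (bc₁ (minpoly k t)).eval τ = 0) (p : Polynomial k) :
    (bc₁ p).eval τ = 0 ↔ Polynomial.aeval t p = 0 := by
  have : Algebra.IsAlgebraic k Qbar := Algebra.IsAlgebraic.tower_top (K := ℚ) k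
  have ht := Algebra.IsIntegral.isIntegral (R := k) t
  have h1 : minpoly k t = minpoly k τ := by
    refine minpoly.eq_of_irreducible_of_monic (minpoly.irreducible ht) ?_ (minpoly.monic ht)
    rwa [Polynomial.aeval_def, ← Polynomial.eval_map]
  rw [Polynomial.eval_map, ← Polynomial.aeval_def, ← minpoly.dvd_iff, ← minpoly.dvd_iff, h1]

theorem bc_evalEval_poly {k : IntermediateField ℚ Qbar} (Φ : Polynomial (Polynomial k))
    (s : Polynomial k) (τ : Qbar) :
    (bc Φ).evalEval τ ((bc₁ s).eval τ) = (bc₁ (Φ.eval s)).eval τ := by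
  have h1 : bc₁ (Φ.eval s) = (bc Φ).eval (bc₁ s) := by
    rw [bc, Polynomial.eval_map]
    exact (Polynomial.eval₂_hom (Polynomial.mapRingHom (algebraMap k Qbar)) s).symm
  rw [h1, ← eval_map_evalRingHom, Polynomial.eval_map]
  exact Polynomial.eval₂_hom (Polynomial.evalRingHom τ) (bc₁ s)

theorem bc_cur_evalEval {k : IntermediateField ℚ Qbar} {R : Type*} [CommRing R] (i : R →+* k)
    {N : ℕ} (g : MvPolynomial (Fin (N + 1)) R) (r : Fin N → Polynomial k) (t y : Qbar) :
    (bc (cur (Polynomial.C.comp i) g r)).evalEval t y =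
      eval₂ ((algebraMap k Qbar).comp i)
        (Fin.cons y fun l => (bc₁ (r l)).eval t : Fin (N + 1) → Qbar) g := by
  have h1 : (Polynomial.mapRingHom (algebraMap k Qbar)).comp (Polynomial.C.comp i) =
      Polynomial.C.comp ((algebraMap k Qbar).comp i) := by
    ext1 a
    simp
  rw [bc, cur_map, h1, cur_evalEval]
  rfl

theorem bc_cur {k : IntermediateField ℚ Qbar} {N : ℕ} (g : MvPolynomial (Fin (N + 1)) k)
    (r : Fin N → Polynomial k) :
    bc (cur Polynomial.C g r) =
      cur Polynomial.C (map (algebraMap k Qbar) g) fun l => bc₁ (r l) := by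
  have h1 : (Polynomial.mapRingHom (algebraMap k Qbar)).comp Polynomial.C =
      Polynomial.C.comp (algebraMap k Qbar) := by
    ext1 a
    simp
  rw [bc, cur_map, cur_map_left, h1]
  rfl

/-- A geometrically irreducible curve, rational over `k` in the last coordinates, that lies on
`g = 0`, passes through the prescribed points and is unramified over `0` and at these points. -/
theorem exists_curve (k : IntermediateField ℚ Qbar) {n e : ℕ}
    (g : MvPolynomial (Fin (n + 3)) k) (hg : g.IsHomogeneous e) (he : 0 < e)
    (h1 : eval (Fin.cons 1 fun _ => 0 : Fin (n + 3) → k) g = 1)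
    (hirr : Irreducible (map (algebraMap k Qbar) g))
    (hsep : ∀ y : Qbar, aeval (Fin.cons y (Fin.cons 1 fun _ => 0) : Fin (n + 3) → Qbar) g = 0 →
      aeval (Fin.cons y (Fin.cons 1 fun _ => 0) : Fin (n + 3) → Qbar) (pderiv 0 g) ≠ 0)
    (I : Finset ℕ) (a : ℕ → Fin (n + 3) → Qbar) (ha1 : ∀ i ∈ I, a i 1 = 1)
    (ha2 : ∀ i ∈ I, a i 2 ≠ 0)
    (hmem : ∀ i ∈ I, ∀ j, a i j ∈ IntermediateField.adjoin k {a i 2})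
    (hne : ∀ i ∈ I, ∀ j ∈ I, i ≠ j → Polynomial.aeval (a i 2) (minpoly k (a j 2)) ≠ 0)
    (hga : ∀ i ∈ I, aeval (a i) g = 0) (hgd : ∀ i ∈ I, aeval (a i) (pderiv 0 g) ≠ 0) :
    ∃ (r : Fin (n + 2) → Polynomial k) (s : Polynomial k), r 0 = 1 ∧ r 1 = Polynomial.X ∧
      (∀ l, (r l).eval 0 = (Fin.cons 1 fun _ => 0 : Fin (n + 2) → k) l) ∧
      Irreducible (bc (cur Polynomial.C g r)) ∧
      ∀ i ∈ I, ∀ τ, (bc₁ (minpoly k (a i 2))).eval τ = 0 →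
        (bc (cur Polynomial.C g r)).evalEval τ ((bc₁ s).eval τ) = 0 ∧
        (Polynomial.derivative (bc (cur Polynomial.C g r))).evalEval τ ((bc₁ s).eval τ) ≠ 0 := by
  classical
  have hinteg : Algebra.IsAlgebraic k Qbar := Algebra.IsAlgebraic.tower_top (K := ℚ) k
  have hI : ∀ j, ∃ s : Polynomial k, s.eval 0 = 0 ∧
      ∀ i ∈ I, Polynomial.aeval (a i 2) s = a i j := fun j =>
    exists_interpolation k I (fun i => a i 2) (fun i => a i j) ha2 hne fun i hi => hmem i hi j
  choose S hS0 hSa using hI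
  set γ : Fin n → Polynomial k := fun j => S j.succ.succ.succ with hγ
  set Q : Polynomial k := Polynomial.X * ∏ i ∈ I, minpoly k (a i 2) with hQ
  have hQne : Q ≠ 0 := mul_ne_zero Polynomial.X_ne_zero (Finset.prod_ne_zero_iff.mpr fun i _ =>
    minpoly.ne_zero (Algebra.IsIntegral.isIntegral _))
  have hQ0 : Q.eval 0 = 0 := by simp [hQ]
  have hQa : ∀ i ∈ I, Polynomial.aeval (a i 2) Q = 0 := by
    intro i hi
    rw [hQ, map_mul, map_prod, Finset.prod_eq_zero hi (minpoly.aeval k (a i 2)), mul_zero]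
  have hinj : Function.Injective (algebraMap k Qbar) := (algebraMap k Qbar).injective
  have heval : ∀ (x : Fin (n + 3) → Qbar) (p : MvPolynomial (Fin (n + 3)) k),
      eval x (map (algebraMap k Qbar) p) = aeval x p := fun x p => by
    rw [eval_map, aeval_def]
  have hcons : (fun j => algebraMap k Qbar ((Fin.cons 1 fun _ => 0 : Fin (n + 3) → k) j)) =
      (Fin.cons 1 fun _ => 0 : Fin (n + 3) → Qbar) := by
    funext j
    refine Fin.cases ?_ (fun j => ?_) j <;> simp
  have h1' : eval (Fin.cons 1 fun _ => 0 : Fin (n + 3) → Qbar) (map (algebraMap k Qbar) g) = 1 := by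
    rw [← hcons, eval_map]
    refine (eval₂_comp (algebraMap k Qbar) _ g).symm.trans ?_
    rw [h1, map_one]
  obtain ⟨y0, hy0⟩ : ∃ y0 : Qbar,
      aeval (Fin.cons y0 (Fin.cons 1 fun _ => 0) : Fin (n + 3) → Qbar) g = 0 := by
    obtain ⟨hm, hd⟩ := cur_monic (algebraMap k Qbar) g hg h1
      (Fin.cons 1 fun _ => 0 : Fin (n + 2) → Qbar)
    obtain ⟨y, hy⟩ := IsAlgClosed.exists_root (cur (algebraMap k Qbar) g
      (Fin.cons 1 fun _ => 0 : Fin (n + 2) → Qbar)) (by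
        rw [Polynomial.degree_eq_natDegree hm.ne_zero, hd]
        exact_mod_cast he.ne')
    rw [Polynomial.IsRoot, cur_eval] at hy
    exact ⟨y, hy⟩
  obtain ⟨c, hc⟩ := bertini (map (algebraMap k Qbar) g) (hg.map _) he h1' hirr
    (fun j => bc₁ (γ j)) (bc₁ Q) (by rwa [Ne, Polynomial.map_eq_zero])
    (fun j => by
      rw [Polynomial.eval_zero_map, hS0, map_zero])
    (by rw [Polynomial.eval_zero_map, hQ0, map_zero]) y0 (by rw [heval]; exact hy0)
    (by rw [pderiv_map, heval]; exact hsep y0 hy0)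
  set r : Fin (n + 2) → Polynomial k := crv (RingHom.id k) γ Q fun j => (c j : k) with hr
  have hbc : bc (cur Polynomial.C g r) = cur Polynomial.C (map (algebraMap k Qbar) g)
      (crv (RingHom.id Qbar) (fun j => bc₁ (γ j)) (bc₁ Q) fun j => (c j : Qbar)) := by
    rw [bc_cur]
    congr 1
    funext l
    rw [hr, bc₁, crv_map]
    refine Fin.cases ?_ (fun l => Fin.cases ?_ (fun l => ?_) l) l <;> simp [crv]
  have hpt : ∀ i ∈ I, (Fin.cons ((bc₁ (S 0)).eval (a i 2))
      fun l => (bc₁ (r l)).eval (a i 2) : Fin (n + 3) → Qbar) = a i := by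
    intro i hi
    have hev : ∀ p : Polynomial k, (bc₁ p).eval (a i 2) = Polynomial.aeval (a i 2) p := fun p => by
      rw [Polynomial.eval_map, ← Polynomial.aeval_def]
    funext l
    refine Fin.cases ?_ (fun l => Fin.cases ?_ (fun l => Fin.cases ?_ (fun l => ?_) l) l) l
    · rw [Fin.cons_zero, hev, hSa 0 i hi]
    · rw [Fin.cons_succ, hev]
      simp only [hr, crv, Fin.cons_zero, map_one]
      exact (ha1 i hi).symm
    · rw [Fin.cons_succ, hev]
      simp only [hr, crv, Fin.cons_succ, Fin.cons_zero, Polynomial.aeval_X]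
      rfl
    · rw [Fin.cons_succ, hev]
      simp only [hr, crv, Fin.cons_succ, map_add, map_mul, Polynomial.map_id, hQa i hi, mul_zero,
        add_zero]
      exact hSa _ i hi
  have hcurv : ∀ i ∈ I, ∀ (p : MvPolynomial (Fin (n + 3)) k) τ,
      (bc₁ (minpoly k (a i 2))).eval τ = 0 →
      ((bc (cur Polynomial.C p r)).evalEval τ ((bc₁ (S 0)).eval τ) = 0 ↔ aeval (a i) p = 0) := by
    intro i hi p τ hτ
    have h2 := bc_cur_evalEval (RingHom.id k) p r (a i 2) ((bc₁ (S 0)).eval (a i 2))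
    rw [RingHom.comp_id, RingHom.comp_id, hpt i hi, bc_evalEval_poly] at h2
    rw [bc_evalEval_poly, conj_eval k (a i 2) τ hτ, Polynomial.aeval_def, ← Polynomial.eval_map, h2]
    rfl
  refine ⟨r, S 0, rfl, rfl, crv_eval_zero _ γ Q (fun j => hS0 _) hQ0 _, hbc ▸ hc, ?_⟩
  intro i hi τ hτ
  refine ⟨(hcurv i hi g τ hτ).mpr (hga i hi), ?_⟩
  rw [bc, Polynomial.derivative_map, cur_derivative, Ne, hcurv i hi _ τ hτ]
  exact hgd i hi

theorem aeval_pderiv_ne_of_dvd {m : ℕ} {k : IntermediateField ℚ Qbar}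
    (f : MvPolynomial (Fin m) ℚ) (g : MvPolynomial (Fin m) k)
    (hdvd : map (algebraMap k Qbar) g ∣ map (algebraMap ℚ Qbar) f) (x : Fin m → Qbar)
    (hx : aeval x g = 0) (i : Fin m) :
    aeval x f = 0 ∧ (aeval x (pderiv i f) ≠ 0 → aeval x (pderiv i g) ≠ 0) := by
  obtain ⟨h, hh⟩ := hdvd
  have hg : ∀ p : MvPolynomial (Fin m) k, eval x (map (algebraMap k Qbar) p) = aeval x p :=
    fun p => by rw [eval_map, aeval_def]
  have hf : ∀ p : MvPolynomial (Fin m) ℚ, eval x (map (algebraMap ℚ Qbar) p) = aeval x p :=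
    fun p => by rw [eval_map, aeval_def]
  constructor
  · rw [← hf, hh, map_mul, hg, hx, zero_mul]
  · rw [← hf, ← hg, ← pderiv_map, hh, ← pderiv_map, Derivation.leibniz, map_add, smul_eq_mul,
      smul_eq_mul, map_mul, map_mul, hg, hx, zero_mul, zero_add]
    exact fun h1 h2 => h1 (by rw [h2, mul_zero])

/-- Points of large degree on the curve section are smooth on the hypersurface: the abscissas where
`∂f/∂x_0` vanishes are among the roots of a fixed polynomial, which is nonzero at `0`. -/
theorem exists_smooth_degree {n d : ℕ} (f : MvPolynomial (Fin (n + 3)) ℚ)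
    (hhom : f.IsHomogeneous d) (hf0 : eval (Fin.cons 1 fun _ => 0 : Fin (n + 3) → ℚ) f ≠ 0)
    (hsep : ∀ y : Qbar, aeval (Fin.cons y (Fin.cons 1 fun _ => 0) : Fin (n + 3) → Qbar) f = 0 →
      aeval (Fin.cons y (Fin.cons 1 fun _ => 0) : Fin (n + 3) → Qbar) (pderiv 0 f) ≠ 0)
    (k : IntermediateField ℚ Qbar) (r : Fin (n + 2) → Polynomial k)
    (hr0 : ∀ l, (r l).eval 0 = (Fin.cons 1 fun _ => 0 : Fin (n + 2) → k) l) :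
    ∃ n0 : ℕ, ∀ t y : Qbar,
      aeval (Fin.cons y fun l => (bc₁ (r l)).eval t : Fin (n + 3) → Qbar) f = 0 →
      n0 ≤ (minpoly k t).natDegree →
      aeval (Fin.cons y fun l => (bc₁ (r l)).eval t : Fin (n + 3) → Qbar) (pderiv 0 f) ≠ 0 := by
  set u := eval (Fin.cons 1 fun _ => 0 : Fin (n + 3) → ℚ) f with hu
  set f' := C u⁻¹ * f with hf'
  have hhom' : f'.IsHomogeneous d := hhom.C_mul _
  have h1 : eval (Fin.cons 1 fun _ => 0 : Fin (n + 3) → ℚ) f' = 1 := by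
    rw [hf', map_mul, eval_C, ← hu, inv_mul_cancel₀ hf0]
  set Ψ := cur (Polynomial.C.comp (algebraMap ℚ k)) f' r with hΨ
  have hev : ∀ (p : MvPolynomial (Fin (n + 3)) ℚ) (t y : Qbar),
      (bc (cur (Polynomial.C.comp (algebraMap ℚ k)) p r)).evalEval t y =
      aeval (Fin.cons y fun l => (bc₁ (r l)).eval t : Fin (n + 3) → Qbar) p := by
    intro p t y
    rw [bc_cur_evalEval, aeval_def]
    congr 1
  have hu' : algebraMap ℚ Qbar u⁻¹ ≠ 0 := by
    rw [Ne, map_eq_zero]; exact inv_ne_zero hf0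
  have hc : ∀ (p : MvPolynomial (Fin (n + 3)) ℚ) (x : Fin (n + 3) → Qbar),
      aeval x (C u⁻¹ * p) = 0 ↔ aeval x p = 0 := by
    intro p x
    rw [map_mul, aeval_C, mul_eq_zero, or_iff_right hu']
  have hd : pderiv 0 f' = C u⁻¹ * pderiv 0 f := by rw [hf', pderiv_C_mul]
  have hder : Polynomial.derivative (bc Ψ) =
      bc (cur (Polynomial.C.comp (algebraMap ℚ k)) (pderiv 0 f') r) := by
    rw [bc, Polynomial.derivative_map, hΨ, cur_derivative]
  have hz : ∀ y : Qbar, (Fin.cons y fun l => (bc₁ (r l)).eval 0 : Fin (n + 3) → Qbar) =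
      Fin.cons y (Fin.cons 1 fun _ => 0) := by
    intro y
    congr 1
    funext l
    rw [Polynomial.eval_zero_map, hr0]
    refine Fin.cases ?_ (fun l => ?_) l <;> simp
  obtain ⟨n0, hn0⟩ := exists_branch_degree k Ψ (cur_monic _ f' hhom' h1 r).1 (by
    intro y hy
    rw [hev, hz, hc] at hy
    rw [hder, hev, hz, hd, Ne, hc]
    exact hsep y hy)
  refine ⟨n0, fun t y hty hn => ?_⟩
  have := hn0 t y (by rw [hev, hc]; exact hty) hn
  rwa [hder, hev, hd, Ne, hc] at this

/-- The points produced on the curve are new points of the hypersurface over `k(t)`. -/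
theorem isNewPoint_of_curve {n : ℕ} (f : MvPolynomial (Fin (n + 3)) ℚ)
    (k : IntermediateField ℚ Qbar) (g : MvPolynomial (Fin (n + 3)) k)
    (hk : ∀ (a : Fin (n + 3) → Qbar) (L : IntermediateField ℚ Qbar), aeval a g = 0 →
        (∃ j, aeval a (pderiv j f) ≠ 0) → (∀ j, a j ∈ L) → k ≤ L)
    (r : Fin (n + 2) → Polynomial k) (hr1 : r 0 = 1) (hr2 : r 1 = Polynomial.X) (t y : Qbar)
    (hy : y ∈ IntermediateField.adjoin k {t})
    (hg : aeval (Fin.cons y fun l => (bc₁ (r l)).eval t : Fin (n + 3) → Qbar) g = 0)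
    (hf : aeval (Fin.cons y fun l => (bc₁ (r l)).eval t : Fin (n + 3) → Qbar) f = 0)
    (hd : aeval (Fin.cons y fun l => (bc₁ (r l)).eval t : Fin (n + 3) → Qbar) (pderiv 0 f) ≠ 0) :
    IsNewPoint f ((IntermediateField.adjoin k {t}).restrictScalars ℚ) := by
  set x := (Fin.cons y fun l => (bc₁ (r l)).eval t : Fin (n + 3) → Qbar) with hx
  have hx1 : x 1 = 1 := by
    have : x 1 = (bc₁ (r 0)).eval t := rfl
    rw [this, hr1, bc₁, Polynomial.map_one, Polynomial.eval_one]
  have hx2 : x 2 = t := by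
    have : x 2 = (bc₁ (r 1)).eval t := rfl
    rw [this, hr2, bc₁, Polynomial.map_X, Polynomial.eval_X]
  have hmem : ∀ j, x j ∈ (IntermediateField.adjoin k {t}).restrictScalars ℚ := by
    intro j
    rw [IntermediateField.mem_restrictScalars]
    refine Fin.cases hy (fun l => ?_) j
    have hti : t ∈ IntermediateField.adjoin k {t} := IntermediateField.mem_adjoin_simple_self k t
    have h2 := Subalgebra.aeval_coe (S := (IntermediateField.adjoin k {t}).toSubalgebra)
      ⟨t, hti⟩ (r l)
    have h3 : x l.succ = Polynomial.aeval t (r l) := by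
      rw [hx, Fin.cons_succ, Polynomial.eval_map, ← Polynomial.aeval_def]
    rw [h3, h2]
    exact Subtype.property _
  refine ⟨x, hmem, fun h => ?_, hf, ⟨0, hd⟩, 1, by rw [hx1]; exact one_ne_zero, ?_⟩
  · rw [h] at hx1
    exact zero_ne_one hx1
  · have hdiv : (fun j => x j / x 1) = x := by
      funext j; rw [hx1, div_one]
    rw [hdiv]
    apply le_antisymm
    · rw [IntermediateField.adjoin_le_iff]
      rintro _ ⟨j, rfl⟩
      exact hmem j
    · have hL : ∀ j, x j ∈ IntermediateField.adjoin ℚ (Set.range x) := fun j =>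
        IntermediateField.subset_adjoin ℚ _ ⟨j, rfl⟩
      refine (IntermediateField.restrictScalars_adjoin ℚ k {t}).le.trans ?_
      rw [IntermediateField.adjoin_le_iff]
      rintro z (hz | hz)
      · exact hk x _ hg ⟨0, hd⟩ hL hz
      · rw [Set.mem_singleton_iff.mp hz, ← hx2]
        exact hL 2

/-! ### Hypersurfaces in good position -/

/-- The count for a hypersurface in good position: the projection from `(1, 0, …, 0)` is finite,
unramified over `(1, 0, …, 0)`, and the prescribed points are generic for it. -/
theorem good_position {n d : ℕ} (hd : 1 ≤ d) (f : MvPolynomial (Fin (n + 3)) ℚ)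
    (hirr : Irreducible f) (hhom : f.IsHomogeneous d)
    (hf0 : eval (Fin.cons 1 fun _ => 0 : Fin (n + 3) → ℚ) f ≠ 0)
    (hsep : ∀ y : Qbar, aeval (Fin.cons y (Fin.cons 1 fun _ => 0) : Fin (n + 3) → Qbar) f = 0 →
      aeval (Fin.cons y (Fin.cons 1 fun _ => 0) : Fin (n + 3) → Qbar) (pderiv 0 f) ≠ 0)
    (I : Finset ℕ) (a : ℕ → Fin (n + 3) → Qbar) (ha1 : ∀ i ∈ I, a i 1 = 1)
    (ha2 : ∀ i ∈ I, a i 2 ≠ 0)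
    (hmem : ∀ i ∈ I, ∀ j, a i j ∈ IntermediateField.adjoin ℚ {a i 2})
    (hdeg : ∀ i ∈ I, (minpoly ℚ (a i 2)).natDegree = i)
    (hfa : ∀ i ∈ I, aeval (a i) f = 0) (hfd : ∀ i ∈ I, aeval (a i) (pderiv 0 f) ≠ 0)
    (G : ℕ) (hG : ∀ D, G ∣ D → ∃ c : ℕ → ℕ, d ∣ D + ∑ i ∈ I, c i * i)
    (ε : ℝ) (hε : 0 < ε) :
    ∃ D0 : ℕ, ∀ D ≥ D0, G ∣ D → ∃ c : ℝ, 0 < c ∧ ∃ X0 : ℝ, ∀ X ≥ X0,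
      ∃ Ks : Finset (IntermediateField ℚ Qbar),
        c * X ^ (1 / (2 * (d : ℝ) ^ 2) - ε) ≤ Ks.card ∧
        ∀ K ∈ Ks, ∃ hK : FiniteDimensional ℚ K, Module.finrank ℚ K = D ∧
          |(absDiscr K hK : ℝ)| ≤ X ∧ IsNewPoint f K := by
  classical
  obtain ⟨k, hkfin, g, e, hg, hδe, hg1, hgirr, hdvd, hσ, hk⟩ :=
    exists_geometric_factor f hirr hhom (Fin.cons 1 fun _ => 0) hf0
  have hcons : (fun j => algebraMap ℚ k ((Fin.cons 1 fun _ => 0 : Fin (n + 3) → ℚ) j)) =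
      (Fin.cons 1 fun _ => 0 : Fin (n + 3) → k) := by
    funext j
    refine Fin.cases ?_ (fun j => ?_) j <;> simp
  rw [hcons] at hg1
  have he : 0 < e := Nat.pos_of_ne_zero (by rintro rfl; omega)
  have hkalg : Algebra.IsAlgebraic k Qbar := Algebra.IsAlgebraic.tower_top (K := ℚ) k
  have hσ' : ∀ i, ∃ σ : Qbar ≃ₐ[ℚ] Qbar, i ∈ I → aeval (fun j => σ (a i j)) g = 0 := by
    intro i
    by_cases hi : i ∈ I
    · obtain ⟨σ, h⟩ := hσ (a i) (hfa i hi)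
      exact ⟨σ, fun _ => h⟩
    · exact ⟨AlgEquiv.refl, fun h => absurd h hi⟩
  choose σ hga using hσ'
  set b : ℕ → Fin (n + 3) → Qbar := fun i j => σ i (a i j) with hb
  have hb1 : ∀ i ∈ I, b i 1 = 1 := fun i hi => by rw [hb]; simp only [ha1 i hi, map_one]
  have hb2 : ∀ i ∈ I, b i 2 ≠ 0 := fun i hi => by
    rw [hb]; simpa using ha2 i hi
  have hbf : ∀ i, ∀ p : MvPolynomial (Fin (n + 3)) ℚ, aeval (b i) p = σ i (aeval (a i) p) := by
    intro i p
    exact (MvPolynomial.comp_aeval_apply (a i) (σ i : Qbar →ₐ[ℚ] Qbar) p).symm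
  have hbd : ∀ i ∈ I, aeval (b i) (pderiv 0 f) ≠ 0 := fun i hi => by
    rw [hbf, Ne, map_eq_zero]; exact hfd i hi
  have hbmem : ∀ i ∈ I, ∀ j, b i j ∈ IntermediateField.adjoin ℚ {b i 2} := by
    intro i hi j
    have h1 : (IntermediateField.adjoin ℚ {a i 2}).map (σ i : Qbar →ₐ[ℚ] Qbar) =
        IntermediateField.adjoin ℚ {b i 2} := by
      rw [IntermediateField.adjoin_map, Set.image_singleton]
      rfl
    rw [← h1]
    exact ⟨a i j, hmem i hi j, rfl⟩
  have hkb : ∀ i ∈ I, k ≤ IntermediateField.adjoin ℚ {b i 2} := fun i hi =>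
    hk (b i) _ (hga i hi) ⟨0, hbd i hi⟩ (hbmem i hi)
  have hbdeg : ∀ i ∈ I, Module.finrank ℚ k * (minpoly k (b i 2)).natDegree = i := by
    intro i hi
    rw [finrank_mul_natDegree_minpoly k (b i 2) (hkb i hi)]
    refine Eq.trans ?_ (hdeg i hi)
    exact congrArg Polynomial.natDegree (minpoly.algEquiv_eq (σ i) (a i 2))
  have hinteg : ∀ t : Qbar, IsIntegral k t := fun t => Algebra.IsIntegral.isIntegral t
  have hne : ∀ i ∈ I, ∀ j ∈ I, i ≠ j → Polynomial.aeval (b i 2) (minpoly k (b j 2)) ≠ 0 := by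
    intro i hi j hj hij h
    have h2 : minpoly k (b j 2) = minpoly k (b i 2) :=
      minpoly.eq_of_irreducible_of_monic (minpoly.irreducible (hinteg _)) h (minpoly.monic (hinteg _))
    exact hij (by rw [← hbdeg i hi, ← hbdeg j hj, h2])
  have hbk : ∀ i ∈ I, ∀ j, b i j ∈ IntermediateField.adjoin k {b i 2} := by
    intro i hi j
    have h2 : IntermediateField.adjoin ℚ {b i 2} ≤
        (IntermediateField.adjoin k {b i 2}).restrictScalars ℚ := by
      rw [IntermediateField.adjoin_le_iff]
      rintro _ rfl
      exact IntermediateField.mem_adjoin_simple_self k _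
    exact h2 (hbmem i hi j)
  have hgsep : ∀ y : Qbar,
      aeval (Fin.cons y (Fin.cons 1 fun _ => 0) : Fin (n + 3) → Qbar) g = 0 →
      aeval (Fin.cons y (Fin.cons 1 fun _ => 0) : Fin (n + 3) → Qbar) (pderiv 0 g) ≠ 0 := by
    intro y hy
    obtain ⟨h2, h3⟩ := aeval_pderiv_ne_of_dvd f g hdvd _ hy 0
    exact h3 (hsep y h2)
  obtain ⟨r, s, hr1, hr2, hr0, hΦirr, hs⟩ := exists_curve k g hg he hg1 hgirr hgsep I b hb1 hb2 hbk
    hne hga (fun i hi => (aeval_pderiv_ne_of_dvd f g hdvd _ (hga i hi) 0).2 (hbd i hi))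
  obtain ⟨n1, hn1⟩ := exists_smooth_degree f hhom hf0 hsep k r hr0
  obtain ⟨hΦ, hΦe⟩ := cur_monic Polynomial.C g hg hg1 r
  have hev : ∀ (p : MvPolynomial (Fin (n + 3)) k) (t y : Qbar),
      (bc (cur Polynomial.C p r)).evalEval t y =
      aeval (Fin.cons y fun l => (bc₁ (r l)).eval t : Fin (n + 3) → Qbar) p := by
    intro p t y
    have h2 := bc_cur_evalEval (RingHom.id k) p r t y
    rw [RingHom.comp_id, RingHom.comp_id] at h2
    exact h2
  have hΦsep : ∀ y, (bc (cur Polynomial.C g r)).evalEval 0 y = 0 →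
      (Polynomial.derivative (bc (cur Polynomial.C g r))).evalEval 0 y ≠ 0 := by
    intro y hy
    have hz : (Fin.cons y fun l => (bc₁ (r l)).eval 0 : Fin (n + 3) → Qbar) =
        Fin.cons y (Fin.cons 1 fun _ => 0) := by
      congr 1
      funext l
      rw [Polynomial.eval_zero_map, hr0]
      refine Fin.cases ?_ (fun l => ?_) l <;> simp
    rw [hev, hz] at hy
    rw [bc, Polynomial.derivative_map, cur_derivative, hev, hz]
    exact hgsep y hy
  -- the count for prescribed multiplicities of the points
  have key : ∀ c : ℕ → ℕ, ∃ n0 : ℕ, ∀ N ≥ n0, ∃ C : ℝ, 0 < C ∧ ∃ X0 : ℝ, ∀ X ≥ X0,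
      ∃ Ks : Finset (IntermediateField ℚ Qbar),
        C * X ^ (1 / (2 * (d : ℝ) ^ 2) - ε) ≤ Ks.card ∧
        ∀ K ∈ Ks, ∃ hK : FiniteDimensional ℚ K, Module.finrank ℚ K = Module.finrank ℚ k *
            (e * (∑ i ∈ I, c i * (minpoly k (b i 2)).natDegree + N) -
              ∑ i ∈ I, c i * (minpoly k (b i 2)).natDegree) ∧
          |(absDiscr K hK : ℝ)| ≤ X ∧ IsNewPoint f K := by
    intro c
    set q : Polynomial k := ∏ i ∈ I, minpoly k (b i 2) ^ c i with hq
    have hqm : q.Monic := Polynomial.monic_prod_of_monic _ _ fun i _ =>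
      (minpoly.monic (hinteg _)).pow _
    have hqd : q.natDegree = ∑ i ∈ I, c i * (minpoly k (b i 2)).natDegree := by
      rw [hq, Polynomial.natDegree_prod_of_monic _ _ fun i _ => (minpoly.monic (hinteg _)).pow _]
      exact Finset.sum_congr rfl fun i _ => (minpoly.monic (hinteg _)).natDegree_pow _
    have hq0 : q.eval 0 ≠ 0 := by
      rw [hq, Polynomial.eval_prod, Finset.prod_ne_zero_iff]
      intro i hi
      rw [Polynomial.eval_pow, ← Polynomial.coeff_zero_eq_eval_zero]
      exact pow_ne_zero _ (minpoly.coeff_zero_ne_zero (hinteg _) (hb2 i hi))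
    obtain ⟨n0, hn0⟩ := core_count k (cur Polynomial.C g r) hΦ (by rw [hΦe]; exact he) hΦirr hΦsep
      q s hqm hq0 (by
        intro τ hτ
        rw [hq, bc₁, Polynomial.map_prod, Polynomial.eval_prod, Finset.prod_eq_zero_iff] at hτ
        obtain ⟨i, hi, hτ⟩ := hτ
        rw [Polynomial.map_pow, Polynomial.eval_pow] at hτ
        exact hs i hi τ (eq_zero_of_pow_eq_zero hτ)) ε hε
    rw [hΦe, hδe, hqd] at hn0
    refine ⟨max n0 n1, fun N hN => ?_⟩
    obtain ⟨C, hC, X0, hX0⟩ := hn0 N ((le_max_left _ _).trans hN)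
    refine ⟨C, hC, X0, fun X hX => ?_⟩
    obtain ⟨Ks, hcard, hKs⟩ := hX0 X hX
    refine ⟨Ks, hcard, fun K hK => ?_⟩
    obtain ⟨hKf, hKd, hKX, t, y, rfl, hy, hty, htd⟩ := hKs K hK
    refine ⟨hKf, hKd, hKX, ?_⟩
    rw [hev] at hty
    have hf := (aeval_pderiv_ne_of_dvd f g hdvd _ hty 0).1
    refine isNewPoint_of_curve f k g hk r hr1 hr2 t y hy hty hf (hn1 t y hf ?_)
    rw [htd]
    have h2 : ∀ B : ℕ, N ≤ e * (B + N) - B := fun B => by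
      have : 1 * (B + N) ≤ e * (B + N) := Nat.mul_le_mul_right _ he
      omega
    exact ((le_max_right _ _).trans hN).trans (h2 _)
  choose n0 hn0 using key
  -- the multiplicities depend on the residue of the degree modulo `d` only
  have hcc : ∀ ρ : ℕ, ∃ c : ℕ → ℕ, (∃ c' : ℕ → ℕ, d ∣ ρ + ∑ i ∈ I, c' i * i) →
      d ∣ ρ + ∑ i ∈ I, c i * i := by
    intro ρ
    by_cases h : ∃ c' : ℕ → ℕ, d ∣ ρ + ∑ i ∈ I, c' i * i
    · obtain ⟨c, hc⟩ := h
      exact ⟨c, fun _ => hc⟩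
    · exact ⟨0, fun h' => absurd h' h⟩
  choose cc hcc using hcc
  set B : (ℕ → ℕ) → ℕ := fun c => ∑ i ∈ I, c i * (minpoly k (b i 2)).natDegree with hB
  have hδB : ∀ c : ℕ → ℕ, Module.finrank ℚ k * B c = ∑ i ∈ I, c i * i := by
    intro c
    rw [hB]
    simp only
    rw [Finset.mul_sum]
    refine Finset.sum_congr rfl fun i hi => ?_
    rw [mul_left_comm, hbdeg i hi]
  refine ⟨∑ ρ ∈ Finset.range d, d * (n0 (cc ρ) + B (cc ρ)), fun D hD hGD => ?_⟩
  have hmod : ∀ x : ℕ, d ∣ D + x ↔ d ∣ D % d + x := by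
    intro x
    rw [Nat.dvd_iff_mod_eq_zero, Nat.dvd_iff_mod_eq_zero, Nat.mod_add_mod]
  set c := cc (D % d) with hc
  have hdc : d ∣ D + Module.finrank ℚ k * B c := by
    rw [hδB, hmod]
    apply hcc
    obtain ⟨c', hc'⟩ := hG D hGD
    exact ⟨c', (hmod _).mp hc'⟩
  have hDge : d * (n0 c + B c) ≤ D := by
    refine le_trans ?_ hD
    exact Finset.single_le_sum (f := fun ρ => d * (n0 (cc ρ) + B (cc ρ))) (fun _ _ => Nat.zero_le _)
      (Finset.mem_range.mpr (Nat.mod_lt D (by omega)))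
  obtain ⟨M, hM⟩ := hdc
  have hMge : n0 c + B c ≤ M := by
    refine Nat.le_of_mul_le_mul_left (c := d) ?_ (by omega)
    omega
  obtain ⟨C, hC, X0, hX0⟩ := hn0 c (M - B c) (by omega)
  refine ⟨C, hC, X0, fun X hX => ?_⟩
  obtain ⟨Ks, hcard, hKs⟩ := hX0 X hX
  refine ⟨Ks, hcard, fun K hK => ?_⟩
  obtain ⟨hKf, hKd, hKX, hnew⟩ := hKs K hK
  refine ⟨hKf, ?_, hKX, hnew⟩
  rw [hKd]
  change Module.finrank ℚ k * (e * (B c + (M - B c)) - B c) = D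
  rw [Nat.add_sub_cancel' (by omega), Nat.mul_sub, ← mul_assoc, hδe]
  omega

/-! ### Linear changes of coordinates -/

/-- The polynomial `f(T x)`. -/
def lsub {m : ℕ} {R : Type*} [CommRing R] (T : Matrix (Fin m) (Fin m) R)
    (f : MvPolynomial (Fin m) R) : MvPolynomial (Fin m) R :=
  aeval (fun i => ∑ j, C (T i j) * X j : Fin m → MvPolynomial (Fin m) R) f

section lsub
variable {m : ℕ} {R : Type*} [CommRing R]

theorem aeval_lsub {A : Type*} [CommRing A] [Algebra R A] (T : Matrix (Fin m) (Fin m) R)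
    (f : MvPolynomial (Fin m) R) (x : Fin m → A) :
    aeval x (lsub T f) = aeval (fun i => ∑ j, algebraMap R A (T i j) * x j) f := by
  rw [lsub, comp_aeval_apply]
  congr 2
  funext i
  simp

theorem lsub_lsub (S T : Matrix (Fin m) (Fin m) R) (f : MvPolynomial (Fin m) R) :
    lsub S (lsub T f) = lsub (T * S) f := by
  have h : (fun i => ∑ j, algebraMap R (MvPolynomial (Fin m) R) (T i j) *
      ∑ l, C (S j l) * X l : Fin m → MvPolynomial (Fin m) R) =
      fun i => ∑ j, C ((T * S) i j) * X j := by
    funext i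
    simp only [Matrix.mul_apply, algebraMap_eq, map_sum, Finset.mul_sum, Finset.sum_mul, map_mul]
    rw [Finset.sum_comm]
    simp only [mul_assoc]
  rw [lsub, aeval_lsub, h, lsub]

theorem lsub_one (f : MvPolynomial (Fin m) R) : lsub 1 f = f := by
  have : (fun i => ∑ j, C ((1 : Matrix (Fin m) (Fin m) R) i j) * X j :
      Fin m → MvPolynomial (Fin m) R) = X := by
    funext i
    rw [Finset.sum_eq_single_of_mem i (Finset.mem_univ i)]
    · simp
    · intro j _ hj
      rw [Matrix.one_apply_ne hj.symm]; simp
  rw [lsub, this, aeval_X_left_apply]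

theorem pderiv_lsub (T : Matrix (Fin m) (Fin m) R) (f : MvPolynomial (Fin m) R) (j : Fin m) :
    pderiv j (lsub T f) = ∑ i, C (T i j) * lsub T (pderiv i f) := by
  have hX : ∀ i, lsub T (X i) = ∑ l, C (T i l) * X l := fun i => by rw [lsub, aeval_X]
  have hm : ∀ p q, lsub T (p * q) = lsub T p * lsub T q := fun p q => map_mul _ _ _
  have ha : ∀ p q, lsub T (p + q) = lsub T p + lsub T q := fun p q => map_add _ _ _
  induction f using MvPolynomial.induction_on with
  | C a =>
    have : lsub T (C a) = C a := by rw [lsub, aeval_C]; rfl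
    rw [this]
    simp [lsub]
  | add p q hp hq =>
    simp only [ha, map_add, hp, hq, mul_add, Finset.sum_add_distrib]
  | mul_X p l hp =>
    have h1 : pderiv j (∑ i, C (T l i) * X i : MvPolynomial (Fin m) R) = C (T l j) := by
      rw [map_sum, Finset.sum_eq_single_of_mem j (Finset.mem_univ j)]
      · rw [pderiv_C_mul, pderiv_X_self, mul_one]
      · intro i _ hi
        rw [pderiv_C_mul, pderiv_X_of_ne hi, mul_zero]
    have h2 : ∀ i, lsub T (pderiv i (p * X l)) =
        lsub T p * lsub T (pderiv i (X l)) + lsub T (X l) * lsub T (pderiv i p) := by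
      intro i
      rw [Derivation.leibniz, smul_eq_mul, smul_eq_mul, ha, hm, hm]
    have h3 : ∑ i, C (T i j) * (lsub T p * lsub T (pderiv i (X l))) = lsub T p * C (T l j) := by
      rw [Finset.sum_eq_single_of_mem l (Finset.mem_univ l)]
      · rw [pderiv_X_self]
        have : lsub T 1 = 1 := map_one _
        rw [this]; ring
      · intro i _ hi
        rw [pderiv_X_of_ne hi.symm]
        have : lsub T 0 = 0 := map_zero _
        rw [this]; ring
    simp only [h2, mul_add, Finset.sum_add_distrib]
    rw [h3, hm, Derivation.leibniz, smul_eq_mul, smul_eq_mul, hp, hX, h1, Finset.mul_sum]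
    refine congrArg₂ _ rfl (Finset.sum_congr rfl fun i _ => ?_)
    exact mul_left_comm _ _ _

theorem lsub_isHomogeneous (T : Matrix (Fin m) (Fin m) R) (f : MvPolynomial (Fin m) R) {d : ℕ}
    (hf : f.IsHomogeneous d) : (lsub T f).IsHomogeneous d := by
  have := hf.aeval (fun i => ∑ j, C (T i j) * X j : Fin m → MvPolynomial (Fin m) R) (n := 1)
    (fun i => IsHomogeneous.sum _ _ _ fun j _ => (isHomogeneous_X R j).C_mul _)
  rwa [one_mul] at this

theorem lsub_irreducible (S T : Matrix (Fin m) (Fin m) R) (hST : S * T = 1) (hTS : T * S = 1)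
    (f : MvPolynomial (Fin m) R) (hf : Irreducible f) : Irreducible (lsub T f) := by
  let E : MvPolynomial (Fin m) R ≃* MvPolynomial (Fin m) R :=
    { toFun := lsub T
      invFun := lsub S
      left_inv := fun p => by rw [lsub_lsub, hTS, lsub_one]
      right_inv := fun p => by rw [lsub_lsub, hST, lsub_one]
      map_mul' := fun p q => map_mul _ _ _ }
  exact (MulEquiv.irreducible_iff E).mpr hf

end lsub

/-- New points are carried over by invertible rational changes of coordinates. -/
theorem isNewPoint_of_lsub {m : ℕ} (f : MvPolynomial (Fin m) ℚ) (S T : Matrix (Fin m) (Fin m) ℚ)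
    (hST : S * T = 1) (K : IntermediateField ℚ Qbar) (h : IsNewPoint (lsub T f) K) :
    IsNewPoint f K := by
  obtain ⟨a, haK, -, hfa, ⟨j, hj⟩, i, hi, hK⟩ := h
  set b : Fin m → Qbar := fun i => ∑ j, algebraMap ℚ Qbar (T i j) * a j with hb
  have hab : ∀ l, a l = ∑ i, algebraMap ℚ Qbar (S l i) * b i := by
    intro l
    have h1 : ∀ j, algebraMap ℚ Qbar ((S * T) l j) * a j =
        ∑ i, algebraMap ℚ Qbar (S l i) * (algebraMap ℚ Qbar (T i j) * a j) := by
      intro j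
      rw [Matrix.mul_apply, map_sum, Finset.sum_mul]
      refine Finset.sum_congr rfl fun i _ => ?_
      rw [map_mul, mul_assoc]
    simp only [hb, Finset.mul_sum]
    rw [Finset.sum_comm]
    simp only [← h1]
    rw [hST, Finset.sum_eq_single_of_mem l (Finset.mem_univ l)]
    · rw [Matrix.one_apply_eq, map_one, one_mul]
    · intro j _ hjl
      rw [Matrix.one_apply_ne hjl.symm, map_zero, zero_mul]
  have hbK : ∀ l, b l ∈ K := fun l => sum_mem fun j _ => mul_mem (K.algebraMap_mem _) (haK j)
  obtain ⟨i0, hi0⟩ : ∃ i0, b i0 ≠ 0 := by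
    by_contra hcon
    push Not at hcon
    exact hi (by rw [hab]; exact Finset.sum_eq_zero fun l _ => by rw [hcon, mul_zero])
  refine ⟨b, hbK, fun h => hi0 (by rw [h]; rfl), ?_, ?_, i0, hi0, le_antisymm ?_ ?_⟩
  · rw [aeval_lsub] at hfa
    exact hfa
  · by_contra hcon
    push Not at hcon
    apply hj
    rw [pderiv_lsub, map_sum]
    refine Finset.sum_eq_zero fun l _ => ?_
    rw [map_mul, aeval_lsub]
    exact (congrArg _ (hcon l)).trans (mul_zero _)
  · rw [IntermediateField.adjoin_le_iff]
    rintro _ ⟨l, rfl⟩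
    exact div_mem (hbK l) (hbK i0)
  · conv_lhs => rw [← hK]
    rw [IntermediateField.adjoin_le_iff]
    rintro _ ⟨l, rfl⟩
    have h1 : ∀ l, a l / b i0 ∈
        IntermediateField.adjoin ℚ (Set.range fun j => b j / b i0) := by
      intro l
      rw [hab, Finset.sum_div]
      refine sum_mem fun i _ => ?_
      rw [mul_div_assoc]
      exact mul_mem (IntermediateField.algebraMap_mem _ _)
        (IntermediateField.subset_adjoin ℚ _ ⟨i, rfl⟩)
    have h2 : a l / a i = (a l / b i0) / (a i / b i0) := by
      field_simp
    change a l / a i ∈ _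
    rw [h2]
    exact div_mem (h1 l) (h1 i)

/-! ### Generic matrices -/

/-- A property of integer matrices is generic when it holds outside the zero set of a nonzero
polynomial in the entries. -/
def Gen (m : ℕ) (P : Matrix (Fin m) (Fin m) ℤ → Prop) : Prop :=
  ∃ p : MvPolynomial (Fin m × Fin m) Qbar, p ≠ 0 ∧
    ∀ T : Matrix (Fin m) (Fin m) ℤ, eval (fun x => (T x.1 x.2 : Qbar)) p ≠ 0 → P T

section gen
variable {m : ℕ}

theorem Gen.and {P Q : Matrix (Fin m) (Fin m) ℤ → Prop} (hP : Gen m P) (hQ : Gen m Q) :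
    Gen m fun T => P T ∧ Q T := by
  obtain ⟨p, hp, hp'⟩ := hP
  obtain ⟨q, hq, hq'⟩ := hQ
  refine ⟨p * q, mul_ne_zero hp hq, fun T hT => ?_⟩
  rw [map_mul] at hT
  exact ⟨hp' T (left_ne_zero_of_mul hT), hq' T (right_ne_zero_of_mul hT)⟩

theorem Gen.all {ι : Type*} (s : Finset ι) {P : ι → Matrix (Fin m) (Fin m) ℤ → Prop}
    (hP : ∀ i ∈ s, Gen m (P i)) : Gen m fun T => ∀ i ∈ s, P i T := by
  classical
  induction s using Finset.induction_on with
  | empty => exact ⟨1, one_ne_zero, fun T _ i hi => absurd hi (Finset.notMem_empty i)⟩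
  | insert a s ha ih =>
    obtain ⟨p, hp, hp'⟩ := (hP a (Finset.mem_insert_self a s)).and
      (ih fun i hi => hP i (Finset.mem_insert_of_mem hi))
    refine ⟨p, hp, fun T hT i hi => ?_⟩
    rcases Finset.mem_insert.mp hi with rfl | hi
    · exact (hp' T hT).1
    · exact (hp' T hT).2 i hi

theorem Gen.exists {P : Matrix (Fin m) (Fin m) ℤ → Prop} (hP : Gen m P) : ∃ T, P T := by
  obtain ⟨p, hp, hp'⟩ := hP
  by_contra hcon
  push Not at hcon
  apply hp
  refine funext_set (fun _ => Set.range (Int.cast : ℤ → Qbar))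
    (fun _ => Set.infinite_range_of_injective Int.cast_injective) fun x hx => ?_
  have h2 : ∀ j, ∃ z : ℤ, (z : Qbar) = x j := fun j => hx j (Set.mem_univ j)
  choose z hz using h2
  have h3 : x = fun j => (z j : Qbar) := funext fun j => (hz j).symm
  rw [h3, map_zero]
  by_contra h4
  exact hcon (fun i j => z (i, j)) (hp' _ h4)

theorem Gen.of_witness (p : MvPolynomial (Fin m × Fin m) Qbar) (M : Matrix (Fin m) (Fin m) Qbar)
    (hM : eval (fun x => M x.1 x.2) p ≠ 0) {P : Matrix (Fin m) (Fin m) ℤ → Prop}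
    (hP : ∀ T : Matrix (Fin m) (Fin m) ℤ, eval (fun x => (T x.1 x.2 : Qbar)) p ≠ 0 → P T) :
    Gen m P :=
  ⟨p, fun h => hM (by rw [h, map_zero]), hP⟩

theorem gen_det : Gen m fun T => T.det ≠ 0 := by
  refine ⟨(Matrix.mvPolynomialX (Fin m) (Fin m) Qbar).det,
    Matrix.det_mvPolynomialX_ne_zero (Fin m) Qbar, fun T hT h => hT ?_⟩
  rw [RingHom.map_det]
  have h1 := Matrix.mvPolynomialX_mapMatrix_eval (T.map (Int.cast : ℤ → Qbar))
  have h2 : (T.map (Int.cast : ℤ → Qbar)).det = ((T.det : ℤ) : Qbar) :=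
    ((Int.castRingHom Qbar).map_det T).symm
  rw [h, Int.cast_zero, ← h1] at h2
  exact h2

/-- A nonzero polynomial condition in a single column is generic. -/
theorem gen_col (l : Fin m) (p : MvPolynomial (Fin m) Qbar) (hp : p ≠ 0) :
    Gen m fun T => eval (fun i => (T i l : Qbar)) p ≠ 0 := by
  have hev : ∀ M : Matrix (Fin m) (Fin m) Qbar, eval (fun x => M x.1 x.2)
      (aeval (fun i => X (i, l) : Fin m → MvPolynomial (Fin m × Fin m) Qbar) p) =
      eval (fun i => M i l) p := by
    intro M
    rw [← coe_aeval_eq_eval, RingHom.coe_coe, comp_aeval_apply, ← coe_aeval_eq_eval]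
    simp
  obtain ⟨x, hx⟩ : ∃ x, eval x p ≠ 0 := by
    by_contra hcon
    push Not at hcon
    exact hp (MvPolynomial.funext fun x => by rw [hcon, map_zero])
  refine Gen.of_witness (aeval (fun i => X (i, l)) p) (fun i _ => x i) ?_ fun T hT => ?_
  · exact fun h => hx ((hev fun i _ => x i).symm.trans h)
  · have := hev fun i j => (T i j : Qbar)
    rwa [this] at hT

/-- Genericity of a polynomial condition in the entries of the adjugate, tested at the multiples of
a permutation matrix. -/
theorem gen_adj (P : MvPolynomial (Fin m × Fin m) Qbar) (σ : Equiv.Perm (Fin m))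
    (hP : ∀ c : Qbar, c ≠ 0 →
      eval (fun x => c * (if σ x.1 = x.2 then 1 else 0)) P ≠ 0) :
    Gen m fun T => eval (fun x => ((T.adjugate x.1 x.2 : ℤ) : Qbar)) P ≠ 0 := by
  set M := Matrix.mvPolynomialX (Fin m) (Fin m) Qbar with hM
  have hev : ∀ S : Matrix (Fin m) (Fin m) Qbar, eval (fun x => S x.1 x.2)
      (aeval (fun x => M.adjugate x.1 x.2 :
        Fin m × Fin m → MvPolynomial (Fin m × Fin m) Qbar) P) =
      eval (fun x => S.adjugate x.1 x.2) P := by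
    intro S
    have h1 : ∀ x : Fin m × Fin m, eval (fun x => S x.1 x.2) (M.adjugate x.1 x.2) =
        S.adjugate x.1 x.2 := by
      intro x
      have h2 := RingHom.map_adjugate (eval fun x : Fin m × Fin m => S x.1 x.2) M
      rw [Matrix.mvPolynomialX_mapMatrix_eval] at h2
      exact congrFun (congrFun h2 x.1) x.2
    rw [← coe_aeval_eq_eval, RingHom.coe_coe, comp_aeval_apply, ← coe_aeval_eq_eval,
      RingHom.coe_coe]
    congr 2
    funext x
    rw [← h1, ← coe_aeval_eq_eval, RingHom.coe_coe]
  have hST : (1 : Matrix (Fin m) (Fin m) Qbar).submatrix σ (Equiv.refl _) *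
      (1 : Matrix (Fin m) (Fin m) Qbar).submatrix (Equiv.refl _) σ = 1 := by
    rw [Matrix.submatrix_mul_equiv, one_mul, Matrix.submatrix_one_equiv]
  set S := (1 : Matrix (Fin m) (Fin m) Qbar).submatrix σ (Equiv.refl _) with hS
  set T0 := (1 : Matrix (Fin m) (Fin m) Qbar).submatrix (Equiv.refl _) σ with hT0
  have hTS : T0 * S = 1 := mul_eq_one_comm.mp hST
  have hdet : T0.det ≠ 0 := by
    intro h
    have := congrArg Matrix.det hST
    rw [Matrix.det_mul, h, mul_zero, Matrix.det_one] at this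
    exact zero_ne_one this
  have hadj : T0.adjugate = T0.det • S := by
    calc T0.adjugate = T0.adjugate * (T0 * S) := by rw [hTS, mul_one]
      _ = T0.det • S := by rw [← mul_assoc, Matrix.adjugate_mul, Matrix.smul_mul, one_mul]
  refine Gen.of_witness (aeval (fun x => M.adjugate x.1 x.2) P) T0 ?_ fun T hT => ?_
  · rw [hev, hadj]
    have h1 : (fun x : Fin m × Fin m => (T0.det • S) x.1 x.2) =
        fun x => T0.det * (if σ x.1 = x.2 then 1 else 0) := by
      funext x
      rw [Matrix.smul_apply, hS, Matrix.submatrix_apply, Matrix.one_apply, smul_eq_mul]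
      rfl
    rw [h1]
    exact hP T0.det hdet
  · have h1 := hev (T.map (Int.cast : ℤ → Qbar))
    have h2 : (T.map (Int.cast : ℤ → Qbar)).adjugate = T.adjugate.map (Int.cast : ℤ → Qbar) :=
      ((Int.castRingHom Qbar).map_adjugate T).symm
    rw [h2] at h1
    exact fun h => hT (h1.trans h)

theorem gen_adj_ne (v : Fin m → Qbar) (hv : v ≠ 0) (l : Fin m) :
    Gen m fun T => ∑ j, ((T.adjugate l j : ℤ) : Qbar) * v j ≠ 0 := by
  obtain ⟨p, hp⟩ := Function.ne_iff.mp hv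
  have h := gen_adj (∑ j, X (l, j) * C (v j)) (Equiv.swap l p) (by
    intro c hc
    simp [hc]
    exact hp)
  simpa using h

/-- For a generic matrix, distinct points `v`, `w` have images under the adjugate with distinct ratios
of the coordinates `i` and `j`. -/
theorem gen_adj_pair (v w : Fin m → Qbar) (l p : Fin m) (hv : v l = 1) (hw : w l = 1)
    (hne : v p ≠ w p) (i j : Fin m) (hij : i ≠ j) :
    Gen m fun T => (∑ s, ((T.adjugate j s : ℤ) : Qbar) * w s) *
      (∑ s, ((T.adjugate i s : ℤ) : Qbar) * v s) -
      (∑ s, ((T.adjugate j s : ℤ) : Qbar) * v s) *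
      (∑ s, ((T.adjugate i s : ℤ) : Qbar) * w s) ≠ 0 := by
  have hlp : l ≠ p := by rintro rfl; exact hne (by rw [hv, hw])
  obtain ⟨σ, hσ1, hσ2⟩ : ∃ σ : Equiv.Perm (Fin m), σ i = l ∧ σ j = p := by
    refine ⟨Equiv.swap (Equiv.swap i l j) p * Equiv.swap i l, ?_, ?_⟩
    · rw [Equiv.Perm.mul_apply, Equiv.swap_apply_left, Equiv.swap_apply_of_ne_of_ne _ hlp]
      intro h
      apply hij
      apply (Equiv.swap i l).injective
      rw [Equiv.swap_apply_left, ← h]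
    · rw [Equiv.Perm.mul_apply, Equiv.swap_apply_left]
  have h := gen_adj ((∑ s, X (j, s) * C (w s)) * (∑ s, X (i, s) * C (v s)) -
    (∑ s, X (j, s) * C (v s)) * (∑ s, X (i, s) * C (w s))) σ (by
    intro c hc
    have h1 : c ≠ 0 → c * w p * c - c * v p * c ≠ 0 := by
      intro hc h
      have h2 : c * c * (w p - v p) = 0 := by linear_combination h
      rcases mul_eq_zero.mp h2 with h2 | h2
      · exact mul_ne_zero hc hc h2
      · exact hne (sub_eq_zero.mp h2).symm
    simpa [hσ1, hσ2, hv, hw] using h1 hc)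
  simpa using h

end gen

/-! ### Transversal lines -/

theorem map_lsub {m : ℕ} {R S : Type*} [CommRing R] [CommRing S] (θ : R →+* S)
    (T : Matrix (Fin m) (Fin m) R) (f : MvPolynomial (Fin m) R) :
    map θ (lsub T f) = lsub (T.map θ) (map θ f) := by
  have h : (map θ).comp (aeval (R := R)
        (fun i => ∑ j, C (T i j) * X j : Fin m → MvPolynomial (Fin m) R)).toRingHom =
      (aeval (R := S)
        (fun i => ∑ j, C (T.map θ i j) * X j : Fin m → MvPolynomial (Fin m) S)).toRingHom.comp
        (map θ) := by
    apply MvPolynomial.ringHom_ext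
    · intro a; simp
    · intro i; simp
  exact RingHom.congr_fun h f

theorem natDegree_cur_le {k A : Type*} [CommRing k] [CommRing A] {N d : ℕ} (j : k →+* A)
    (g : MvPolynomial (Fin (N + 1)) k) (hg : g.IsHomogeneous d) (r : Fin N → A) :
    (cur j g r).natDegree ≤ d := by
  rw [cur_eq]
  refine Polynomial.natDegree_map_le.trans ?_
  rw [natDegree_finSuccEquiv]
  exact (degreeOf_le_totalDegree g 0).trans hg.totalDegree_le

/-- Some line through a fixed general point meets an irreducible hypersurface transversally. -/
theorem exists_sep_witness {n d : ℕ} (f : MvPolynomial (Fin (n + 3)) ℚ)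
    (hirr : Irreducible f) (hhom : f.IsHomogeneous d) :
    ∃ (u : ℚ) (T : Matrix (Fin (n + 3)) (Fin (n + 3)) ℚ), u ≠ 0 ∧
      (cur (RingHom.id ℚ) (lsub T (C u * f)) (Fin.cons 1 fun _ => 0)).resultant
        (Polynomial.derivative
          (cur (RingHom.id ℚ) (lsub T (C u * f)) (Fin.cons 1 fun _ => 0))) d (d - 1) ≠ 0 := by
  have hf0 : map (algebraMap ℚ Qbar) f ≠ 0 := by
    rw [Ne, map_eq_zero_iff _ (map_injective _ (algebraMap ℚ Qbar).injective)]
    exact hirr.ne_zero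
  obtain ⟨T1, hdet, hcol⟩ := (gen_det.and (gen_col (0 : Fin (n + 3)) _ hf0)).exists
  set T := T1.map (Int.cast : ℤ → ℚ) with hT
  have hdetT : IsUnit T.det := by
    have h2 : T.det = ((T1.det : ℤ) : ℚ) := ((Int.castRingHom ℚ).map_det T1).symm
    rw [h2, isUnit_iff_ne_zero]
    exact_mod_cast hdet
  set v := eval (fun i => T i 0) f with hv
  have hv0 : v ≠ 0 := by
    intro h
    apply hcol
    rw [eval_map]
    have h2 := eval₂_comp (algebraMap ℚ Qbar) (fun i => T i 0) f
    rw [← hv, h, map_zero] at h2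
    rw [h2]
    congr 1
  set f1 := lsub T (C v⁻¹ * f) with hf1
  have hirr1 : Irreducible f1 := by
    apply lsub_irreducible T⁻¹ T (Matrix.nonsing_inv_mul T hdetT) (Matrix.mul_nonsing_inv T hdetT)
    rw [irreducible_isUnit_mul ((isUnit_iff_ne_zero.mpr (inv_ne_zero hv0)).map C)]
    exact hirr
  have hhom1 : f1.IsHomogeneous d := lsub_isHomogeneous T _ (hhom.C_mul _)
  have hone : eval (Fin.cons 1 fun _ => 0 : Fin (n + 3) → ℚ) f1 = 1 := by
    have h2 := aeval_lsub T (C v⁻¹ * f) (Fin.cons 1 fun _ => 0 : Fin (n + 3) → ℚ)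
    have h3 : (fun i => ∑ j, algebraMap ℚ ℚ (T i j) *
        (Fin.cons 1 fun _ => 0 : Fin (n + 3) → ℚ) j) = fun i => T i 0 := by
      funext i
      rw [Fin.sum_univ_succ]
      simp
    rw [h3] at h2
    rw [← coe_aeval_eq_eval, RingHom.coe_coe, hf1, h2, map_mul, aeval_C,
      ← RingHom.coe_coe (aeval fun i => T i 0), coe_aeval_eq_eval, ← hv]
    exact inv_mul_cancel₀ hv0
  set Φ := cur (C : ℚ →+* MvPolynomial (Fin (n + 2)) ℚ) f1 X with hΦ
  obtain ⟨hmon, hdeg⟩ := cur_monic (C : ℚ →+* MvPolynomial (Fin (n + 2)) ℚ) f1 hhom1 hone X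
  have hΦirr : Irreducible Φ := by
    have h2 : Φ = finSuccEquiv ℚ (n + 2) f1 := by
      rw [hΦ, cur_eq]
      have : eval₂Hom (C : ℚ →+* MvPolynomial (Fin (n + 2)) ℚ) X = RingHom.id _ := by
        apply MvPolynomial.ringHom_ext <;> simp
      rw [this, Polynomial.map_id]
    rw [h2]
    exact (MulEquiv.irreducible_iff (finSuccEquiv ℚ (n + 2))).mpr hirr1
  set F := FractionRing (MvPolynomial (Fin (n + 2)) ℚ) with hF
  have hmapirr := (Polynomial.Monic.irreducible_iff_irreducible_map_fraction_map (K := F) hmon).mp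
    hΦirr
  have hchar : CharZero F := algebraRat.charZero F
  have hcop := hmapirr.separable
  rw [Polynomial.separable_def] at hcop
  have hres := Polynomial.resultant_ne_zero _ _ hcop
  rw [Polynomial.natDegree_derivative, hmon.natDegree_map, hdeg, Polynomial.derivative_map,
    Polynomial.resultant_map_map] at hres
  have hres' : Φ.resultant (Polynomial.derivative Φ) d (d - 1) ≠ 0 := fun h =>
    hres (by rw [h, map_zero])
  obtain ⟨x, hx⟩ : ∃ x, eval x (Φ.resultant (Polynomial.derivative Φ) d (d - 1)) ≠ 0 := by
    by_contra hcon
    push Not at hcon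
    exact hres' (MvPolynomial.funext fun x => by rw [hcon, map_zero])
  have hid : (eval x).comp (C : ℚ →+* MvPolynomial (Fin (n + 2)) ℚ) = RingHom.id ℚ :=
    RingHom.ext fun a => eval_C a
  have hXx : (fun i => eval x (X i : MvPolynomial (Fin (n + 2)) ℚ)) = x := funext fun i => eval_X i
  have hΦx : Φ.map (eval x) = cur (RingHom.id ℚ) f1 x :=
    (cur_map C (eval x) f1 X).trans (congrArg₂ (fun j r => cur j f1 r) hid hXx)
  rw [← Polynomial.resultant_map_map, ← Polynomial.derivative_map, hΦx] at hx
  -- the line spanned by the first basis vector and `x`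
  set T2 : Matrix (Fin (n + 3)) (Fin (n + 3)) ℚ := fun i j =>
    if j = 0 then (if i = 0 then 1 else 0) else if j = 1 then (Fin.cons 0 x : Fin (n + 3) → ℚ) i
      else 0 with hT2
  have hcur : ∀ (g : MvPolynomial (Fin (n + 3)) ℚ) (r : Fin (n + 2) → ℚ),
      cur (RingHom.id ℚ) g r =
      aeval (Fin.cons Polynomial.X fun i => Polynomial.C (r i) : Fin (n + 3) → Polynomial ℚ) g :=
    fun g r => rfl
  have hline : cur (RingHom.id ℚ) (lsub (T * T2) (C v⁻¹ * f)) (Fin.cons 1 fun _ => 0) =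
      cur (RingHom.id ℚ) f1 x := by
    rw [← lsub_lsub, ← hf1, hcur, hcur, aeval_lsub]
    have h3 : (fun i => ∑ j, algebraMap ℚ (Polynomial ℚ) (T2 i j) *
        (Fin.cons Polynomial.X fun i => Polynomial.C
          ((Fin.cons 1 fun _ => 0 : Fin (n + 2) → ℚ) i) : Fin (n + 3) → Polynomial ℚ) j) =
        (Fin.cons Polynomial.X fun i => Polynomial.C (x i) : Fin (n + 3) → Polynomial ℚ) := by
      funext i
      rw [Fin.sum_univ_succ, Fin.sum_univ_succ]
      refine Fin.cases ?_ (fun i => ?_) i <;> simp [hT2]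
    rw [h3]
  exact ⟨v⁻¹, T * T2, inv_ne_zero hv0, by rw [hline]; exact hx⟩

/-- In generic coordinates the line `x_2 = x_3 = ⋯ = 0` meets the hypersurface transversally away from
`(1, 0, …, 0)`. -/
theorem gen_sep {n d : ℕ} (hd : 1 ≤ d) (f : MvPolynomial (Fin (n + 3)) ℚ)
    (hirr : Irreducible f) (hhom : f.IsHomogeneous d) :
    Gen (n + 3) fun T => ∀ y : Qbar,
      aeval (Fin.cons y (Fin.cons 1 fun _ => 0) : Fin (n + 3) → Qbar)
        (lsub (T.map (Int.cast : ℤ → ℚ)) f) = 0 →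
      aeval (Fin.cons y (Fin.cons 1 fun _ => 0) : Fin (n + 3) → Qbar)
        (pderiv 0 (lsub (T.map (Int.cast : ℤ → ℚ)) f)) ≠ 0 := by
  obtain ⟨u, T0, hu, hT0⟩ := exists_sep_witness f hirr hhom
  set f' := C u * f with hf'
  have hhom' : f'.IsHomogeneous d := hhom.C_mul _
  set M := Matrix.mvPolynomialX (Fin (n + 3)) (Fin (n + 3)) Qbar with hM
  -- the restriction of the polynomial to the line spanned by two columns of `T`
  have hmap : ∀ {R S : Type} [CommRing R] [CommRing S] [Algebra ℚ R] [Algebra ℚ S] (θ : R →+* S)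
      (T : Matrix (Fin (n + 3)) (Fin (n + 3)) R),
      (cur (RingHom.id R) (lsub T (map (algebraMap ℚ R) f')) (Fin.cons 1 fun _ => 0)).map θ =
      cur (RingHom.id S) (lsub (T.map θ) (map (algebraMap ℚ S) f')) (Fin.cons 1 fun _ => 0) := by
    intro R S _ _ _ _ θ T
    have h1 : map (algebraMap ℚ S) f' = map θ (map (algebraMap ℚ R) f') := by
      rw [map_map, Subsingleton.elim (θ.comp (algebraMap ℚ R)) (algebraMap ℚ S)]
    rw [h1, ← map_lsub, cur_map_left, cur_map]
    rw [RingHom.comp_id, RingHom.id_comp]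
    congr 1
    funext i
    refine Fin.cases ?_ (fun i => ?_) i <;> simp
  set Ψ := cur (RingHom.id (MvPolynomial (Fin (n + 3) × Fin (n + 3)) Qbar)) (lsub M (map (algebraMap ℚ _) f'))
    (Fin.cons 1 fun _ => 0) with hΨ
  have hMT : ∀ T : Matrix (Fin (n + 3)) (Fin (n + 3)) Qbar,
      M.map (eval fun x => T x.1 x.2) = T := fun T => by
    ext i j
    rw [Matrix.map_apply, hM, Matrix.mvPolynomialX_apply, eval_X]
  have hev : ∀ T : Matrix (Fin (n + 3)) (Fin (n + 3)) Qbar, eval (fun x => T x.1 x.2)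
      (Ψ.resultant (Polynomial.derivative Ψ) d (d - 1)) =
      (cur (RingHom.id Qbar) (lsub T (map (algebraMap ℚ Qbar) f'))
        (Fin.cons 1 fun _ => 0)).resultant (Polynomial.derivative
      (cur (RingHom.id Qbar) (lsub T (map (algebraMap ℚ Qbar) f')) (Fin.cons 1 fun _ => 0)))
        d (d - 1) := by
    intro T
    rw [← Polynomial.resultant_map_map, ← Polynomial.derivative_map, hΨ, hmap, hMT]
  refine Gen.of_witness (Ψ.resultant (Polynomial.derivative Ψ) d (d - 1))
    (T0.map (algebraMap ℚ Qbar)) ?_ ?_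
  · rw [hev, ← hmap (algebraMap ℚ Qbar) T0, Polynomial.derivative_map,
      Polynomial.resultant_map_map, Ne, map_eq_zero]
    rwa [Algebra.algebraMap_self, map_id]
  · intro T hT y hy hy'
    apply hT
    have h1 := hev (T.map (Int.cast : ℤ → Qbar))
    refine h1.trans ?_
    set P := cur (RingHom.id Qbar) (lsub (T.map (Int.cast : ℤ → Qbar)) (map (algebraMap ℚ Qbar) f'))
        (Fin.cons 1 fun _ => 0) with hP
    have hPdeg : P.natDegree ≤ d :=
      natDegree_cur_le _ _ (lsub_isHomogeneous _ _ (hhom'.map _)) _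
    obtain ⟨p, q, -, -, hpq⟩ := Polynomial.exists_mul_add_mul_eq_C_resultant P
      (Polynomial.derivative P) hPdeg
      ((Polynomial.natDegree_derivative_le P).trans (Nat.sub_le_sub_right hPdeg 1))
      (Or.inl (by omega))
    have hTT : (T.map (Int.cast : ℤ → ℚ)).map (algebraMap ℚ Qbar) =
        T.map (Int.cast : ℤ → Qbar) := by
      ext i j; simp
    have hlin : lsub (T.map (Int.cast : ℤ → ℚ)) f' = C u * lsub (T.map (Int.cast : ℤ → ℚ)) f := by
      rw [hf', lsub, map_mul, aeval_C]
      rfl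
    have hPe : P = cur (algebraMap ℚ Qbar) (lsub (T.map (Int.cast : ℤ → ℚ)) f')
        (Fin.cons 1 fun _ => 0) := by
      rw [hP, ← hTT, ← map_lsub, cur_map_left, RingHom.id_comp]
    have hroot : P.eval y = 0 := by
      rw [hPe, cur_eval, ← aeval_def, hlin, map_mul, hy, mul_zero]
    have hroot' : (Polynomial.derivative P).eval y = 0 := by
      rw [hPe, cur_derivative, cur_eval, ← aeval_def, hlin, pderiv_C_mul, map_mul, hy', mul_zero]
    have := congrArg (Polynomial.eval y) hpq
    rw [Polynomial.eval_add, Polynomial.eval_mul, Polynomial.eval_mul, hroot, hroot', zero_mul,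
      zero_mul, zero_add, Polynomial.eval_C] at this
    exact this.symm

/-! ### Generic coordinates -/

theorem Gen.mono {m : ℕ} {P Q : Matrix (Fin m) (Fin m) ℤ → Prop} (hP : Gen m P)
    (h : ∀ T, P T → Q T) : Gen m Q := by
  obtain ⟨p, hp, hp'⟩ := hP
  exact ⟨p, hp, fun T hT => h T (hp' T hT)⟩

theorem mem_adjoin_of_fixed (t x : Qbar)
    (h : ∀ σ : Qbar ≃ₐ[ℚ] Qbar, σ t = t → σ x = x) : x ∈ IntermediateField.adjoin ℚ {t} := by
  rw [← InfiniteGalois.fixedField_fixingSubgroup (IntermediateField.adjoin ℚ {t})]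
  intro σ
  refine h σ.1 ?_
  exact (IntermediateField.mem_fixingSubgroup_iff _ _).mp σ.2 t
    (IntermediateField.mem_adjoin_simple_self ℚ t)

/-- A tuple of algebraic numbers has finitely many conjugates. -/
theorem finite_conj {m : ℕ} (a : Fin m → Qbar) :
    {w : Fin m → Qbar | ∃ σ : Qbar ≃ₐ[ℚ] Qbar, w = fun i => σ (a i)}.Finite := by
  refine (Set.Finite.pi' fun i => (minpoly ℚ (a i)).rootSet_finite Qbar).subset ?_
  rintro w ⟨σ, rfl⟩ i
  rw [Polynomial.mem_rootSet]
  refine ⟨minpoly.ne_zero (Algebra.IsIntegral.isIntegral (a i)), ?_⟩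
  have := Polynomial.aeval_algHom_apply (σ : Qbar →ₐ[ℚ] Qbar) (a i) (minpoly ℚ (a i))
  rw [minpoly.aeval, map_zero] at this
  exact this

/-- A new point can be scaled so that its coordinates generate the field. -/
theorem exists_normalised {m d : ℕ} (f : MvPolynomial (Fin m) ℚ) (hhom : f.IsHomogeneous d)
    (K : IntermediateField ℚ Qbar) (h : IsNewPoint f K) :
    ∃ (a : Fin m → Qbar) (l : Fin m), a l = 1 ∧ IntermediateField.adjoin ℚ (Set.range a) = K ∧
      aeval a f = 0 ∧ ∃ j, aeval a (pderiv j f) ≠ 0 := by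
  obtain ⟨a, -, -, hfa, ⟨j, hj⟩, i, hi, hK⟩ := h
  have hsc : ∀ (g : MvPolynomial (Fin m) ℚ) (e : ℕ), g.IsHomogeneous e →
      aeval (fun j => a j / a i) g = (a i)⁻¹ ^ e * aeval a g := by
    intro g e hg
    have := eval₂_smul_of_homogeneous (algebraMap ℚ Qbar) g hg (a i)⁻¹ a
    simp only [← div_eq_inv_mul] at this
    exact this
  refine ⟨fun j => a j / a i, i, div_self hi, hK, ?_, j, ?_⟩
  · rw [hsc f d hhom, hfa, mul_zero]
  · rw [hsc _ _ hhom.pderiv]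
    exact mul_ne_zero (pow_ne_zero _ (inv_ne_zero hi)) hj

/-- In generic coordinates the quotient of the third by the second coordinate of a given
point of the hypersurface generates its field of definition, and the first partial derivative
does not vanish there. -/
theorem gen_point {n d : ℕ} (f : MvPolynomial (Fin (n + 3)) ℚ) (hhom : f.IsHomogeneous d)
    (a : Fin (n + 3) → Qbar) (l : Fin (n + 3)) (hal : a l = 1) (hfa : aeval a f = 0)
    (hfd : ∃ j, aeval a (pderiv j f) ≠ 0) :
    Gen (n + 3) fun T => ∃ b : Fin (n + 3) → Qbar, b 1 = 1 ∧ b 2 ≠ 0 ∧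
      (∀ j, b j ∈ IntermediateField.adjoin ℚ {b 2}) ∧
      IntermediateField.adjoin ℚ {b 2} = IntermediateField.adjoin ℚ (Set.range a) ∧
      aeval b (lsub (T.map (Int.cast : ℤ → ℚ)) f) = 0 ∧
      aeval b (pderiv 0 (lsub (T.map (Int.cast : ℤ → ℚ)) f)) ≠ 0 := by
  classical
  have ha0 : a ≠ 0 := fun h => by rw [h] at hal; exact zero_ne_one hal
  have hq : (∑ i, C (aeval a (pderiv i f)) * X i : MvPolynomial (Fin (n + 3)) Qbar) ≠ 0 := by
    obtain ⟨j, hj⟩ := hfd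
    intro h
    apply hj
    have := congrArg (eval (Pi.single j 1 : Fin (n + 3) → Qbar)) h
    rw [map_sum, map_zero, Finset.sum_eq_single_of_mem j (Finset.mem_univ j)] at this
    · rwa [map_mul, eval_C, eval_X, Pi.single_eq_same, mul_one] at this
    · intro i _ hi
      rw [map_mul, eval_X, Pi.single_eq_of_ne hi, mul_zero]
  have hpair := Gen.all (finite_conj a).toFinset (P := fun w T => w ≠ a →
      (∑ s, ((T.adjugate 2 s : ℤ) : Qbar) * w s) * (∑ s, ((T.adjugate 1 s : ℤ) : Qbar) * a s) -
      (∑ s, ((T.adjugate 2 s : ℤ) : Qbar) * a s) *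
      (∑ s, ((T.adjugate 1 s : ℤ) : Qbar) * w s) ≠ 0) (fun w hw => by
    rw [Set.Finite.mem_toFinset] at hw
    obtain ⟨σ, hσ⟩ := hw
    by_cases hwa : w = a
    · exact ⟨1, one_ne_zero, fun T _ h => absurd hwa h⟩
    · obtain ⟨p, hp⟩ := Function.ne_iff.mp hwa
      refine (gen_adj_pair a w l p hal (by rw [hσ]; simp [hal]) (Ne.symm hp) 1 2 ?_).mono
        fun T h _ => h
      rw [Ne, Fin.ext_iff]
      change ¬ 1 % (n + 3) = 2 % (n + 3)
      rw [Nat.mod_eq_of_lt (by omega), Nat.mod_eq_of_lt (by omega)]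
      omega)
  refine (((gen_det.and (gen_adj_ne a ha0 1)).and (gen_adj_ne a ha0 2)).and
    ((gen_col 0 _ hq).and hpair)).mono ?_
  rintro T ⟨⟨⟨hdet, hx1⟩, hx2⟩, hcol, hpair⟩
  set x : Fin (n + 3) → Qbar := fun i => ∑ s, ((T.adjugate i s : ℤ) : Qbar) * a s with hx
  change x 1 ≠ 0 at hx1
  change x 2 ≠ 0 at hx2
  have hTx : ∀ i, ∑ j, (T i j : Qbar) * x j = (T.det : Qbar) * a i := by
    intro i
    have h1 : ∀ s, ∑ j, (T i j : Qbar) * ((T.adjugate j s : ℤ) : Qbar) =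
        if i = s then (T.det : Qbar) else 0 := by
      intro s
      have := congrFun (congrFun (Matrix.mul_adjugate T) i) s
      rw [Matrix.mul_apply, Matrix.smul_apply, Matrix.one_apply] at this
      have h2 := congrArg (Int.cast : ℤ → Qbar) this
      push_cast at h2
      rw [h2]
      split_ifs <;> simp
    simp only [hx, Finset.mul_sum]
    rw [Finset.sum_comm]
    simp only [← mul_assoc, ← Finset.sum_mul, h1]
    simp
  set b : Fin (n + 3) → Qbar := fun i => x i / x 1 with hb
  have hTb : (fun i => ∑ j, algebraMap ℚ Qbar ((T.map (Int.cast : ℤ → ℚ)) i j) * b j) =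
      fun i => ((T.det : Qbar) / x 1) * a i := by
    funext i
    rw [div_mul_eq_mul_div, ← hTx i, Finset.sum_div]
    refine Finset.sum_congr rfl fun j _ => ?_
    simp [hb, mul_div_assoc]
  have hc0 : (T.det : Qbar) / x 1 ≠ 0 := div_ne_zero (by exact_mod_cast hdet) hx1
  have hsc : ∀ (g : MvPolynomial (Fin (n + 3)) ℚ) (e : ℕ), g.IsHomogeneous e →
      aeval b (lsub (T.map (Int.cast : ℤ → ℚ)) g) = ((T.det : Qbar) / x 1) ^ e * aeval a g := by
    intro g e hg
    rw [aeval_lsub, hTb]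
    exact eval₂_smul_of_homogeneous (algebraMap ℚ Qbar) g hg _ a
  have hfix : ∀ σ : Qbar ≃ₐ[ℚ] Qbar, σ (b 2) = b 2 → ∀ i, σ (a i) = a i := by
    intro σ hσ
    by_contra hcon
    have hwa : (fun i => σ (a i)) ≠ a := fun h => hcon fun i => congrFun h i
    refine hpair (fun i => σ (a i)) ((Set.Finite.mem_toFinset _).mpr ⟨σ, rfl⟩) hwa ?_
    have hσx : ∀ i, σ (x i) = ∑ s, ((T.adjugate i s : ℤ) : Qbar) * σ (a s) := by
      intro i
      simp [hx]
    rw [← hσx, ← hσx]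
    change σ (x 2) * x 1 - x 2 * σ (x 1) = 0
    have hσ1 : σ (x 1) ≠ 0 := fun h => hx1 (by simpa using h)
    simp only [hb, map_div₀] at hσ
    rw [div_eq_div_iff hσ1 hx1] at hσ
    rw [hσ, sub_self]
  have haK : ∀ i, a i ∈ IntermediateField.adjoin ℚ {b 2} := fun i =>
    mem_adjoin_of_fixed _ _ fun σ hσ => hfix σ hσ i
  have hinteg : ∀ (F : IntermediateField ℚ Qbar), (∀ i, a i ∈ F) → ∀ i, b i ∈ F := by
    intro F hF i
    have : ∀ i, x i ∈ F := fun i => sum_mem fun s _ => mul_mem (intCast_mem F _) (hF s)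
    exact div_mem (this i) (this 1)
  refine ⟨b, div_self hx1, div_ne_zero hx2 hx1, hinteg _ haK, le_antisymm ?_ ?_, ?_, ?_⟩
  · rw [IntermediateField.adjoin_le_iff, Set.singleton_subset_iff]
    exact hinteg _ (fun i => IntermediateField.subset_adjoin ℚ _ (Set.mem_range_self i)) 2
  · rw [IntermediateField.adjoin_le_iff]
    rintro _ ⟨i, rfl⟩
    exact haK i
  · rw [hsc f d hhom, hfa, mul_zero]
  · rw [pderiv_lsub, map_sum]
    have h1 : ∀ i, aeval b (C (T.map (Int.cast : ℤ → ℚ) i 0) *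
        lsub (T.map (Int.cast : ℤ → ℚ)) (pderiv i f)) =
        ((T.det : Qbar) / x 1) ^ (d - 1) * (aeval a (pderiv i f) * (T i 0 : Qbar)) := by
      intro i
      rw [map_mul, hsc _ _ hhom.pderiv, aeval_C]
      simp
      ring
    rw [Finset.sum_congr rfl fun i _ => h1 i, ← Finset.mul_sum]
    refine mul_ne_zero (pow_ne_zero _ hc0) ?_
    simp only [map_sum, map_mul, eval_C, eval_X] at hcol
    exact hcol

/-- The lower bound for multiples of `G`, given finitely many degrees of new points whose natural
combinations cancel every multiple of `G` modulo `d`. Generic coordinates reduce it to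
`good_position`. -/
theorem count_of_finset {n d : ℕ} (hd : 1 ≤ d) (f : MvPolynomial (Fin (n + 3)) ℚ)
    (hirr : Irreducible f) (hhom : f.IsHomogeneous d) (I : Finset ℕ) (hI : ∀ i ∈ I, i ∈ DSet f)
    (G : ℕ) (hG : ∀ D, G ∣ D → ∃ c : ℕ → ℕ, d ∣ D + ∑ i ∈ I, c i * i) (ε : ℝ) (hε : 0 < ε) :
    ∃ D0 : ℕ, ∀ D ≥ D0, G ∣ D → ∃ c : ℝ, 0 < c ∧ ∃ X0 : ℝ, ∀ X ≥ X0,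
      ∃ Ks : Finset (IntermediateField ℚ Qbar),
        c * X ^ ((1 : ℝ) / (2 * (d : ℝ) ^ 2) - ε) ≤ Ks.card ∧
        ∀ K ∈ Ks, ∃ hK : FiniteDimensional ℚ K, Module.finrank ℚ K = D ∧
          |(absDiscr K hK : ℝ)| ≤ X ∧ IsNewPoint f K := by
  have hpt : ∀ i ∈ I, Gen (n + 3) fun T => ∃ b : Fin (n + 3) → Qbar, b 1 = 1 ∧ b 2 ≠ 0 ∧
      (∀ j, b j ∈ IntermediateField.adjoin ℚ {b 2}) ∧
      (minpoly ℚ (b 2)).natDegree = i ∧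
      aeval b (lsub (T.map (Int.cast : ℤ → ℚ)) f) = 0 ∧
      aeval b (pderiv 0 (lsub (T.map (Int.cast : ℤ → ℚ)) f)) ≠ 0 := by
    intro i hi
    obtain ⟨-, K, hK, hKi, hnew⟩ := hI i hi
    obtain ⟨a, l, hal, haK, hfa, hfd⟩ := exists_normalised f hhom K hnew
    refine (gen_point f hhom a l hal hfa hfd).mono ?_
    rintro T ⟨b, h1, h2, h3, h4, h5, h6⟩
    refine ⟨b, h1, h2, h3, ?_, h5, h6⟩
    rw [← IntermediateField.adjoin.finrank (Algebra.IsIntegral.isIntegral (b 2)), h4, haK, hKi]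
  have hf0 : map (algebraMap ℚ Qbar) f ≠ 0 := by
    rw [Ne, map_eq_zero_iff _ (map_injective _ (algebraMap ℚ Qbar).injective)]
    exact hirr.ne_zero
  obtain ⟨T1, ⟨hdet, hcol⟩, hsep, hpts⟩ := ((gen_det.and (gen_col (0 : Fin (n + 3)) _ hf0)).and
    ((gen_sep hd f hirr hhom).and (Gen.all I hpt))).exists
  set T := T1.map (Int.cast : ℤ → ℚ) with hT
  have hdetT : IsUnit T.det := by
    have h2 : T.det = ((T1.det : ℤ) : ℚ) := ((Int.castRingHom ℚ).map_det T1).symm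
    rw [h2, isUnit_iff_ne_zero]
    exact_mod_cast hdet
  have h0 : eval (Fin.cons 1 fun _ => 0 : Fin (n + 3) → ℚ) (lsub T f) ≠ 0 := by
    have h2 := aeval_lsub T f (Fin.cons 1 fun _ => 0 : Fin (n + 3) → ℚ)
    have h3 : (fun i => ∑ j, algebraMap ℚ ℚ (T i j) *
        (Fin.cons 1 fun _ => 0 : Fin (n + 3) → ℚ) j) = fun i => T i 0 := by
      funext i
      rw [Fin.sum_univ_succ]
      simp
    rw [h3] at h2
    intro h
    apply hcol
    have h4 := eval₂_comp (algebraMap ℚ Qbar) (fun i => T i 0) f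
    have h5 : eval (fun i => T i 0) f = 0 := by
      rw [← h, ← coe_aeval_eq_eval, ← coe_aeval_eq_eval, RingHom.coe_coe, RingHom.coe_coe, h2]
    rw [h5, map_zero] at h4
    rw [eval_map, h4]
    congr 1
  choose! a ha using hpts
  obtain ⟨D0, hD0⟩ := good_position hd (lsub T f)
    (lsub_irreducible T⁻¹ T (Matrix.nonsing_inv_mul T hdetT) (Matrix.mul_nonsing_inv T hdetT) f hirr)
    (lsub_isHomogeneous T f hhom) h0 hsep I a (fun i hi => (ha i hi).1) (fun i hi => (ha i hi).2.1)
    (fun i hi => (ha i hi).2.2.1) (fun i hi => (ha i hi).2.2.2.1)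
    (fun i hi => (ha i hi).2.2.2.2.1) (fun i hi => (ha i hi).2.2.2.2.2) G hG ε hε
  refine ⟨D0, fun D hD hGD => ?_⟩
  obtain ⟨c, hc, X0, hX0⟩ := hD0 D hD hGD
  refine ⟨c, hc, X0, fun X hX => ?_⟩
  obtain ⟨Ks, hcard, hKs⟩ := hX0 X hX
  refine ⟨Ks, hcard, fun K hK => ?_⟩
  obtain ⟨hfin, h1, h2, h3⟩ := hKs K hK
  exact ⟨hfin, h1, h2, isNewPoint_of_lsub f T⁻¹ T (Matrix.nonsing_inv_mul T hdetT) K h3⟩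

/-! ### The greatest common divisor and finiteness -/

/-- The index is an integral combination of finitely many degrees, so modulo `d` each of its
multiples can be cancelled by a combination with natural coefficients. -/
theorem exists_finset_of_gcd {d : ℕ} (hd : 1 ≤ d) (S : Set ℕ) (G : ℕ) (hG : IsGcdOf G S) :
    ∃ I : Finset ℕ, (∀ i ∈ I, i ∈ S) ∧
      ∀ D, G ∣ D → ∃ c : ℕ → ℕ, d ∣ D + ∑ i ∈ I, c i * i := by
  have hmem : (G : ℤ) ∈ Submodule.span ℤ ((Nat.cast : ℕ → ℤ) '' S) := by
    obtain ⟨g, hg⟩ := (IsPrincipalIdealRing.principal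
      (Submodule.span ℤ ((Nat.cast : ℕ → ℤ) '' S) : Ideal ℤ)).principal
    have h1 : g.natAbs ∣ G := by
      refine hG.2 _ fun n hn => ?_
      have : (n : ℤ) ∈ Submodule.span ℤ ((Nat.cast : ℕ → ℤ) '' S) :=
        Submodule.subset_span ⟨n, hn, rfl⟩
      rw [hg] at this
      rw [← Int.natCast_dvd_natCast, Int.natAbs_dvd]
      exact Ideal.mem_span_singleton.mp this
    rw [hg]
    refine Ideal.mem_span_singleton.mpr ?_
    rwa [← Int.natCast_dvd_natCast, Int.natAbs_dvd] at h1
  obtain ⟨z, hz, hzG⟩ := (Finsupp.mem_span_image_iff_linearCombination ℤ).mp hmem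
  refine ⟨z.support, fun i hi => hz hi, ?_⟩
  rintro D ⟨q, rfl⟩
  refine ⟨fun i => ((-(q : ℤ) * z i) % d).toNat, ?_⟩
  rw [← Int.natCast_dvd_natCast]
  have hG' : (G : ℤ) = ∑ i ∈ z.support, z i * (i : ℤ) := by
    rw [← hzG, Finsupp.linearCombination_apply, Finsupp.sum]
    rfl
  have hd' : (d : ℤ) ≠ 0 := by positivity
  push_cast
  rw [hG', Finset.sum_mul, ← Finset.sum_add_distrib]
  refine Finset.dvd_sum fun i _ => ?_
  rw [Int.toNat_of_nonneg (Int.emod_nonneg _ hd')]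
  have h2 := Int.emod_add_mul_ediv (-(q : ℤ) * z i) d
  refine ⟨-((-(q : ℤ) * z i) / d) * i, ?_⟩
  linear_combination (i : ℤ) * h2

/-- Finiteness of the set of fields counted (Hermite). -/
theorem finite_fields {m : ℕ} (f : MvPolynomial (Fin m) ℚ) (D : ℕ) (X : ℝ) :
    {K : IntermediateField ℚ Qbar | ∃ h : FiniteDimensional ℚ ↥K,
      Module.finrank ℚ ↥K = D ∧ |((absDiscr K h : ℤ) : ℝ)| ≤ X ∧ IsNewPoint f K}.Finite := by
  refine ((NumberField.finite_of_discr_bdd Qbar ⌊X⌋₊).image Subtype.val).subset ?_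
  rintro K ⟨h, -, hX, -⟩
  refine ⟨⟨K, h⟩, ?_, rfl⟩
  have h1 : |absDiscr K h| ≤ ⌊X⌋ := Int.le_floor.mpr (by exact_mod_cast hX)
  have h2 : |absDiscr K h| ≤ (⌊X⌋₊ : ℤ) :=
    h1.trans (by rw [← Int.floor_toNat]; exact Int.self_le_toNat _)
  exact h2

/-- **Theorem 2 (Theorem `thm: the count`).** If `D` is a sufficiently large multiple of `G(C)`
then there are at least `c·X^{1/(2d²)−ε}` number fields of degree `D` and discriminant at most
`X` admitting a new non-singular point of `C`. -/
theorem stmt1 {m d : ℕ} (hm : 3 ≤ m) (hd : 1 ≤ d)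
    (f : MvPolynomial (Fin m) ℤ) (hhom : f.IsHomogeneous d)
    (fQ : MvPolynomial (Fin m) ℚ) (hfQ : fQ = MvPolynomial.map (Int.castRingHom ℚ) f)
    (hirr : Irreducible fQ)
    (G : ℕ) (hG : IsGcdOf G (DSet fQ))
    (ε : ℝ) (hε : 0 < ε) :
    ∃ D0 : ℕ, ∀ D : ℕ, D0 ≤ D → G ∣ D →
      ∃ c : ℝ, 0 < c ∧ ∃ X0 : ℝ, ∀ X : ℝ, X0 ≤ X →
        c * X ^ ((1 : ℝ) / (2 * (d : ℝ) ^ 2) - ε) ≤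
          (({K : IntermediateField ℚ Qbar | ∃ h : FiniteDimensional ℚ ↥K,
              Module.finrank ℚ ↥K = D ∧ |((absDiscr K h : ℤ) : ℝ)| ≤ X ∧
              IsNewPoint fQ K}).ncard : ℝ) := by
  obtain ⟨n, rfl⟩ : ∃ n, m = n + 3 := ⟨m - 3, by omega⟩
  have hhomQ : fQ.IsHomogeneous d := by
    rw [hfQ]
    exact hhom.map _
  obtain ⟨I, hI, hGI⟩ := exists_finset_of_gcd hd _ G hG
  obtain ⟨D0, hD0⟩ := count_of_finset hd fQ hirr hhomQ I hI G hGI ε hε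
  refine ⟨D0, fun D hD hGD => ?_⟩
  obtain ⟨c, hc, X0, hX0⟩ := hD0 D hD hGD
  refine ⟨c, hc, X0, fun X hX => ?_⟩
  obtain ⟨Ks, hcard, hKs⟩ := hX0 X hX
  refine hcard.trans ?_
  rw [← Set.ncard_coe_finset]
  exact_mod_cast Set.ncard_le_ncard (fun K hK => hKs K hK) (finite_fields fQ D X)
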